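/- arXiv:1208.6375 — 4 statements merged into one kernel-verified Lean document; each statement's English description precedes it below -/
import Mathlib

section
/- Let v* ∈ Δ be a linearly stable equilibrium of F. Then the probability that the sequence of empirical occupation measures (v_n) converges to v* is positive. -/
/-!
The occupation vector `V_n` (with one extra visit to every state) satisfies the stochastic
approximation recursion `V_{n+1} = V_n + γ_n (e_{X_{n+1}} - V_n)`, whose mean field is `F`: for a
frozen occupation vector `v` the walk is a reversible Markov chain with kernel `kern A α v` and
stationary law `π(v)`. The proof shows that the recursion, once started close enough to the stable
equilibrium at a late enough time, stays there and converges with positive probability.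

* Linear stability. Together with the transversal eigenvalue `-1` (`stable_full`) it gives a norm
  for which a small Euler step of `F` is a strict contraction near the equilibrium
  (`exists_adapted_seminorm`, `exists_attracting`). The perturbed scheme therefore stays in a ball
  as long as the accumulated noise is small (`Attracting.stays`), and converges if moreover the
  accumulated noise converges (`Attracting.tendsto_zero`).
* Noise. The noise `γ_n (e_{X_{n+1}} - π(V_n))` is not a martingale increment, but the Poisson
  equation, solved by the fundamental matrix `fund`, writes it as a martingale increment plus a
  telescoping term plus an error of order `γ_n²` (`noise_decomp`). The fundamental matrix is smooth
  near the equilibrium because only constants are harmonic (`det_ne_zero`).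
* Martingale. The increments are stopped on leaving the ball and restricted to an initial cylinder
  event `G`. Orthogonality and the maximal inequality bound the probability of a large excursion by
  a multiple of `√γ_m` times the probability of `G` (`martingale_control`, `incr_control`), so half
  of `G` survives when the starting time `m` is large, whatever the size of the probability of `G`.
* Start. A path with admissible transitions whose occupation frequencies tend to the equilibrium is
  built by always choosing a next state that does not increase the inner product of the
  compensated sums with their increment (`exists_path`). Following it up to time `m` has positive
  probability (`cylinder_pos`) and brings `V_m` close to the equilibrium.
-/

open MeasureTheory Filter Set Matrix

noncomputable def Hfun {N : ℕ} (A : Matrix (Fin N) (Fin N) ℝ) (α : ℝ)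
    (v : Fin N → ℝ) : ℝ :=
  ∑ i, ∑ j, A i j * v i ^ α * v j ^ α

noncomputable def piFun {N : ℕ} (A : Matrix (Fin N) (Fin N) ℝ) (α : ℝ)
    (v : Fin N → ℝ) : Fin N → ℝ :=
  fun i => v i ^ α * (∑ j, A i j * v j ^ α) / Hfun A α v

noncomputable def Ffield {N : ℕ} (A : Matrix (Fin N) (Fin N) ℝ) (α : ℝ)
    (v : Fin N → ℝ) : Fin N → ℝ :=
  fun i => piFun A α v i - v i

def simplexD {N : ℕ} (A : Matrix (Fin N) (Fin N) ℝ) : Set (Fin N → ℝ) :=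
  {v | (∀ i, 0 ≤ v i) ∧ (∑ i, v i = 1) ∧ ∀ i, A i i = 0 → v i ≤ 3 / 4}

/-- The Jacobian matrix of `F` at `v` (matrix of partial derivatives `∂_j F_i (v)`). -/
noncomputable def DFmat {N : ℕ} (A : Matrix (Fin N) (Fin N) ℝ) (α : ℝ)
    (v : Fin N → ℝ) : Matrix (Fin N) (Fin N) ℝ :=
  fun i j => lineDeriv ℝ (fun u => Ffield A α u i) v (Pi.single j 1)

/-- `v` is linearly stable: every eigenvalue of `DF(v)`, viewed (after complexification)
as a linear map of `T_0Δ = {x : ∑ x_i = 0}`, has negative real part. -/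
def IsLinStable {N : ℕ} (A : Matrix (Fin N) (Fin N) ℝ) (α : ℝ)
    (v : Fin N → ℝ) : Prop :=
  ∀ (lam : ℂ) (x : Fin N → ℂ), x ≠ 0 → (∑ i, x i) = 0 →
    ((DFmat A α v).map (fun r => (r : ℂ))) *ᵥ x = lam • x → lam.re < 0

/-- `v` is linearly unstable: some eigenvalue of `DF(v)`, viewed (after complexification)
as a linear map of `T_0Δ = {x : ∑ x_i = 0}`, has positive real part. -/
def IsLinUnstable {N : ℕ} (A : Matrix (Fin N) (Fin N) ℝ) (α : ℝ)
    (v : Fin N → ℝ) : Prop :=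
  ∃ (lam : ℂ) (x : Fin N → ℂ), x ≠ 0 ∧ (∑ i, x i) = 0 ∧
    ((DFmat A α v).map (fun r => (r : ℂ))) *ᵥ x = lam • x ∧ 0 < lam.re

namespace VRRW

/-! ### Adapted norm for a stable matrix -/

section Linear

attribute [local instance] Matrix.linftyOpNormedRing Matrix.linftyOpNormedAlgebra

theorem exists_step_of_spectrum {N : ℕ} (D : Matrix (Fin N) (Fin N) ℂ)
    (hD : ∀ lam ∈ spectrum ℂ D, lam.re < 0) :
    ∃ ε : ℝ, 0 < ε ∧ ∀ lam ∈ spectrum ℂ D, ‖1 + (ε : ℂ) * lam‖ < 1 := by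
  have hfin : (spectrum ℂ D).Finite := Matrix.finite_spectrum D
  have h : ∀ᶠ ε : ℝ in nhdsWithin 0 (Ioi 0), ∀ lam ∈ spectrum ℂ D, ‖1 + (ε : ℂ) * lam‖ < 1 := by
    rw [Filter.eventually_all_finite hfin]
    intro lam hlam
    have hre := hD lam hlam
    have h1 : ∀ᶠ ε : ℝ in nhds 0, 2 * lam.re + ε * (lam.re ^ 2 + lam.im ^ 2) < 0 := by
      have hc : Continuous fun ε : ℝ => 2 * lam.re + ε * (lam.re ^ 2 + lam.im ^ 2) := by fun_prop
      exact hc.continuousAt.eventually_lt_const (by simp; linarith)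
    filter_upwards [nhdsWithin_le_nhds h1, self_mem_nhdsWithin] with ε h2 h3
    have h3 : 0 < ε := h3
    rw [← sq_lt_one_iff₀ (norm_nonneg _), ← Complex.normSq_eq_norm_sq, Complex.normSq_apply]
    simp
    nlinarith [mul_neg_of_pos_of_neg h3 h2]
  obtain ⟨ε, h1, h2⟩ := (h.and self_mem_nhdsWithin).exists
  exact ⟨ε, h2, h1⟩

/-- Gelfand's formula: spectral radius less than one gives a power of small norm. -/
theorem exists_pow_norm_le {N : ℕ} (B : Matrix (Fin N) (Fin N) ℂ) [NeZero N]
    (hB : ∀ lam ∈ spectrum ℂ B, ‖lam‖ < 1) :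
    ∃ r : ℝ, 0 < r ∧ r < 1 ∧ ∃ M : ℕ, ‖B ^ M‖ ≤ r ^ M ∧ M ≠ 0 := by
  obtain ⟨k, hk, hk'⟩ := spectrum.exists_nnnorm_eq_spectralRadius B
  have hlt : spectralRadius ℂ B < 1 := by
    rw [← hk']
    exact_mod_cast hB k hk
  obtain ⟨r, hr1, hr2⟩ := ENNReal.lt_iff_exists_nnreal_btwn.1 hlt
  have := (spectrum.pow_nnnorm_pow_one_div_tendsto_nhds_spectralRadius B).eventually_lt_const hr1
  obtain ⟨M, hM, hM0⟩ := (this.and (eventually_ge_atTop 1)).exists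
  have hr0 : 0 < r := by
    have := (zero_le).trans_lt hr1
    exact_mod_cast this
  refine ⟨r, by exact_mod_cast hr0, by exact_mod_cast hr2, M, ?_, by omega⟩
  have hMpos : (0:ℝ) < M := by exact_mod_cast hM0
  have h2 : (‖B ^ M‖₊ : ENNReal) ≤ (r : ENNReal) ^ (M : ℝ) := by
    rw [← ENNReal.rpow_inv_le_iff hMpos]
    simpa using hM.le
  rw [ENNReal.rpow_natCast] at h2
  exact_mod_cast h2

theorem norm_map_ofReal {N : ℕ} (B : Matrix (Fin N) (Fin N) ℝ) :
    ‖B.map (fun r : ℝ => (r : ℂ))‖ = ‖B‖ := by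
  simp [Matrix.linfty_opNorm_def]

/-- An adapted norm for a real matrix all of whose eigenvalues have negative real part: a small
Euler step `x ↦ x + ε D x` is a strict contraction for it. -/
theorem exists_adapted_seminorm {N : ℕ} [NeZero N] (D : Matrix (Fin N) (Fin N) ℝ)
    (hD : ∀ (lam : ℂ) (x : Fin N → ℂ), x ≠ 0 →
      (D.map (fun r : ℝ => (r : ℂ))) *ᵥ x = lam • x → lam.re < 0) :
    ∃ ε r C : ℝ, 0 < ε ∧ 0 < r ∧ r < 1 ∧ 0 < C ∧ ∃ p : Seminorm ℝ (Fin N → ℝ),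
      (∀ x, ‖x‖ ≤ p x) ∧ (∀ x, p x ≤ C * ‖x‖) ∧ ∀ x, p (x + ε • (D *ᵥ x)) ≤ r * p x := by
  have hspec : ∀ lam ∈ spectrum ℂ (D.map (fun r : ℝ => (r : ℂ))), lam.re < 0 := by
    intro lam hlam
    rw [← Matrix.spectrum_toLin', ← Module.End.hasEigenvalue_iff_mem_spectrum] at hlam
    obtain ⟨x, hx⟩ := hlam.exists_hasEigenvector
    refine hD lam x hx.2 ?_
    simpa using hx.apply_eq_smul
  obtain ⟨ε, hε, hε'⟩ := exists_step_of_spectrum _ hspec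
  set B : Matrix (Fin N) (Fin N) ℝ := 1 + ε • D with hBdef
  have hBmap : B.map (fun r : ℝ => (r : ℂ)) =
      algebraMap ℂ _ 1 + (ε : ℂ) • D.map (fun r : ℝ => (r : ℂ)) := by
    ext i j
    by_cases h : i = j <;> simp [hBdef, h]
  have hBspec : ∀ lam ∈ spectrum ℂ (B.map (fun r : ℝ => (r : ℂ))), ‖lam‖ < 1 := by
    intro lam hlam
    rw [hBmap, ← spectrum.singleton_add_eq,
      spectrum.smul_eq_smul _ _ (spectrum.nonempty _)] at hlam
    obtain ⟨a, ha, b, ⟨c, hc, rfl⟩, rfl⟩ := hlam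
    rw [ha]
    exact hε' c hc
  obtain ⟨r, hr0, hr1, M, hM, hM0⟩ := exists_pow_norm_le _ hBspec
  have hM' : ‖B ^ M‖ ≤ r ^ M := by
    rw [← norm_map_ofReal]
    have : (B ^ M).map (fun r : ℝ => (r : ℂ)) = (B.map (fun r : ℝ => (r : ℂ))) ^ M :=
      map_pow (Complex.ofRealHom.mapMatrix) B M
    rwa [this]
  -- The factor `(r ^ m)⁻¹` makes one application of `B` shift the sum by one index and cost `r`.
  let p : Seminorm ℝ (Fin N → ℝ) := Seminorm.of
    (fun x => ∑ m ∈ Finset.range M, (r ^ m)⁻¹ * ‖(B ^ m) *ᵥ x‖)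
    (fun x y => by
      rw [← Finset.sum_add_distrib]
      refine Finset.sum_le_sum fun m _ => ?_
      rw [← mul_add, Matrix.mulVec_add]
      have := norm_add_le ((B ^ m) *ᵥ x) ((B ^ m) *ᵥ y)
      gcongr)
    (fun a x => by
      rw [Finset.mul_sum]
      refine Finset.sum_congr rfl fun m _ => ?_
      rw [Matrix.mulVec_smul, norm_smul]
      ring)
  have hpx : ∀ x, p x = ∑ m ∈ Finset.range M, (r ^ m)⁻¹ * ‖(B ^ m) *ᵥ x‖ := fun x => rfl
  refine ⟨ε, r, 1 + ∑ m ∈ Finset.range M, (r ^ m)⁻¹ * ‖B ^ m‖, hε, hr0, hr1, by positivity, p,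
    ?_, ?_, ?_⟩
  · intro x
    rw [hpx]
    have h0 : ‖x‖ = (r ^ 0)⁻¹ * ‖(B ^ 0) *ᵥ x‖ := by simp
    rw [h0]
    exact Finset.single_le_sum (f := fun m => (r ^ m)⁻¹ * ‖(B ^ m) *ᵥ x‖)
      (fun m _ => by positivity) (by simp; omega)
  · intro x
    rw [hpx, add_mul, Finset.sum_mul]
    have : ∑ m ∈ Finset.range M, (r ^ m)⁻¹ * ‖(B ^ m) *ᵥ x‖ ≤
        ∑ m ∈ Finset.range M, (r ^ m)⁻¹ * ‖B ^ m‖ * ‖x‖ := by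
      refine Finset.sum_le_sum fun m _ => ?_
      rw [mul_assoc]
      have := Matrix.linfty_opNorm_mulVec (B ^ m) x
      gcongr
    have := norm_nonneg x
    linarith
  · intro x
    have hx : x + ε • (D *ᵥ x) = B *ᵥ x := by
      simp [hBdef, Matrix.add_mulVec, Matrix.smul_mulVec]
    rw [hx, hpx, hpx]
    have hstep : ∀ m, (r ^ m)⁻¹ * ‖(B ^ m) *ᵥ (B *ᵥ x)‖ =
        r * ((r ^ (m + 1))⁻¹ * ‖(B ^ (m + 1)) *ᵥ x‖) := by
      intro m
      rw [Matrix.mulVec_mulVec, ← pow_succ, pow_succ r]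
      field_simp
    simp_rw [hstep]
    rw [← Finset.mul_sum]
    refine mul_le_mul_of_nonneg_left ?_ hr0.le
    have h1 := Finset.sum_range_succ (fun m => (r ^ m)⁻¹ * ‖(B ^ m) *ᵥ x‖) M
    have h2 := Finset.sum_range_succ' (fun m => (r ^ m)⁻¹ * ‖(B ^ m) *ᵥ x‖) M
    have h3 : (r ^ M)⁻¹ * ‖(B ^ M) *ᵥ x‖ ≤ ‖x‖ := by
      rw [inv_mul_le_iff₀ (by positivity)]
      exact (Matrix.linfty_opNorm_mulVec _ _).trans (by gcongr)
    simp only [pow_zero, inv_one, one_mul, Matrix.one_mulVec] at h2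
    linarith

end Linear

/-! ### Transition kernel, fundamental matrix and Poisson equation -/

variable {N : ℕ} {A : Matrix (Fin N) (Fin N) ℝ} {α : ℝ}

/-- The normalisation `(A v^α)_i` of the `i`-th row of the transition kernel. -/
noncomputable def den (A : Matrix (Fin N) (Fin N) ℝ) (α : ℝ) (v : Fin N → ℝ) (i : Fin N) : ℝ :=
  ∑ k, A i k * v k ^ α

/-- The transition matrix `K(v)_{i,j} = A_{i,j} v_j^α / (A v^α)_i` of the walk with frozen
occupation vector `v`. -/
noncomputable def kern (A : Matrix (Fin N) (Fin N) ℝ) (α : ℝ) (v : Fin N → ℝ) :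
    Matrix (Fin N) (Fin N) ℝ :=
  Matrix.of fun i j => A i j * v j ^ α / den A α v i

/-- The matrix all of whose rows equal `π(v)`. -/
noncomputable def piMat (A : Matrix (Fin N) (Fin N) ℝ) (α : ℝ) (v : Fin N → ℝ) :
    Matrix (Fin N) (Fin N) ℝ :=
  Matrix.of fun _ j => piFun A α v j

/-- The fundamental matrix `(I - K(v) + Π(v))⁻¹`, which solves the Poisson equation of `K(v)`. -/
noncomputable def fund (A : Matrix (Fin N) (Fin N) ℝ) (α : ℝ) (v : Fin N → ℝ) :
    Matrix (Fin N) (Fin N) ℝ :=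
  (1 - kern A α v + piMat A α v)⁻¹

theorem Hfun_eq (v : Fin N → ℝ) : Hfun A α v = ∑ i, v i ^ α * den A α v i := by
  simp only [Hfun, den, Finset.mul_sum]
  refine Finset.sum_congr rfl fun i _ => Finset.sum_congr rfl fun j _ => by ring

theorem piFun_eq (v : Fin N → ℝ) (i : Fin N) :
    piFun A α v i = v i ^ α * den A α v i / Hfun A α v := rfl

theorem sum_piFun {v : Fin N → ℝ} (hH : Hfun A α v ≠ 0) : ∑ i, piFun A α v i = 1 := by
  simp only [piFun_eq]
  rw [← Finset.sum_div, ← Hfun_eq, div_self hH]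

theorem sum_kern {v : Fin N → ℝ} {i : Fin N} (h : den A α v i ≠ 0) :
    ∑ j, kern A α v i j = 1 := by
  simp only [kern, Matrix.of_apply]
  rw [← Finset.sum_div, ← den, div_self h]

/-- Stationarity of `π(v)` for `K(v)`, which is where the symmetry of `A` enters. -/
theorem piMat_mul_kern (hsymm : ∀ i j, A i j = A j i) {v : Fin N → ℝ}
    (h : ∀ i, den A α v i ≠ 0) : piMat A α v * kern A α v = piMat A α v := by
  ext x j
  simp only [Matrix.mul_apply, piMat, kern, Matrix.of_apply, piFun_eq]
  have : ∀ i, v i ^ α * den A α v i / Hfun A α v * (A i j * v j ^ α / den A α v i) =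
      v j ^ α / Hfun A α v * (A j i * v i ^ α) := by
    intro i
    rw [hsymm i j]
    have := h i
    field_simp
  simp_rw [this]
  rw [← Finset.mul_sum, ← den]
  ring

theorem piMat_mul_piMat {v : Fin N → ℝ} (hH : Hfun A α v ≠ 0) :
    piMat A α v * piMat A α v = piMat A α v := by
  ext x j
  simp only [Matrix.mul_apply, piMat, Matrix.of_apply]
  rw [← Finset.sum_mul, sum_piFun hH, one_mul]

/-- The Poisson equation `(I - K) (I - K + Π)⁻¹ = I - Π`. -/
theorem fund_poisson (hsymm : ∀ i j, A i j = A j i) {v : Fin N → ℝ}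
    (h : ∀ i, den A α v i ≠ 0) (hH : Hfun A α v ≠ 0)
    (hdet : (1 - kern A α v + piMat A α v).det ≠ 0) :
    fund A α v - kern A α v * fund A α v = 1 - piMat A α v := by
  set M := 1 - kern A α v + piMat A α v with hM
  have h1 : (1 - piMat A α v) * M = 1 - kern A α v := by
    rw [hM, Matrix.sub_mul, Matrix.one_mul, Matrix.mul_add, Matrix.mul_sub, Matrix.mul_one,
      piMat_mul_kern hsymm h, piMat_mul_piMat hH]
    abel
  have h2 : M * fund A α v = 1 := Matrix.mul_nonsing_inv M (isUnit_iff_ne_zero.2 hdet)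
  calc fund A α v - kern A α v * fund A α v = (1 - kern A α v) * fund A α v := by
        rw [Matrix.sub_mul, Matrix.one_mul]
    _ = 1 - piMat A α v := by rw [← h1, Matrix.mul_assoc, h2, Matrix.mul_one]

/-- Only constants are harmonic for `K(v)`, by the maximum principle: from any state every state
of the support of `v` other than itself is reached in one step. This makes `I - K + Π`
invertible. -/
theorem det_ne_zero (hsymm : ∀ i j, A i j = A j i) (hnonneg : ∀ i j, 0 ≤ A i j)
    (hoffdiag : ∀ i j, i ≠ j → 0 < A i j) {v : Fin N → ℝ}
    (hv : ∀ i, 0 ≤ v i) (s : Fin N) (hs : 0 < v s)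
    (h : ∀ i, 0 < den A α v i) (hH : Hfun A α v ≠ 0) :
    (1 - kern A α v + piMat A α v).det ≠ 0 := by
  intro h0
  obtain ⟨x, hx0, hx⟩ := Matrix.exists_mulVec_eq_zero_iff.2 h0
  have hden : ∀ i, den A α v i ≠ 0 := fun i => (h i).ne'
  have hpi : piMat A α v *ᵥ x = 0 := by
    have := congrArg (fun y => piMat A α v *ᵥ y) hx
    simp only [Matrix.mulVec_mulVec, Matrix.mul_add, Matrix.mul_sub, Matrix.mul_one,
      piMat_mul_kern hsymm hden, piMat_mul_piMat hH, Matrix.mulVec_zero] at this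
    simpa using this
  have hk : ∀ i, ∑ j, kern A α v i j * x j = x i := by
    intro i
    rw [Matrix.add_mulVec, hpi, Matrix.sub_mulVec, Matrix.one_mulVec] at hx
    have := congrFun hx i
    simp only [Pi.add_apply, Pi.sub_apply, Pi.zero_apply, Matrix.mulVec, dotProduct] at this
    linarith
  have knn : ∀ i j, 0 ≤ kern A α v i j := fun i j => by
    simp only [kern, Matrix.of_apply]
    have := hnonneg i j
    have := h i
    have := Real.rpow_nonneg (hv j) α
    positivity
  have kpos : ∀ i, i ≠ s → 0 < kern A α v i s := fun i his => by
    simp only [kern, Matrix.of_apply]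
    have := hoffdiag i s his
    have := h i
    have := Real.rpow_pos_of_pos hs α
    positivity
  have hdiff : ∀ i, ∑ j, kern A α v i j * (x i - x j) = 0 := by
    intro i
    simp only [mul_sub, Finset.sum_sub_distrib]
    rw [hk, ← Finset.sum_mul, sum_kern (hden i)]
    ring
  have : Nonempty (Fin N) := ⟨s⟩
  obtain ⟨i, hi⟩ := Finite.exists_max x
  obtain ⟨j, hj⟩ := Finite.exists_min x
  have e1 : x i = x s := by
    by_cases his : i = s
    · rw [his]
    have := (Finset.sum_eq_zero_iff_of_nonneg (fun k _ =>
      mul_nonneg (knn i k) (sub_nonneg.2 (hi k)))).1 (hdiff i) s (Finset.mem_univ _)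
    rcases mul_eq_zero.1 this with h1 | h1
    · exact absurd h1 (kpos i his).ne'
    · linarith
  have e2 : x j = x s := by
    by_cases hjs : j = s
    · rw [hjs]
    have hz : ∑ k, kern A α v j k * (x k - x j) = 0 := by
      rw [← neg_eq_zero, ← Finset.sum_neg_distrib, ← hdiff j]
      exact Finset.sum_congr rfl fun k _ => by ring
    have := (Finset.sum_eq_zero_iff_of_nonneg (fun k _ =>
      mul_nonneg (knn j k) (sub_nonneg.2 (hj k)))).1 hz s (Finset.mem_univ _)
    rcases mul_eq_zero.1 this with h1 | h1
    · exact absurd h1 (kpos j hjs).ne'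
    · linarith
  have hconst : ∀ k, x k = x s := fun k => le_antisymm (e1 ▸ hi k) (e2 ▸ hj k)
  have h3 := congrFun hpi s
  simp only [piMat, Matrix.mulVec, dotProduct, Matrix.of_apply, Pi.zero_apply, hconst] at h3
  rw [← Finset.sum_mul, sum_piFun hH, one_mul] at h3
  exact hx0 (funext fun k => by simp [hconst k, h3])

section Smooth

theorem contDiffAt_rpow_coord (hα : 1 < α) (w : Fin N → ℝ) (k : Fin N) :
    ContDiffAt ℝ 1 (fun v : Fin N → ℝ => v k ^ α) w := by
  have h1 : ContDiffAt ℝ (1 : ℕ) (fun x : ℝ => x ^ α) (w k) :=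
    Real.contDiffAt_rpow_const_of_le (by exact_mod_cast hα.le)
  have h2 : ContDiffAt ℝ 1 (fun v : Fin N → ℝ => v k) w := by fun_prop
  exact ContDiffAt.comp w (by exact_mod_cast h1) h2

theorem contDiffAt_den (hα : 1 < α) (w : Fin N → ℝ) (i : Fin N) :
    ContDiffAt ℝ 1 (fun v => den A α v i) w :=
  ContDiffAt.sum fun k _ => contDiffAt_const.mul (contDiffAt_rpow_coord hα w k)

theorem contDiffAt_Hfun (hα : 1 < α) (w : Fin N → ℝ) : ContDiffAt ℝ 1 (fun v => Hfun A α v) w := by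
  simp only [Hfun_eq]
  exact ContDiffAt.sum fun k _ => (contDiffAt_rpow_coord hα w k).mul (contDiffAt_den hα w k)

theorem contDiffAt_piFun (hα : 1 < α) {w : Fin N → ℝ} (hH : Hfun A α w ≠ 0) (i : Fin N) :
    ContDiffAt ℝ 1 (fun v => piFun A α v i) w :=
  ((contDiffAt_rpow_coord hα w i).mul (contDiffAt_den hα w i)).div (contDiffAt_Hfun hα w) hH

theorem contDiffAt_kern (hα : 1 < α) {w : Fin N → ℝ} {i : Fin N} (h : den A α w i ≠ 0) (j : Fin N) :
    ContDiffAt ℝ 1 (fun v => kern A α v i j) w :=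
  (contDiffAt_const.mul (contDiffAt_rpow_coord hα w j)).div (contDiffAt_den hα w i) h

theorem contDiffAt_det {M : (Fin N → ℝ) → Matrix (Fin N) (Fin N) ℝ} {w : Fin N → ℝ}
    (hM : ∀ i j, ContDiffAt ℝ 1 (fun v => M v i j) w) :
    ContDiffAt ℝ 1 (fun v => (M v).det) w := by
  simp only [Matrix.det_apply]
  refine ContDiffAt.sum fun σ _ => ContDiffAt.const_smul _ ?_
  exact contDiffAt_prod fun i _ => hM _ _

theorem contDiffAt_inv {M : (Fin N → ℝ) → Matrix (Fin N) (Fin N) ℝ} {w : Fin N → ℝ}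
    (hM : ∀ i j, ContDiffAt ℝ 1 (fun v => M v i j) w) (hdet : (M w).det ≠ 0) (i j : Fin N) :
    ContDiffAt ℝ 1 (fun v => (M v)⁻¹ i j) w := by
  simp only [Matrix.inv_def, Ring.inverse_eq_inv', Matrix.smul_apply, smul_eq_mul,
    Matrix.adjugate_apply]
  refine ((contDiffAt_det hM).inv hdet).mul (contDiffAt_det fun k l => ?_)
  simp only [Matrix.updateRow_apply]
  split_ifs
  · exact contDiffAt_const
  · exact hM k l

theorem contDiffAt_poissonMat (hα : 1 < α) {w : Fin N → ℝ} (h : ∀ i, den A α w i ≠ 0)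
    (hH : Hfun A α w ≠ 0) (i j : Fin N) :
    ContDiffAt ℝ 1 (fun v => (1 - kern A α v + piMat A α v) i j) w := by
  simp only [Matrix.add_apply, Matrix.sub_apply, piMat, Matrix.of_apply]
  exact (contDiffAt_const.sub (contDiffAt_kern hα (h i) j)).add (contDiffAt_piFun hα hH j)

theorem contDiffAt_fund (hα : 1 < α) {w : Fin N → ℝ} (h : ∀ i, den A α w i ≠ 0) (hH : Hfun A α w ≠ 0)
    (hdet : (1 - kern A α w + piMat A α w).det ≠ 0) (i j : Fin N) :
    ContDiffAt ℝ 1 (fun v => fund A α v i j) w :=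
  contDiffAt_inv (contDiffAt_poissonMat hα h hH) hdet i j

/-- The constant may be chosen before the radius, so finitely many such bounds share a radius. -/
theorem exists_local_bound {f : (Fin N → ℝ) → ℝ} {w : Fin N → ℝ} (hf : ContDiffAt ℝ 1 f w) :
    ∃ C : ℝ, 0 < C ∧ ∀ᶠ ρ in nhdsWithin (0 : ℝ) (Ioi 0), ∀ u ∈ Metric.ball w ρ,
      |f u| ≤ C ∧ ∀ v ∈ Metric.ball w ρ, |f u - f v| ≤ C * ‖u - v‖ := by
  obtain ⟨K, t, ht, hK⟩ := hf.exists_lipschitzOnWith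
  have hb : ∀ᶠ u in nhds w, |f u| < |f w| + 1 :=
    hf.continuousAt.abs.eventually_lt_const (by linarith)
  obtain ⟨ρ, hρ, hsub⟩ := Metric.mem_nhds_iff.1 (inter_mem ht hb)
  refine ⟨|f w| + 1 + K, by positivity, ?_⟩
  filter_upwards [Ioo_mem_nhdsGT hρ] with ρ' hρ' u hu
  have hu' := hsub (Metric.ball_subset_ball hρ'.2.le hu)
  refine ⟨?_, fun v hv => ?_⟩
  · have : |f u| < |f w| + 1 := hu'.2
    have := K.2
    change 0 ≤ (K : ℝ) at this
    linarith
  · have hv' := hsub (Metric.ball_subset_ball hρ'.2.le hv)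
    have := hK.dist_le_mul u hu'.1 v hv'.1
    rw [Real.dist_eq, dist_eq_norm] at this
    refine this.trans ?_
    have := abs_nonneg (f w)
    gcongr
    linarith

/-- Near `w`, the Poisson equation is solved by `fund`, and the corrections are bounded and
Lipschitz. -/
theorem exists_poisson (hα : 1 < α) (hsymm : ∀ i j, A i j = A j i) {w : Fin N → ℝ}
    (h : ∀ i, den A α w i ≠ 0) (hH : Hfun A α w ≠ 0)
    (hdet : (1 - kern A α w + piMat A α w).det ≠ 0) :
    ∃ C : ℝ, 0 < C ∧ ∀ᶠ ρ in nhdsWithin (0 : ℝ) (Ioi 0), ∀ u ∈ Metric.ball w ρ,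
      (∀ x i, (if x = i then 1 else 0) - piFun A α u i =
        fund A α u x i - (kern A α u * fund A α u) x i) ∧
      (∀ x i, |fund A α u x i| ≤ C) ∧ (∀ x i, |(kern A α u * fund A α u) x i| ≤ C) ∧
      ∀ v ∈ Metric.ball w ρ, ∀ x i,
        |(kern A α u * fund A α u) x i - (kern A α v * fund A α v) x i| ≤ C * ‖u - v‖ := by
  have hK : ∀ x i, ContDiffAt ℝ 1 (fun v => (kern A α v * fund A α v) x i) w := by
    intro x i
    simp only [Matrix.mul_apply]
    exact ContDiffAt.sum fun k _ =>
      (contDiffAt_kern hα (h x) k).mul (contDiffAt_fund hα h hH hdet k i)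
  choose C1 hC1 h1 using fun x i => exists_local_bound (contDiffAt_fund hα h hH hdet x i)
  choose C2 hC2 h2 using fun x i => exists_local_bound (hK x i)
  have hopen : ∀ᶠ u in nhds w, (∀ i, den A α u i ≠ 0) ∧ Hfun A α u ≠ 0 ∧
      (1 - kern A α u + piMat A α u).det ≠ 0 := by
    refine (eventually_all.2 fun i => ?_).and (Filter.Eventually.and ?_ ?_)
    · exact (contDiffAt_den hα w i).continuousAt.eventually_ne (h i)
    · exact (contDiffAt_Hfun hα w).continuousAt.eventually_ne hH
    · exact (contDiffAt_det (contDiffAt_poissonMat hα h hH)).continuousAt.eventually_ne hdet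
  obtain ⟨ρ0, hρ0, hsub⟩ := Metric.mem_nhds_iff.1 hopen
  have hle1 : ∀ x i, C1 x i ≤ 1 + ∑ x, ∑ i, (C1 x i + C2 x i) := fun x i => by
    have a1 := Finset.single_le_sum (f := fun i => C1 x i + C2 x i)
      (fun i _ => (add_pos (hC1 x i) (hC2 x i)).le) (Finset.mem_univ i)
    have a2 := Finset.single_le_sum (f := fun x => ∑ i, (C1 x i + C2 x i))
      (fun x _ => Finset.sum_nonneg fun i _ => (add_pos (hC1 x i) (hC2 x i)).le) (Finset.mem_univ x)
    have := hC2 x i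
    linarith
  have hle2 : ∀ x i, C2 x i ≤ 1 + ∑ x, ∑ i, (C1 x i + C2 x i) := fun x i => by
    have a1 := Finset.single_le_sum (f := fun i => C1 x i + C2 x i)
      (fun i _ => (add_pos (hC1 x i) (hC2 x i)).le) (Finset.mem_univ i)
    have a2 := Finset.single_le_sum (f := fun x => ∑ i, (C1 x i + C2 x i))
      (fun x _ => Finset.sum_nonneg fun i _ => (add_pos (hC1 x i) (hC2 x i)).le) (Finset.mem_univ x)
    have := hC1 x i
    linarith
  refine ⟨1 + ∑ x, ∑ i, (C1 x i + C2 x i), ?_, ?_⟩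
  · have : 0 ≤ ∑ x, ∑ i, (C1 x i + C2 x i) := Finset.sum_nonneg fun x _ =>
      Finset.sum_nonneg fun i _ => (add_pos (hC1 x i) (hC2 x i)).le
    linarith
  filter_upwards [eventually_all.2 fun x => eventually_all.2 fun i => h1 x i,
    eventually_all.2 fun x => eventually_all.2 fun i => h2 x i, Ioo_mem_nhdsGT hρ0]
    with ρ e1 e2 e3 u hu
  refine ⟨fun x i => ?_, fun x i => ?_, fun x i => ?_, fun v hv x i => ?_⟩
  · obtain ⟨q1, q2, q3⟩ := hsub (Metric.ball_subset_ball e3.2.le hu)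
    have := congrFun (congrFun (fund_poisson hsymm q1 q2 q3) x) i
    simp only [Matrix.sub_apply, Matrix.one_apply, piMat, Matrix.of_apply] at this
    exact this.symm
  · exact ((e1 x i) u hu).1.trans (hle1 x i)
  · exact ((e2 x i) u hu).1.trans (hle2 x i)
  · refine (((e2 x i) u hu).2 v hv).trans ?_
    gcongr
    exact hle2 x i

/-- The field `F` is differentiable at `w`, with derivative the Jacobian matrix `DFmat`. -/
theorem hasFDerivAt_Ffield (hα : 1 < α) {w : Fin N → ℝ} (hH : Hfun A α w ≠ 0) :
    HasFDerivAt (Ffield A α) (DFmat A α w).mulVecLin.toContinuousLinearMap w := by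
  have hd : DifferentiableAt ℝ (Ffield A α) w := by
    rw [differentiableAt_pi]
    intro i
    refine ((contDiffAt_piFun hα hH i).differentiableAt (by norm_num)).sub ?_
    fun_prop
  have hF := hd.hasFDerivAt
  convert hF using 1
  ext1 x
  ext i
  have hi : HasFDerivAt (fun u => Ffield A α u i)
      ((ContinuousLinearMap.proj i).comp (fderiv ℝ (Ffield A α) w)) w :=
    (hasFDerivAt_pi'.1 hF) i
  have hDF : ∀ j, DFmat A α w i j = fderiv ℝ (Ffield A α) w (Pi.single j 1) i := by
    intro j
    simp only [DFmat]
    rw [hi.differentiableAt.lineDeriv_eq_fderiv, hi.fderiv]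
    rfl
  have hx : x = ∑ j, x j • (Pi.single j 1 : Fin N → ℝ) := by
    ext k
    simp [Finset.sum_apply, Pi.single_apply]
  conv_rhs => rw [hx, map_sum]
  simp [Matrix.mulVec, dotProduct, hDF, mul_comm]

/-- Since `∑ F_i (v) = 1 - ∑ v_i` near `w`, the columns of the Jacobian sum to `-1`. -/
theorem sum_DFmat (hα : 1 < α) {w : Fin N → ℝ} (hH : Hfun A α w ≠ 0) (j : Fin N) :
    ∑ i, DFmat A α w i j = -1 := by
  have h1 := hasFDerivAt_Ffield hα hH
  have h2 : HasFDerivAt (fun u => ∑ i, Ffield A α u i)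
      (∑ i, (ContinuousLinearMap.proj i).comp
        (DFmat A α w).mulVecLin.toContinuousLinearMap) w :=
    HasFDerivAt.fun_sum fun i _ => (hasFDerivAt_pi'.1 h1) i
  have h3 : (fun u => ∑ i, Ffield A α u i) =ᶠ[nhds w] fun u => 1 - ∑ i, u i := by
    filter_upwards [(contDiffAt_Hfun hα w).continuousAt.eventually_ne hH] with u hu
    simp [Ffield, Finset.sum_sub_distrib, sum_piFun hu]
  have h4 : HasFDerivAt (fun u : Fin N → ℝ => 1 - ∑ i, u i)
      (-(∑ i, ContinuousLinearMap.proj (R := ℝ) (φ := fun _ : Fin N => ℝ) i)) w :=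
    (HasFDerivAt.fun_sum fun i _ => hasFDerivAt_apply i w).const_sub 1
  have h5 := (h2.congr_of_eventuallyEq h3.symm).unique h4
  have h6 := congrArg (fun L => L (Pi.single j 1)) h5
  simp [Pi.single_apply] at h6
  exact h6

end Smooth

/-! ### Perturbed Euler schemes near an attracting point -/

/-- Step size of the recursion satisfied by the shifted occupation vector. -/
noncomputable def gam (N k : ℕ) : ℝ := 1 / ((k : ℝ) + 2 + N)

theorem gam_pos (N k : ℕ) : 0 < gam N k := by unfold gam; positivity

theorem gam_tendsto (N : ℕ) : Tendsto (gam N) atTop (nhds 0) := by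
  have h := (tendsto_natCast_atTop_atTop (R := ℝ)).comp (tendsto_add_atTop_nat (2 + N))
  have h2 := h.inv_tendsto_atTop
  refine h2.congr fun k => ?_
  simp [gam, add_assoc]

theorem sum_gam_tendsto (N : ℕ) :
    Tendsto (fun k => ∑ j ∈ Finset.range k, gam N j) atTop atTop := by
  rw [← not_summable_iff_tendsto_nat_atTop_of_nonneg fun k => (gam_pos N k).le]
  intro h
  have h2 : Summable fun k : ℕ => 1 / ((k + (2 + N) : ℕ) : ℝ) := by
    refine h.congr fun k => ?_
    simp [gam, add_assoc]
  exact Real.not_summable_one_div_natCast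
    ((summable_nat_add_iff (f := fun k : ℕ => 1 / (k : ℝ)) (2 + N)).1 h2)

theorem gam_antitone_succ (N k : ℕ) : gam N (k + 1) ≤ gam N k := by
  unfold gam
  push_cast
  gcongr
  linarith

theorem gam_sub_succ (N k : ℕ) : gam N k - gam N (k + 1) ≤ gam N k ^ 2 := by
  have h : gam N k - gam N (k + 1) = gam N k * gam N (k + 1) := by
    unfold gam
    push_cast
    field_simp
    ring
  rw [h, sq]
  exact mul_le_mul_of_nonneg_left (gam_antitone_succ N k) (gam_pos N k).le

theorem sum_gam_sq_le (N m k : ℕ) :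
    ∑ j ∈ Finset.Ico m k, gam N j ^ 2 ≤ 2 * gam N m := by
  rcases le_total k m with h | h
  · rw [Finset.Ico_eq_empty_of_le h, Finset.sum_empty]
    linarith [gam_pos N m]
  have h1 : ∑ j ∈ Finset.Ico m k, gam N j ^ 2 ≤
      1 / ((m : ℝ) + 1 + N) - 1 / ((k : ℝ) + 1 + N) := by
    induction k, h using Nat.le_induction with
    | base => simp
    | succ k hk ih =>
      rw [Finset.sum_Ico_succ_top hk]
      have h2 : gam N k ^ 2 ≤ 1 / ((k : ℝ) + 1 + N) - 1 / (((k + 1 : ℕ) : ℝ) + 1 + N) := by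
        unfold gam
        have e : 1 / ((k : ℝ) + 1 + N) - 1 / (((k + 1 : ℕ) : ℝ) + 1 + N) =
            1 / (((k : ℝ) + 1 + N) * ((k : ℝ) + 2 + N)) := by
          push_cast
          field_simp
          ring
        rw [e, div_pow, one_pow, sq]
        gcongr
        norm_num
      linarith
  have h2 : 1 / ((m : ℝ) + 1 + N) ≤ 2 * gam N m := by
    unfold gam
    rw [← mul_div_assoc, mul_one, div_le_div_iff₀ (by positivity) (by positivity)]
    have : (0 : ℝ) ≤ m := by positivity
    have : (0 : ℝ) ≤ N := by positivity
    linarith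
  have h3 : 0 ≤ 1 / ((k : ℝ) + 1 + N) := by positivity
  linarith

theorem summable_gam_sq (N : ℕ) : Summable fun k => gam N k ^ 2 := by
  refine summable_of_sum_range_le (c := 2 * gam N 0) (fun k => sq_nonneg _) fun k => ?_
  rw [Finset.range_eq_Ico]
  exact sum_gam_sq_le N 0 k

/-- A nonnegative sequence contracted by factors `1 - a_k` with `∑ a_k = ∞`, up to errors
`a_k b_k` with `b_k → 0`, tends to zero. -/
theorem tendsto_zero_of_recursion {u a b : ℕ → ℝ} {m : ℕ} (hu : ∀ k, 0 ≤ u k)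
    (ha0 : ∀ k, 0 ≤ a k) (ha1 : ∀ k ≥ m, a k ≤ 1)
    (hrec : ∀ k ≥ m, u (k + 1) ≤ (1 - a k) * u k + a k * b k)
    (hb : Tendsto b atTop (nhds 0))
    (ha : Tendsto (fun k => ∑ j ∈ Finset.range k, a j) atTop atTop) :
    Tendsto u atTop (nhds 0) := by
  rw [Metric.tendsto_atTop']
  intro θ hθ
  obtain ⟨n0, hn0⟩ := eventually_atTop.1 (hb.eventually_le_const (half_pos hθ))
  set n := max n0 m
  set s : ℕ → ℝ := fun k => ∑ j ∈ Finset.range k, a j with hs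
  set w : ℕ → ℝ := fun k => max (u k - θ / 2) 0 with hw
  have hw0 : ∀ k, 0 ≤ w k := fun k => le_max_right _ _
  have hstep : ∀ k ≥ n, w k ≤ Real.exp (s n - s k) * w n := by
    intro k hk
    induction k, hk using Nat.le_induction with
    | base => simp
    | succ k hk ih =>
      have h1 : w (k + 1) ≤ (1 - a k) * w k := by
        have hm : m ≤ k := (le_max_right n0 m).trans hk
        have e1 := hrec k hm
        have e2 := hn0 k ((le_max_left n0 m).trans hk)
        have e3 := ha1 k hm
        refine max_le ?_ (mul_nonneg (by linarith) (hw0 k))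
        have e4 : u k - θ / 2 ≤ w k := le_max_left _ _
        nlinarith [ha0 k, mul_le_mul_of_nonneg_left e2 (ha0 k),
          mul_le_mul_of_nonneg_left e4 (sub_nonneg.2 e3)]
      have h2 : 1 - a k ≤ Real.exp (-a k) := by
        have := Real.add_one_le_exp (-a k)
        linarith
      calc w (k + 1) ≤ (1 - a k) * w k := h1
        _ ≤ Real.exp (-a k) * w k := mul_le_mul_of_nonneg_right h2 (hw0 k)
        _ ≤ Real.exp (-a k) * (Real.exp (s n - s k) * w n) := by gcongr
        _ = Real.exp (s n - s (k + 1)) * w n := by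
          rw [← mul_assoc, ← Real.exp_add, hs]
          simp only [Finset.sum_range_succ]
          ring_nf
  have hlim : Tendsto (fun k => Real.exp (s n - s k) * w n) atTop (nhds 0) := by
    have h1 : Tendsto (fun k => s n - s k) atTop atBot :=
      tendsto_atBot_add_const_left _ _ (tendsto_neg_atTop_atBot.comp ha)
    simpa using (Real.tendsto_exp_atBot.comp h1).mul_const (w n)
  obtain ⟨n1, hn1⟩ := eventually_atTop.1 (hlim.eventually_lt_const (half_pos hθ))
  refine ⟨max n n1, fun k hk => ?_⟩
  have h1 := hstep k ((le_max_left n n1).trans hk.le)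
  have h2 := hn1 k ((le_max_right n n1).trans hk.le)
  have h3 : u k - θ / 2 ≤ w k := le_max_left _ _
  rw [Real.dist_eq, sub_zero, abs_of_nonneg (hu k)]
  linarith

section Deterministic

variable {N : ℕ}

/-- A displacement field `f` whose Euler map of step `ε` shrinks `p` by the factor `r` on the ball
of radius `ρ`; here `p` is a norm equivalent to the sup norm, with constants `1` and `C`. -/
structure Attracting (p : Seminorm ℝ (Fin N → ℝ)) (C ε r ρ : ℝ)
    (f : (Fin N → ℝ) → Fin N → ℝ) : Prop where
  eps_pos : 0 < ε
  r_pos : 0 < r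
  r_lt : r < 1
  C_pos : 0 < C
  norm_le : ∀ x, ‖x‖ ≤ p x
  le_norm : ∀ x, p x ≤ C * ‖x‖
  contr : ∀ x, ‖x‖ < ρ → p (x + ε • f x) ≤ r * p x

/-- A zero of `G` whose derivative has spectrum in the left half-plane is attracting at all small
scales; the constants do not depend on the radius. -/
theorem exists_attracting [NeZero N] {D : Matrix (Fin N) (Fin N) ℝ}
    (hD : ∀ (lam : ℂ) (x : Fin N → ℂ), x ≠ 0 →
      (D.map (fun r : ℝ => (r : ℂ))) *ᵥ x = lam • x → lam.re < 0)
    {G : (Fin N → ℝ) → Fin N → ℝ} {w : Fin N → ℝ} (h0 : G w = 0)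
    (hG : HasFDerivAt G D.mulVecLin.toContinuousLinearMap w) :
    ∃ p : Seminorm ℝ (Fin N → ℝ), ∃ C ε r : ℝ, ∀ᶠ ρ in nhdsWithin (0 : ℝ) (Ioi 0),
      Attracting p C ε r ρ fun x => G (w + x) := by
  obtain ⟨ε, r, C, hε, hr0, hr1, hC, p, hp1, hp2, hp3⟩ := exists_adapted_seminorm D hD
  refine ⟨p, C, ε, (1 + r) / 2, ?_⟩
  have hc : 0 < (1 - r) / (2 * ε * C) := by
    have : 0 < 1 - r := by linarith
    positivity
  have h1 := (hasFDerivAt_iff_isLittleO_nhds_zero.1 hG).def hc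
  obtain ⟨ρ0, hρ0, hsub⟩ := Metric.mem_nhds_iff.1 h1
  filter_upwards [Ioo_mem_nhdsGT hρ0] with ρ hρ
  refine ⟨hε, by linarith, by linarith, hC, hp1, hp2, fun x hx => ?_⟩
  have h2 : ‖G (w + x) - G w - D *ᵥ x‖ ≤ (1 - r) / (2 * ε * C) * ‖x‖ :=
    hsub (show x ∈ Metric.ball 0 ρ0 by simpa using hx.trans hρ.2)
  rw [h0, sub_zero] at h2
  have h3 : x + ε • G (w + x) = (x + ε • (D *ᵥ x)) + ε • (G (w + x) - D *ᵥ x) := by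
    rw [smul_sub]; abel
  rw [h3]
  have h4 : p (ε • (G (w + x) - D *ᵥ x)) ≤ (1 - r) / 2 * ‖x‖ := by
    rw [map_smul_eq_mul, Real.norm_of_nonneg hε.le]
    calc ε * p (G (w + x) - D *ᵥ x) ≤ ε * (C * ((1 - r) / (2 * ε * C) * ‖x‖)) := by
          gcongr
          exact (hp2 _).trans (by gcongr)
      _ = (1 - r) / 2 * ‖x‖ := by field_simp
  have h5 := map_add_le_add p (x + ε • (D *ᵥ x)) (ε • (G (w + x) - D *ᵥ x))
  have h6 : (1 - r) / 2 * ‖x‖ ≤ (1 - r) / 2 * p x :=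
    mul_le_mul_of_nonneg_left (hp1 x) (by linarith)
  have h7 := hp3 x
  linarith

variable {p : Seminorm ℝ (Fin N → ℝ)} {C ε r ρ : ℝ} {f : (Fin N → ℝ) → Fin N → ℝ}

/-- One step of the noisy Euler scheme, after subtracting the accumulated noise `T`. -/
theorem Attracting.step (h : Attracting p C ε r ρ f) {x T : Fin N → ℝ} {γ : ℝ} (hx : ‖x‖ < ρ)
    (hγ0 : 0 ≤ γ) (hγ : γ ≤ ε) :
    p (x - T + γ • f x) ≤ (1 - γ * ((1 - r) / ε)) * p (x - T) +
      γ * ((1 - r) / ε) * (2 / (1 - r) * p T) := by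
  have hε := h.eps_pos
  have hr : 0 < 1 - r := by linarith [h.r_lt]
  have h1 : x - T + γ • f x = (1 - γ / ε) • (x - T) + (γ / ε) • (x + ε • f x - T) := by
    ext i
    simp only [Pi.add_apply, Pi.sub_apply, Pi.smul_apply, smul_eq_mul]
    field_simp
    ring
  have hq : γ / ε ≤ 1 := (div_le_one hε).2 hγ
  have hq0 : 0 ≤ γ / ε := by positivity
  have h2 : p (x + ε • f x - T) ≤ r * p (x - T) + 2 * p T := by
    have a1 := map_sub_le_add p (x + ε • f x) T
    have a2 := h.contr x hx
    have a3 : p x ≤ p (x - T) + p T := by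
      have := map_add_le_add p (x - T) T
      simpa using this
    nlinarith [h.r_pos, h.r_lt, apply_nonneg p T, mul_le_mul_of_nonneg_left a3 h.r_pos.le]
  rw [h1]
  refine (map_add_le_add p _ _).trans ?_
  rw [map_smul_eq_mul, map_smul_eq_mul, Real.norm_of_nonneg hq0, Real.norm_of_nonneg (by linarith)]
  have h3 := mul_le_mul_of_nonneg_left h2 hq0
  have h4 : γ * ((1 - r) / ε) * (2 / (1 - r) * p T) = γ / ε * (2 * p T) := by
    field_simp
  have h5 : γ * ((1 - r) / ε) = γ / ε * (1 - r) := by ring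
  rw [h4, h5]
  linarith

variable {x T : ℕ → Fin N → ℝ} {m : ℕ}

/-- The scheme stays near the equilibrium as long as the accumulated noise is small whenever the
scheme has stayed near the equilibrium. -/
theorem Attracting.stays (h : Attracting p C ε r ρ f)
    (hγ : ∀ k ≥ m, gam N k ≤ ε)
    (hrec : ∀ k ≥ m, x (k + 1) = x k + gam N k • f (x k) + (T (k + 1) - T k))
    (hjump : ∀ k ≥ m, ‖x (k + 1) - x k‖ < ρ / 2)
    {η : ℝ} (hη : (2 / (1 - r) + 1) * η ≤ ρ / 4) (hη0 : 0 < η) (hTm : T m = 0)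
    (hxm : p (x m) ≤ ρ / 4)
    (hT : ∀ k ≥ m, (∀ j ∈ Finset.Icc m k, ‖x j‖ < ρ) → p (T k) ≤ η) :
    ∀ k ≥ m, ‖x k‖ < ρ := by
  have hr : 0 < 1 - r := by linarith [h.r_lt]
  have hr2 : 0 < 2 / (1 - r) := by positivity
  have hρ : 0 < ρ := by nlinarith
  suffices H : ∀ k ≥ m, (∀ j ∈ Finset.Icc m k, p (x j) ≤ ρ / 2) ∧ p (x k - T k) ≤ ρ / 4 by
    intro k hk
    have := (H k hk).1 k (by simp [hk])
    linarith [h.norm_le (x k)]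
  intro k hk
  induction k, hk using Nat.le_induction with
  | base => simp [hTm]; exact ⟨by linarith, hxm⟩
  | succ k hk ih =>
    obtain ⟨ih1, ih2⟩ := ih
    have hin : ∀ j ∈ Finset.Icc m k, ‖x j‖ < ρ := fun j hj => by
      linarith [h.norm_le (x j), ih1 j hj]
    have hxk : ‖x (k + 1)‖ < ρ := by
      have h1 := hjump k hk
      have h2 : ‖x (k + 1)‖ ≤ ‖x (k + 1) - x k‖ + ‖x k‖ := by
        simpa using norm_add_le (x (k + 1) - x k) (x k)
      have h3 := ih1 k (by simp [hk])
      linarith [h.norm_le (x k)]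
    have hin' : ∀ j ∈ Finset.Icc m (k + 1), ‖x j‖ < ρ := fun j hj => by
      rw [Finset.mem_Icc] at hj
      rcases Nat.lt_or_ge k j with h1 | h1
      · rw [show j = k + 1 by omega]; exact hxk
      · exact hin j (by simp; omega)
    have hTk := hT k hk hin
    have hTk' := hT (k + 1) (by omega) hin'
    have hy : x (k + 1) - T (k + 1) = x k - T k + gam N k • f (x k) := by
      rw [hrec k hk]; abel
    have hstep := h.step (T := T k) (hin k (by simp [hk])) (gam_pos N k).le (hγ k hk)
    rw [← hy] at hstep
    have ha0 : 0 ≤ gam N k * ((1 - r) / ε) :=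
      mul_nonneg (gam_pos N k).le (div_nonneg hr.le h.eps_pos.le)
    have ha1 : gam N k * ((1 - r) / ε) ≤ 1 := by
      rw [← mul_div_assoc, div_le_one h.eps_pos]
      nlinarith [hγ k hk, gam_pos N k, h.r_pos]
    have hy' : p (x (k + 1) - T (k + 1)) ≤ ρ / 4 := by
      have e1 : 2 / (1 - r) * p (T k) ≤ ρ / 4 := by
        have := mul_le_mul_of_nonneg_left hTk hr2.le
        linarith
      nlinarith [mul_le_mul_of_nonneg_left e1 ha0,
        mul_le_mul_of_nonneg_left ih2 (sub_nonneg.2 ha1)]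
    refine ⟨fun j hj => ?_, hy'⟩
    rw [Finset.mem_Icc] at hj
    rcases Nat.lt_or_ge k j with h1 | h1
    · rw [show j = k + 1 by omega]
      have h2 : p (x (k + 1)) ≤ p (x (k + 1) - T (k + 1)) + p (T (k + 1)) := by
        simpa using map_add_le_add p (x (k + 1) - T (k + 1)) (T (k + 1))
      have h3 : η ≤ ρ / 4 := by nlinarith
      linarith
    · exact ih1 j (by simp; omega)

/-- Once the accumulated noise `T` converges, subtracting its tail leaves a perturbed contraction
with vanishing perturbation. -/
theorem Attracting.tendsto_zero (h : Attracting p C ε r ρ f)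
    (hγ : ∀ k ≥ m, gam N k ≤ ε)
    (hrec : ∀ k ≥ m, x (k + 1) = x k + gam N k • f (x k) + (T (k + 1) - T k))
    (hin : ∀ k ≥ m, ‖x k‖ < ρ) {L : Fin N → ℝ} (hT : Tendsto T atTop (nhds L)) :
    Tendsto x atTop (nhds 0) := by
  have hr : 0 < 1 - r := by linarith [h.r_lt]
  have hTL : Tendsto (fun k => p (T k - L)) atTop (nhds 0) := by
    have h1 : Tendsto (fun k => C * ‖T k - L‖) atTop (nhds 0) := by
      simpa using (tendsto_iff_norm_sub_tendsto_zero.1 hT).const_mul C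
    exact squeeze_zero (fun k => apply_nonneg p _) (fun k => h.le_norm _) h1
  have hy : Tendsto (fun k => p (x k - (T k - L))) atTop (nhds 0) := by
    refine tendsto_zero_of_recursion (m := m) (a := fun k => gam N k * ((1 - r) / ε))
      (b := fun k => 2 / (1 - r) * p (T k - L)) (fun k => apply_nonneg p _)
      (fun k => mul_nonneg (gam_pos N k).le (div_nonneg hr.le h.eps_pos.le)) ?_ ?_ ?_ ?_
    · intro k hk
      rw [← mul_div_assoc, div_le_one h.eps_pos]
      nlinarith [hγ k hk, gam_pos N k, h.r_pos]
    · intro k hk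
      have hstep := h.step (T := T k - L) (hin k hk) (gam_pos N k).le (hγ k hk)
      have e : x (k + 1) - (T (k + 1) - L) = x k - (T k - L) + gam N k • f (x k) := by
        rw [hrec k hk]; abel
      rw [e]
      exact hstep
    · simpa using hTL.const_mul (2 / (1 - r))
    · simp_rw [← Finset.sum_mul]
      exact (sum_gam_tendsto N).atTop_mul_const (div_pos hr h.eps_pos)
  rw [tendsto_zero_iff_norm_tendsto_zero]
  have hsum := hy.add hTL
  rw [add_zero] at hsum
  refine squeeze_zero (fun k => norm_nonneg _) (fun k => ?_) hsum
  refine (h.norm_le _).trans ?_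
  simpa using map_add_le_add p (x k - (T k - L)) (T k - L)

end Deterministic

/-! ### Martingales living on an event -/

section Martingale

variable {Ω : Type*} {mΩ : MeasurableSpace Ω} {μ : Measure Ω} [IsProbabilityMeasure μ]
  {𝒢 : Filtration ℕ mΩ} {d : ℕ → Ω → ℝ} {c : ℕ → ℝ} {G : Set Ω}

theorem abs_sum_le (hd : ∀ k ω, |d k ω| ≤ c k * G.indicator 1 ω) (n : ℕ) (ω : Ω) :
    |∑ k ∈ Finset.range n, d k ω| ≤ (∑ k ∈ Finset.range n, c k) * G.indicator 1 ω := by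
  rw [Finset.sum_mul]
  exact (Finset.abs_sum_le_sum_abs _ _).trans (Finset.sum_le_sum fun k _ => hd k ω)

theorem martingale_sum (hc : ∀ k, 0 ≤ c k) (hmeas : ∀ k, StronglyMeasurable[𝒢 (k + 1)] (d k))
    (hd : ∀ k ω, |d k ω| ≤ c k * G.indicator 1 ω) (hcond : ∀ k, μ[d k | 𝒢 k] =ᵐ[μ] 0) :
    Martingale (fun n ω => ∑ k ∈ Finset.range n, d k ω) 𝒢 μ := by
  have hadp : StronglyAdapted 𝒢 (fun n ω => ∑ k ∈ Finset.range n, d k ω) := fun n =>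
    Finset.stronglyMeasurable_fun_sum _ fun k hk =>
      (hmeas k).mono (𝒢.mono (by simp at hk; omega))
  have hb : ∀ k ω, |d k ω| ≤ c k := fun k ω => (hd k ω).trans (by
    by_cases h : ω ∈ G <;> simp [h, hc k])
  refine martingale_of_condExp_sub_eq_zero_nat hadp (fun n => ?_) fun n => ?_
  · exact integrable_finsetSum _ fun k _ => Integrable.of_bound
      ((hmeas k).mono (𝒢.le _)).aestronglyMeasurable (c k) (ae_of_all _ fun ω => hb k ω)
  · have : (fun ω => ∑ k ∈ Finset.range (n + 1), d k ω) - (fun ω => ∑ k ∈ Finset.range n, d k ω)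
        = d n := by
      ext ω
      simp [Finset.sum_range_succ]
    rw [this]
    exact hcond n

/-- Orthogonality of martingale increments. -/
theorem integral_sq_sum_le (hG : MeasurableSet G) (hc : ∀ k, 0 ≤ c k)
    (hmeas : ∀ k, StronglyMeasurable[𝒢 (k + 1)] (d k))
    (hd : ∀ k ω, |d k ω| ≤ c k * G.indicator 1 ω) (hcond : ∀ k, μ[d k | 𝒢 k] =ᵐ[μ] 0) (n : ℕ) :
    ∫ ω, (∑ k ∈ Finset.range n, d k ω) ^ 2 ∂μ ≤ (∑ k ∈ Finset.range n, c k ^ 2) * μ.real G := by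
  have hmart := martingale_sum (μ := μ) hc hmeas hd hcond
  have hb : ∀ k ω, |d k ω| ≤ c k := fun k ω => (hd k ω).trans (by
    by_cases h : ω ∈ G <;> simp [h, hc k])
  have hdm : ∀ k, AEStronglyMeasurable (d k) μ := fun k =>
    ((hmeas k).mono (𝒢.le _)).aestronglyMeasurable
  have hdi : ∀ k, Integrable (d k) μ := fun k =>
    Integrable.of_bound (hdm k) (c k) (ae_of_all _ fun ω => hb k ω)
  induction n with
  | zero => simp
  | succ n ih =>
    set f : Ω → ℝ := fun ω => ∑ k ∈ Finset.range n, d k ω with hf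
    have hfm : StronglyMeasurable[𝒢 n] f := hmart.stronglyMeasurable n
    have hfm' : AEStronglyMeasurable f μ := (hfm.mono (𝒢.le _)).aestronglyMeasurable
    have hfb : ∀ ω, |f ω| ≤ ∑ k ∈ Finset.range n, c k := fun ω =>
      (abs_sum_le hd n ω).trans (by
        have := Finset.sum_nonneg fun k (_ : k ∈ Finset.range n) => hc k
        by_cases h : ω ∈ G <;> simp [h, this])
    have hfd : Integrable (f * d n) μ := (hdi n).bdd_mul hfm' (ae_of_all _ hfb)
    have hff : Integrable (fun ω => f ω * f ω) μ :=
      (Integrable.of_bound hfm' _ (ae_of_all _ hfb)).bdd_mul hfm' (ae_of_all _ hfb)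
    have hdd : Integrable (fun ω => d n ω * d n ω) μ :=
      (hdi n).bdd_mul (hdm n) (ae_of_all _ (hb n))
    have hcross : ∫ ω, (f * d n) ω ∂μ = 0 := by
      rw [← integral_condExp (𝒢.le n)]
      have h1 := condExp_mul_of_stronglyMeasurable_left hfm hfd (hdi n)
      have h2 : μ[f * d n | 𝒢 n] =ᵐ[μ] 0 := by
        filter_upwards [h1, hcond n] with ω e1 e2
        rw [e1, Pi.mul_apply, e2]
        simp
      rw [integral_congr_ae h2]
      simp
    have hdsq : ∫ ω, d n ω * d n ω ∂μ ≤ c n ^ 2 * μ.real G := by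
      have h1 : ∫ ω, d n ω * d n ω ∂μ ≤ ∫ ω, G.indicator (fun _ => c n ^ 2) ω ∂μ := by
        refine integral_mono hdd ((integrable_const _).indicator hG) fun ω => ?_
        have h2 := hd n ω
        by_cases h : ω ∈ G
        · simp [h] at h2 ⊢
          rw [← sq]
          exact sq_le_sq' (by linarith [neg_abs_le (d n ω)]) ((le_abs_self _).trans h2)
        · simp [h] at h2 ⊢
          simp [h2]
      rw [integral_indicator hG] at h1
      simpa [mul_comm] using h1
    have hexp : ∀ ω, (∑ k ∈ Finset.range (n + 1), d k ω) ^ 2 =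
        f ω * f ω + 2 * (f * d n) ω + d n ω * d n ω := fun ω => by
      rw [Finset.sum_range_succ, Pi.mul_apply]
      simp only [hf]
      ring
    have hInt : ∫ ω, (∑ k ∈ Finset.range (n + 1), d k ω) ^ 2 ∂μ =
        ∫ ω, f ω * f ω ∂μ + 2 * ∫ ω, (f * d n) ω ∂μ + ∫ ω, d n ω * d n ω ∂μ := by
      simp_rw [hexp]
      rw [← integral_const_mul, ← integral_add hff (hfd.const_mul 2)]
      exact integral_add (hff.add (hfd.const_mul 2)) hdd
    rw [hInt, hcross, Finset.sum_range_succ, add_mul]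
    have ih' : ∫ ω, f ω * f ω ∂μ ≤ (∑ k ∈ Finset.range n, c k ^ 2) * μ.real G := by
      simpa only [sq] using ih
    linarith

/-- The `L¹` bound comes from `|t| ≤ b / 2 + t ^ 2 / (2 b)`, integrated over `G`. -/
theorem integral_abs_sum_le (hG : MeasurableSet G) (hc : ∀ k, 0 ≤ c k)
    (hmeas : ∀ k, StronglyMeasurable[𝒢 (k + 1)] (d k))
    (hd : ∀ k ω, |d k ω| ≤ c k * G.indicator 1 ω) (hcond : ∀ k, μ[d k | 𝒢 k] =ᵐ[μ] 0)
    {b : ℝ} (hb0 : 0 < b) (hb : ∀ n, ∑ k ∈ Finset.range n, c k ^ 2 ≤ b ^ 2) (n : ℕ) :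
    ∫ ω, |∑ k ∈ Finset.range n, d k ω| ∂μ ≤ b * μ.real G := by
  have hmart := martingale_sum (μ := μ) hc hmeas hd hcond
  have hsq := integral_sq_sum_le (μ := μ) hG hc hmeas hd hcond n
  set f : Ω → ℝ := fun ω => ∑ k ∈ Finset.range n, d k ω with hf
  have hfi : Integrable f μ := hmart.integrable n
  have hfb : ∀ ω, |f ω| ≤ ∑ k ∈ Finset.range n, c k := fun ω =>
    (abs_sum_le hd n ω).trans (by
      have := Finset.sum_nonneg fun k (_ : k ∈ Finset.range n) => hc k
      by_cases h : ω ∈ G <;> simp [h, this])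
  have hff : Integrable (fun ω => f ω ^ 2) μ := by
    simp only [sq]
    exact hfi.bdd_mul hfi.1 (ae_of_all _ hfb)
  have h1 : ∫ ω, |f ω| ∂μ ≤ ∫ ω, (b / 2 * G.indicator 1 ω + 1 / (2 * b) * f ω ^ 2) ∂μ := by
    refine integral_mono hfi.abs ((((integrable_const (1 : ℝ)).indicator hG).const_mul _).add
      (hff.const_mul _)) fun ω => ?_
    have h2 := abs_sum_le hd n ω
    by_cases h : ω ∈ G
    · simp only [h, indicator_of_mem, Pi.one_apply, mul_one]
      have : 0 ≤ (b - |f ω|) ^ 2 / (2 * b) := by positivity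
      rw [← sq_abs (f ω)]
      have e : (b - |f ω|) ^ 2 / (2 * b) = b / 2 + 1 / (2 * b) * |f ω| ^ 2 - |f ω| := by
        field_simp
        ring
      linarith
    · simp only [h, not_false_eq_true, indicator_of_notMem, mul_zero] at h2 ⊢
      have e : |f ω| ≤ 0 := h2
      have : 0 ≤ 1 / (2 * b) * f ω ^ 2 := by positivity
      linarith
  have hind : ∫ ω, G.indicator (1 : Ω → ℝ) ω ∂μ = μ.real G := integral_indicator_one hG
  have hGi : Integrable (fun ω => b / 2 * G.indicator (1 : Ω → ℝ) ω) μ :=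
    ((integrable_const (1 : ℝ)).indicator hG).const_mul _
  rw [integral_add hGi (hff.const_mul _),
    integral_const_mul, integral_const_mul, hind] at h1
  have h3 : 1 / (2 * b) * ∫ ω, f ω ^ 2 ∂μ ≤ b / 2 * μ.real G := by
    have h4 : ∫ ω, f ω ^ 2 ∂μ ≤ b ^ 2 * μ.real G :=
      hsq.trans (mul_le_mul_of_nonneg_right (hb n) measureReal_nonneg)
    calc 1 / (2 * b) * ∫ ω, f ω ^ 2 ∂μ ≤ 1 / (2 * b) * (b ^ 2 * μ.real G) := by gcongr
      _ = b / 2 * μ.real G := by field_simp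
  linarith

/-- Almost sure convergence and maximal inequality for a martingale with square-summable
increments living on the event `G`. The bound is proportional to `μ G`. -/
theorem martingale_control (hG : MeasurableSet G) (hc : ∀ k, 0 ≤ c k)
    (hmeas : ∀ k, StronglyMeasurable[𝒢 (k + 1)] (d k))
    (hd : ∀ k ω, |d k ω| ≤ c k * G.indicator 1 ω) (hcond : ∀ k, μ[d k | 𝒢 k] =ᵐ[μ] 0)
    {b : ℝ} (hb0 : 0 < b) (hb : ∀ n, ∑ k ∈ Finset.range n, c k ^ 2 ≤ b ^ 2) :
    (∀ᵐ ω ∂μ, ∃ l, Tendsto (fun n => ∑ k ∈ Finset.range n, d k ω) atTop (nhds l)) ∧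
    ∀ η : ℝ, 0 < η → μ {ω | ∃ n, η ≤ |∑ k ∈ Finset.range n, d k ω|} ≤
      ENNReal.ofReal (b / η) * μ G := by
  have hmart := martingale_sum (μ := μ) hc hmeas hd hcond
  have habs := integral_abs_sum_le (μ := μ) hG hc hmeas hd hcond hb0 hb
  constructor
  · refine hmart.submartingale.exists_ae_tendsto_of_bdd (R := (b * μ.real G).toNNReal) fun n => ?_
    rw [eLpNorm_one_eq_lintegral_enorm]
    rw [← ofReal_integral_norm_eq_lintegral_enorm (hmart.integrable n)]
    exact ENNReal.ofReal_le_ofReal (habs n)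
  · intro η hη
    have hsub : Submartingale ((fun n ω => ∑ k ∈ Finset.range n, d k ω) ⊔
        (-fun n ω => ∑ k ∈ Finset.range n, d k ω)) 𝒢 μ :=
      hmart.submartingale.sup hmart.neg.submartingale
    have hval : ∀ n ω, ((fun n ω => ∑ k ∈ Finset.range n, d k ω) ⊔
        (-fun n ω => ∑ k ∈ Finset.range n, d k ω)) n ω = |∑ k ∈ Finset.range n, d k ω| :=
      fun n ω => rfl
    set S : ℕ → Set Ω := fun n => {ω | ∃ k ∈ Finset.range (n + 1),
      η ≤ |∑ j ∈ Finset.range k, d j ω|} with hS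
    have hunion : {ω | ∃ n, η ≤ |∑ k ∈ Finset.range n, d k ω|} = ⋃ n, S n := by
      ext ω
      simp only [hS, mem_ofPred_eq, mem_iUnion]
      constructor
      · rintro ⟨n, hn⟩
        exact ⟨n, n, by simp, hn⟩
      · rintro ⟨n, k, -, hk⟩
        exact ⟨k, hk⟩
    have hmono : Monotone S := by
      intro a b hab ω
      rintro ⟨k, hk, h⟩
      exact ⟨k, by simp at hk ⊢; omega, h⟩
    rw [hunion, hmono.measure_iUnion]
    refine iSup_le fun n => ?_
    have hη' : ((η.toNNReal : NNReal) : ℝ) = η := Real.coe_toNNReal _ hη.le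
    have hmax := maximal_ineq hsub (fun n ω => by rw [hval]; exact abs_nonneg _)
      (ε := η.toNNReal) n
    simp only [hη'] at hmax
    have hset : {ω | η ≤ (Finset.range (n + 1)).sup'
        Finset.nonempty_range_add_one fun k => ((fun n ω => ∑ k ∈ Finset.range n, d k ω) ⊔
        (-fun n ω => ∑ k ∈ Finset.range n, d k ω)) k ω} = S n := by
      ext ω
      simp only [hS, mem_ofPred_eq, Finset.le_sup'_iff, hval]
    rw [hset] at hmax
    have h1 : ∫ ω in S n, ((fun n ω => ∑ k ∈ Finset.range n, d k ω) ⊔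
        (-fun n ω => ∑ k ∈ Finset.range n, d k ω)) n ω ∂μ ≤ b * μ.real G :=
      (setIntegral_le_integral (hsub.integrable n)
        (ae_of_all _ fun ω => by rw [hval]; exact abs_nonneg _)).trans (habs n)
    have h2 := hmax.trans (ENNReal.ofReal_le_ofReal h1)
    rw [ENNReal.ofReal_mul hb0.le, ofReal_measureReal] at h2
    change ENNReal.ofReal η * _ ≤ _ at h2
    rw [ENNReal.ofReal_div_of_pos hη, div_eq_mul_inv, mul_right_comm, ← div_eq_mul_inv,
      ENNReal.le_div_iff_mul_le (by simp [hη]) (by simp), mul_comm]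
    exact h2

end Martingale

/-! ### Deterministic path and summation of the noise -/

section Path

variable {N : ℕ}

/-- Derandomised law of large numbers: if the increments `g j - h x` have mean zero under the
stochastic row `K x`, the next state can be chosen, with positive `K`-weight, so that the squared
norm of the accumulated increments grows at most linearly. -/
theorem exists_path_bounded {K g h : Matrix (Fin N) (Fin N) ℝ} (hK : ∀ x j, 0 ≤ K x j)
    (hK1 : ∀ x, ∑ j, K x j = 1) (hh : ∀ x i, h x i = ∑ j, K x j * g j i) (x0 : Fin N) :
    ∃ (y : ℕ → Fin N) (S : ℕ → Fin N → ℝ) (B : ℝ), y 0 = x0 ∧ S 0 = 0 ∧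
      (∀ n, 0 < K (y n) (y (n + 1))) ∧
      (∀ n i, S (n + 1) i = S n i + (g (y (n + 1)) i - h (y n) i)) ∧
      ∀ n i, S n i ^ 2 ≤ B * n := by
  have hchoice : ∀ (x : Fin N) (s : Fin N → ℝ), ∃ j, 0 < K x j ∧
      ∑ i, s i * (g j i - h x i) ≤ 0 := by
    intro x s
    by_contra! hcon
    have hz : ∑ j, K x j * ∑ i, s i * (g j i - h x i) = 0 := by
      have e : ∀ j, K x j * ∑ i, s i * (g j i - h x i) =
          ∑ i, (s i * (K x j * g j i) - s i * h x i * K x j) := fun j => by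
        rw [Finset.mul_sum]
        exact Finset.sum_congr rfl fun i _ => by ring
      simp_rw [e]
      rw [Finset.sum_comm]
      refine Finset.sum_eq_zero fun i _ => ?_
      rw [Finset.sum_sub_distrib, ← Finset.mul_sum, ← Finset.mul_sum, hK1, ← hh]
      ring
    have hnn : ∀ j ∈ Finset.univ, 0 ≤ K x j * ∑ i, s i * (g j i - h x i) := fun j _ => by
      rcases (hK x j).eq_or_lt with h0 | h0
      · simp [← h0]
      · exact mul_nonneg h0.le (hcon j h0).le
    have hall := (Finset.sum_eq_zero_iff_of_nonneg hnn).1 hz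
    have hKz : ∀ j, K x j = 0 := fun j => by
      by_contra hne
      have h0 := lt_of_le_of_ne (hK x j) (Ne.symm hne)
      exact (mul_pos h0 (hcon j h0)).ne' (hall j (Finset.mem_univ j))
    have := hK1 x
    simp [hKz] at this
  choose nxt hn1 hn2 using hchoice
  let q : ℕ → Fin N × (Fin N → ℝ) := fun n => Nat.rec (x0, 0)
    (fun _ s => (nxt s.1 s.2, fun i => s.2 i + (g (nxt s.1 s.2) i - h s.1 i))) n
  refine ⟨fun n => (q n).1, fun n => (q n).2, ∑ x, ∑ j, ∑ i, (g j i - h x i) ^ 2, rfl, rfl,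
    fun n => hn1 _ _, fun n i => rfl, ?_⟩
  set B := ∑ x, ∑ j, ∑ i, (g j i - h x i) ^ 2
  have hB : ∀ x j, ∑ i, (g j i - h x i) ^ 2 ≤ B := fun x j =>
    (Finset.single_le_sum (f := fun j => ∑ i, (g j i - h x i) ^ 2)
      (fun j _ => Finset.sum_nonneg fun i _ => sq_nonneg _) (Finset.mem_univ j)).trans
    (Finset.single_le_sum (f := fun x => ∑ j, ∑ i, (g j i - h x i) ^ 2)
      (fun x _ => Finset.sum_nonneg fun j _ => Finset.sum_nonneg fun i _ => sq_nonneg _)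
      (Finset.mem_univ x))
  have hmain : ∀ n : ℕ, ∑ i, (q n).2 i ^ 2 ≤ B * n := by
    intro n
    induction n with
    | zero => simp [q]
    | succ n ih =>
      have e : ∀ i, (q (n + 1)).2 i =
          (q n).2 i + (g (nxt (q n).1 (q n).2) i - h (q n).1 i) := fun i => rfl
      have h1 := hn2 (q n).1 (q n).2
      have h2 := hB (q n).1 (nxt (q n).1 (q n).2)
      have h3 : ∑ i, (q (n + 1)).2 i ^ 2 = ∑ i, (q n).2 i ^ 2 +
          2 * ∑ i, (q n).2 i * (g (nxt (q n).1 (q n).2) i - h (q n).1 i) +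
          ∑ i, (g (nxt (q n).1 (q n).2) i - h (q n).1 i) ^ 2 := by
        rw [Finset.mul_sum, ← Finset.sum_add_distrib, ← Finset.sum_add_distrib]
        exact Finset.sum_congr rfl fun i _ => by rw [e]; ring
      rw [h3]
      push_cast
      linarith
  intro n i
  exact (Finset.single_le_sum (f := fun i => (q n).2 i ^ 2) (fun i _ => sq_nonneg _)
    (Finset.mem_univ i)).trans (hmain n)

/-- A path with admissible transitions along which the occupation frequencies tend to `w`, when
`w` is the stationary law of `K` and the Poisson equation of `K` is solvable. -/
theorem exists_path {K g h : Matrix (Fin N) (Fin N) ℝ} (hK : ∀ x j, 0 ≤ K x j)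
    (hK1 : ∀ x, ∑ j, K x j = 1) (hh : ∀ x i, h x i = ∑ j, K x j * g j i) {w : Fin N → ℝ}
    (hP : ∀ x i, (if x = i then 1 else 0) - w i = g x i - h x i) (x0 : Fin N) :
    ∃ y : ℕ → Fin N, y 0 = x0 ∧ (∀ n, 0 < K (y n) (y (n + 1))) ∧
      Tendsto (fun n : ℕ => fun i =>
        (1 + (((Finset.range (n + 1)).filter fun l => y l = i).card : ℝ)) / ((n : ℝ) + 1 + N))
        atTop (nhds w) := by
  obtain ⟨y, S, B, hy0, hS0, hyK, hS, hB⟩ := exists_path_bounded hK hK1 hh x0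
  refine ⟨y, hy0, hyK, ?_⟩
  rw [tendsto_pi_nhds]
  intro i
  have hcard : ∀ n : ℕ, (((Finset.range (n + 1)).filter fun l => y l = i).card : ℝ) =
      (n + 1) * w i + ((if y 0 = i then 1 else 0) - w i) + S n i + h (y 0) i - h (y n) i := by
    intro n
    induction n with
    | zero =>
      simp only [zero_add, Finset.range_one, Finset.filter_singleton, hS0]
      split_ifs <;> simp
    | succ n ih =>
      rw [Finset.range_add_one, Finset.filter_insert]
      have h1 := hP (y (n + 1)) i
      have h2 := hS n i
      by_cases hc : y (n + 1) = i
      · rw [if_pos hc] at h1 ⊢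
        rw [Finset.card_insert_of_notMem (by simp)]
        push_cast
        rw [ih]
        linarith
      · rw [if_neg hc] at h1 ⊢
        push_cast
        rw [ih]
        linarith
  have hd : Tendsto (fun n : ℕ => 1 / ((n : ℝ) + 1 + N)) atTop (nhds 0) := by
    have h1 := ((tendsto_natCast_atTop_atTop (R := ℝ)).comp
      (tendsto_add_atTop_nat (1 + N))).inv_tendsto_atTop
    refine h1.congr fun k => ?_
    simp [add_assoc]
  have hSn : Tendsto (fun n : ℕ => S n i * (1 / ((n : ℝ) + 1 + N))) atTop (nhds 0) := by
    have hsq : Tendsto (fun n : ℕ => (S n i * (1 / ((n : ℝ) + 1 + N))) ^ 2) atTop (nhds 0) := by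
      have hB0 : 0 ≤ B := by
        have := hB 1 i
        have := sq_nonneg (S 1 i)
        simp at *
        linarith
      have hlim := hd.const_mul B
      rw [mul_zero] at hlim
      refine squeeze_zero (fun n => sq_nonneg _) (fun n => ?_) hlim
      rw [mul_pow]
      have h0 : (0 : ℝ) < (n : ℝ) + 1 + N := by positivity
      have h1 : (n : ℝ) * (1 / ((n : ℝ) + 1 + N)) ≤ 1 := by
        rw [mul_one_div, div_le_one h0]
        have : (0 : ℝ) ≤ N := by positivity
        linarith
      have h2 : (0 : ℝ) < 1 / ((n : ℝ) + 1 + N) := by positivity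
      calc S n i ^ 2 * (1 / ((n : ℝ) + 1 + N)) ^ 2 ≤ B * n * (1 / ((n : ℝ) + 1 + N)) ^ 2 := by
            gcongr
            exact hB n i
        _ = B * ((n : ℝ) * (1 / ((n : ℝ) + 1 + N)) * (1 / ((n : ℝ) + 1 + N))) := by ring
        _ ≤ B * (1 * (1 / ((n : ℝ) + 1 + N))) := by gcongr
        _ = B * (1 / ((n : ℝ) + 1 + N)) := by ring
    have := hsq.sqrt
    simp only [Real.sqrt_sq_eq_abs, Real.sqrt_zero] at this
    exact (tendsto_zero_iff_abs_tendsto_zero _).2 this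
  have hhn : Tendsto (fun n : ℕ => h (y n) i * (1 / ((n : ℝ) + 1 + N))) atTop (nhds 0) := by
    have hbd : ∀ x, |h x i| ≤ ∑ x, |h x i| := fun x =>
      Finset.single_le_sum (f := fun x => |h x i|) (fun x _ => abs_nonneg _) (Finset.mem_univ x)
    have hlim := hd.const_mul (∑ x, |h x i|)
    rw [mul_zero] at hlim
    refine squeeze_zero_norm (fun n => ?_) hlim
    have h2 : (0 : ℝ) < 1 / ((n : ℝ) + 1 + N) := by positivity
    rw [norm_mul, Real.norm_of_nonneg h2.le, Real.norm_eq_abs]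
    gcongr
    exact hbd _
  have hconst := hd.const_mul (1 - N * w i + ((if y 0 = i then 1 else 0) - w i) + h (y 0) i)
  have hall := ((hconst.add hSn).sub hhn).const_add (w i)
  simp only [mul_zero, add_zero, sub_zero] at hall
  refine hall.congr fun n => ?_
  rw [hcard n]
  have h0 : (n : ℝ) + 1 + N ≠ 0 := by positivity
  field_simp
  ring

end Path

section Noise

variable {N : ℕ} {ζ d a : ℕ → ℝ} {C : ℝ} {m : ℕ}

/-- Abel summation: the noise is a martingale increment, plus a telescoping difference, plus a
remainder of the order of the squared step size. -/
theorem abs_noise_le (hC : 0 ≤ C) {k : ℕ} (hk : m ≤ k)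
    (he : ∀ j ∈ Finset.Ico m k, |ζ j - d j - a j + a (j + 1)| ≤ 2 * C * gam N j ^ 2)
    (ha : ∀ j ∈ Finset.Icc m k, |a j| ≤ C * gam N j) :
    |∑ j ∈ Finset.Ico m k, ζ j| ≤ |∑ j ∈ Finset.Ico m k, d j| + 6 * C * gam N m := by
  have hdec : ∑ j ∈ Finset.Ico m k, ζ j = ∑ j ∈ Finset.Ico m k, d j + (a m - a k) +
      ∑ j ∈ Finset.Ico m k, (ζ j - d j - a j + a (j + 1)) := by
    have htel : ∑ j ∈ Finset.Ico m k, (a (j + 1) - a j) = a k - a m :=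
      Finset.sum_Ico_sub a hk
    have : a m - a k = - ∑ j ∈ Finset.Ico m k, (a (j + 1) - a j) := by rw [htel]; ring
    rw [this, ← Finset.sum_neg_distrib, ← Finset.sum_add_distrib, ← Finset.sum_add_distrib]
    exact Finset.sum_congr rfl fun j _ => by ring
  have h1 : |∑ j ∈ Finset.Ico m k, (ζ j - d j - a j + a (j + 1))| ≤ 4 * C * gam N m := by
    refine (Finset.abs_sum_le_sum_abs _ _).trans ((Finset.sum_le_sum he).trans ?_)
    rw [← Finset.mul_sum]
    have := mul_le_mul_of_nonneg_left (sum_gam_sq_le N m k) (show 0 ≤ 2 * C by positivity)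
    linarith
  have h2 := ha m (by simp [hk])
  have h3 := ha k (by simp [hk])
  have h4 : gam N k ≤ gam N m := antitone_nat_of_succ_le (gam_antitone_succ N) hk
  have h5 := mul_le_mul_of_nonneg_left h4 hC
  rw [hdec]
  have e1 := abs_add_le (∑ j ∈ Finset.Ico m k, d j + (a m - a k))
    (∑ j ∈ Finset.Ico m k, (ζ j - d j - a j + a (j + 1)))
  have e2 := abs_add_le (∑ j ∈ Finset.Ico m k, d j) (a m - a k)
  have e3 := abs_sub (a m) (a k)
  linarith

theorem noise_tendsto
    (he : ∀ j ≥ m, |ζ j - d j - a j + a (j + 1)| ≤ 2 * C * gam N j ^ 2)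
    (ha : ∀ j ≥ m, |a j| ≤ C * gam N j)
    (hd : ∃ l, Tendsto (fun n => ∑ j ∈ Finset.range n, d j) atTop (nhds l)) :
    ∃ l, Tendsto (fun n => ∑ j ∈ Finset.Ico m n, ζ j) atTop (nhds l) := by
  obtain ⟨l, hl⟩ := hd
  have ha0 : Tendsto a atTop (nhds 0) := by
    refine squeeze_zero_norm' ?_ (by simpa using (gam_tendsto N).const_mul C)
    filter_upwards [eventually_ge_atTop m] with j hj using ha j hj
  have hes : Summable fun j => ζ j - d j - a j + a (j + 1) := by
    refine Summable.of_norm_bounded_eventually_nat ((summable_gam_sq N).mul_left (2 * C)) ?_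
    filter_upwards [eventually_ge_atTop m] with j hj using he j hj
  have het := hes.hasSum.tendsto_sum_nat
  have hdec : ∀ k, ∑ j ∈ Finset.range k, ζ j = ∑ j ∈ Finset.range k, d j + (a 0 - a k) +
      ∑ j ∈ Finset.range k, (ζ j - d j - a j + a (j + 1)) := by
    intro k
    rw [← Finset.sum_range_sub', ← Finset.sum_add_distrib, ← Finset.sum_add_distrib]
    exact Finset.sum_congr rfl fun j _ => by ring
  have hlim := ((hl.add (ha0.const_sub (a 0))).add het).sub_const (∑ j ∈ Finset.range m, ζ j)
  refine ⟨_, hlim.congr' ?_⟩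
  filter_upwards [eventually_ge_atTop m] with k hk
  rw [Finset.sum_Ico_eq_sub _ hk, hdec k]

end Noise

/-! ### The process and its natural filtration -/

section Walk

variable {N : ℕ} {Ω : Type*}

/-- Occupation frequencies with one additional initial visit to every state, for which the
transition probabilities of the process are exactly `kern`. -/
noncomputable def occ (Z : ℕ → Fin N → Ω → ℕ) (n : ℕ) (ω : Ω) : Fin N → ℝ :=
  fun i => (1 + (Z n i ω : ℝ)) / ((n : ℝ) + 1 + N)

variable {X : ℕ → Ω → Fin N} {Z : ℕ → Fin N → Ω → ℕ}

theorem card_succ (y : ℕ → Fin N) (n : ℕ) (i : Fin N) :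
    (((Finset.range (n + 1 + 1)).filter fun l => y l = i).card : ℝ) =
      ((Finset.range (n + 1)).filter fun l => y l = i).card +
        if y (n + 1) = i then 1 else 0 := by
  rw [Finset.range_add_one, Finset.filter_insert]
  split_ifs
  · rw [Finset.card_insert_of_notMem (by simp)]
    push_cast
    rfl
  · simp

theorem occ_succ (hZ : ∀ n j ω, Z n j ω =
    ((Finset.range (n + 1)).filter fun l => X l ω = j).card) (n : ℕ) (ω : Ω) (i : Fin N) :
    occ Z (n + 1) ω i = occ Z n ω i +
      gam N n * ((if X (n + 1) ω = i then 1 else 0) - occ Z n ω i) := by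
  unfold occ gam
  rw [hZ, hZ, card_succ fun l => X l ω]
  have h1 : (n : ℝ) + 1 + N ≠ 0 := by positivity
  have h2 : (n : ℝ) + 2 + N ≠ 0 := by positivity
  have h3 : (n : ℝ) + 1 + 1 + N ≠ 0 := by positivity
  push_cast
  field_simp
  ring

theorem occ_nonneg (n : ℕ) (ω : Ω) (i : Fin N) : 0 ≤ occ Z n ω i := by
  unfold occ; positivity

theorem occ_le_one [NeZero N] (hZ : ∀ n j ω, Z n j ω =
    ((Finset.range (n + 1)).filter fun l => X l ω = j).card) (n : ℕ) (ω : Ω) (i : Fin N) :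
    occ Z n ω i ≤ 1 := by
  unfold occ
  have h1 : (0 : ℝ) < (n : ℝ) + 1 + N := by positivity
  rw [div_le_one h1, hZ]
  have h2 := Finset.card_filter_le (Finset.range (n + 1)) fun l => X l ω = i
  rw [Finset.card_range] at h2
  have h3 : ((((Finset.range (n + 1)).filter fun l => X l ω = i).card : ℕ) : ℝ) ≤ n + 1 := by
    exact_mod_cast h2
  have h4 : (1 : ℝ) ≤ N := by exact_mod_cast NeZero.one_le
  linarith

theorem norm_occ_sub_le [NeZero N] (hZ : ∀ n j ω, Z n j ω =
    ((Finset.range (n + 1)).filter fun l => X l ω = j).card) (n : ℕ) (ω : Ω) :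
    ‖occ Z (n + 1) ω - occ Z n ω‖ ≤ gam N n := by
  rw [pi_norm_le_iff_of_nonneg (gam_pos N n).le]
  intro i
  rw [Pi.sub_apply, occ_succ hZ, add_sub_cancel_left, norm_mul, Real.norm_of_nonneg (gam_pos N n).le]
  refine mul_le_of_le_one_right (gam_pos N n).le ?_
  have h1 := occ_nonneg (Z := Z) n ω i
  have h2 := occ_le_one hZ n ω i
  rw [Real.norm_eq_abs, abs_le]
  split_ifs <;> constructor <;> linarith

theorem trans_eq_kern (A : Matrix (Fin N) (Fin N) ℝ) (α : ℝ) (n : ℕ) (ω : Ω) (x j : Fin N) :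
    A x j * (1 + (Z n j ω : ℝ)) ^ α / ∑ k : Fin N, A x k * (1 + (Z n k ω : ℝ)) ^ α =
      kern A α (occ Z n ω) x j := by
  simp only [kern, den, occ, Matrix.of_apply]
  have h1 : (0 : ℝ) < (n : ℝ) + 1 + N := by positivity
  have h2 : ((n : ℝ) + 1 + N) ^ α ≠ 0 := (Real.rpow_pos_of_pos h1 α).ne'
  have h3 : ∀ k, ((1 + (Z n k ω : ℝ)) / ((n : ℝ) + 1 + N)) ^ α =
      (1 + (Z n k ω : ℝ)) ^ α / ((n : ℝ) + 1 + N) ^ α := fun k =>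
    Real.div_rpow (by positivity) h1.le α
  simp_rw [h3, ← mul_div_assoc, ← Finset.sum_div]
  rw [div_div_div_cancel_right₀ h2]

variable [mΩ : MeasurableSpace Ω]

/-- The natural filtration of the process. -/
def hist (X : ℕ → Ω → Fin N) (hX : ∀ n, Measurable (X n)) : Filtration ℕ mΩ where
  seq n := ⨆ k ∈ Finset.range (n + 1), MeasurableSpace.comap (X k) ⊤
  mono' := fun i j hij => by
    refine biSup_mono fun k hk => ?_
    rw [Finset.mem_range] at *
    omega
  le' := fun n => iSup₂_le fun k _ => (hX k).comap_le

variable (hX : ∀ n, Measurable (X n))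

theorem measurable_hist {k n : ℕ} (hk : k ≤ n) : Measurable[hist X hX n] (X k) := by
  rw [measurable_iff_comap_le]
  exact le_iSup₂_of_le (f := fun k (_ : k ∈ Finset.range (n + 1)) =>
    MeasurableSpace.comap (X k) ⊤) k (by simp; omega) le_rfl

theorem measurable_count (hZ : ∀ n j ω, Z n j ω =
    ((Finset.range (n + 1)).filter fun l => X l ω = j).card) (n : ℕ) (j : Fin N) :
    Measurable[hist X hX n] (Z n j) := by
  have : Z n j = fun ω => ∑ l ∈ Finset.range (n + 1), if X l ω = j then 1 else 0 := by
    funext ω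
    rw [hZ, Finset.card_filter]
  rw [this]
  refine Finset.measurable_sum _ fun l hl => ?_
  exact (measurable_of_finite fun x => if x = j then 1 else 0).comp
    (measurable_hist hX (by simp at hl; omega))

/-- Every function of the current state and of the current occupation numbers is measurable with
respect to the past. -/
theorem measurable_state (hZ : ∀ n j ω, Z n j ω =
    ((Finset.range (n + 1)).filter fun l => X l ω = j).card) (n : ℕ)
    (φ : Fin N × (Fin N → ℕ) → ℝ) :
    Measurable[hist X hX n] fun ω => φ (X n ω, fun j => Z n j ω) := by
  refine (measurable_of_countable φ).comp ?_
  refine Measurable.prodMk (measurable_hist hX le_rfl) ?_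
  exact @measurable_pi_lambda _ _ _ (hist X hX n) _ _ fun j => measurable_count hX hZ n j

variable (μ : Measure Ω) [IsProbabilityMeasure μ]

/-- Past-measurable combinations of the centred transition indicators are martingale
increments. -/
theorem condExp_increment {p : ℕ → Fin N → Ω → ℝ}
    (hp : ∀ n j, μ[(fun ω => if X (n + 1) ω = j then (1 : ℝ) else 0) | hist X hX n] =ᵐ[μ] p n j)
    (hpm : ∀ n j, StronglyMeasurable[hist X hX n] (p n j))
    (n : ℕ) {φ : Fin N → Ω → ℝ} (hφ : ∀ j, StronglyMeasurable[hist X hX n] (φ j)) {C : ℝ}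
    (hC : ∀ j ω, |φ j ω| ≤ C) :
    μ[(fun ω => ∑ j, φ j ω * ((if X (n + 1) ω = j then 1 else 0) - p n j ω)) | hist X hX n]
      =ᵐ[μ] 0 := by
  have hI : ∀ j, Integrable (fun ω => if X (n + 1) ω = j then (1 : ℝ) else 0) μ := fun j => by
    refine Integrable.of_bound (C := 1)
      ((measurable_of_finite fun x => if x = j then (1 : ℝ) else 0).comp
        (hX (n + 1))).aestronglyMeasurable (ae_of_all _ fun ω => ?_)
    split_ifs <;> simp
  have hpI : ∀ j, Integrable (p n j) μ := fun j => (integrable_congr (hp n j)).1 integrable_condExp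
  have hdI : ∀ j, Integrable ((fun ω => if X (n + 1) ω = j then (1 : ℝ) else 0) - p n j) μ :=
    fun j => (hI j).sub (hpI j)
  have hm : ∀ j, AEStronglyMeasurable (φ j) μ := fun j =>
    ((hφ j).mono ((hist X hX).le n)).aestronglyMeasurable
  have hprod : ∀ j, Integrable
      (φ j * ((fun ω => if X (n + 1) ω = j then (1 : ℝ) else 0) - p n j)) μ := fun j =>
    (hdI j).bdd_mul (hm j) (ae_of_all _ fun ω => hC j ω)
  have h0 : ∀ j, μ[φ j * ((fun ω => if X (n + 1) ω = j then (1 : ℝ) else 0) - p n j) |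
      hist X hX n] =ᵐ[μ] 0 := fun j => by
    refine (condExp_mul_of_stronglyMeasurable_left (hφ j) (hprod j) (hdI j)).trans ?_
    filter_upwards [condExp_sub (hI j) (hpI j) (hist X hX n), hp n j] with ω h1 h2
    rw [Pi.mul_apply, h1, Pi.sub_apply, h2,
      condExp_of_stronglyMeasurable ((hist X hX).le n) (hpm n j) (hpI j)]
    simp
  have hsum : (fun ω => ∑ j, φ j ω * ((if X (n + 1) ω = j then 1 else 0) - p n j ω)) =
      ∑ j, φ j * ((fun ω => if X (n + 1) ω = j then (1 : ℝ) else 0) - p n j) := by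
    funext ω
    simp [Finset.sum_apply]
  rw [hsum]
  refine (condExp_finsetSum (fun j _ => hprod j) _).trans ?_
  have hall := ae_all_iff.2 h0
  filter_upwards [hall] with ω hω
  rw [Finset.sum_apply]
  exact Finset.sum_eq_zero fun j _ => hω j

/-- A path all of whose transitions are possible is followed with positive probability for any
finite time. -/
theorem cylinder_pos {p : ℕ → Fin N → Ω → ℝ}
    (hp : ∀ n j, μ[(fun ω => if X (n + 1) ω = j then (1 : ℝ) else 0) | hist X hX n] =ᵐ[μ] p n j)
    {y : ℕ → Fin N} (h0 : 0 < μ {ω | X 0 ω = y 0})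
    (hpos : ∀ n ω, X n ω = y n → 0 < p n (y (n + 1)) ω) (m : ℕ) :
    0 < μ {ω | ∀ l ≤ m, X l ω = y l} := by
  induction m with
  | zero => simpa using h0
  | succ m ih =>
    set G := {ω | ∀ l ≤ m, X l ω = y l} with hG
    have hGm : MeasurableSet[hist X hX m] G := by
      have : G = ⋂ l ∈ Finset.range (m + 1), X l ⁻¹' {y l} := by
        ext ω; simp [hG]
      rw [this]
      refine Finset.measurableSet_biInter _ fun l hl => ?_
      exact measurable_hist hX (by simp at hl; omega) (measurableSet_singleton _)
    have hGm' := (hist X hX).le m _ hGm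
    rw [pos_iff_ne_zero]
    intro hz
    have hI : Integrable (fun ω => if X (m + 1) ω = y (m + 1) then (1 : ℝ) else 0) μ := by
      refine Integrable.of_bound (C := 1)
        ((measurable_of_finite fun x => if x = y (m + 1) then (1 : ℝ) else 0).comp
          (hX (m + 1))).aestronglyMeasurable (ae_of_all _ fun ω => ?_)
      split_ifs <;> simp
    have h1 := setIntegral_condExp ((hist X hX).le m) hI hGm
    have h2 : ∫ ω in G, (if X (m + 1) ω = y (m + 1) then (1 : ℝ) else 0) ∂μ = 0 := by
      refine setIntegral_eq_zero_of_ae_eq_zero ?_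
      have : ∀ᵐ ω ∂μ, ω ∉ {ω | ∀ l ≤ m + 1, X l ω = y l} := measure_eq_zero_iff_ae_notMem.1 hz
      filter_upwards [this] with ω hω hωG
      rw [if_neg]
      intro hc
      refine hω fun l hl => ?_
      rcases Nat.le_succ_iff.1 hl with h | h
      · exact hωG l h
      · rw [h]; exact hc
    rw [h2] at h1
    have h3 : ∫ ω in G, p m (y (m + 1)) ω ∂μ = 0 := by
      rw [← h1]
      exact integral_congr_ae (EventuallyEq.symm (ae_restrict_of_ae (hp m (y (m + 1)))))
    have hpI : Integrable (p m (y (m + 1))) μ :=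
      (integrable_congr (hp m (y (m + 1)))).1 integrable_condExp
    have h4 : 0 < ∫ ω in G, p m (y (m + 1)) ω ∂μ := by
      rw [setIntegral_pos_iff_support_of_nonneg_ae]
      · refine ih.trans_le (measure_mono fun ω hω => ⟨?_, hω⟩)
        exact (hpos m ω (hω m le_rfl)).ne'
      · filter_upwards [ae_restrict_mem hGm'] with ω hω
        exact (hpos m ω (hω m le_rfl)).le
      · exact hpI.integrableOn
    exact h4.ne' h3

end Walk

/-! ### Pathwise convergence -/

section Pathwise

variable {N : ℕ} {A : Matrix (Fin N) (Fin N) ℝ} {α : ℝ}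

/-- `IsPoissonBound A α w C ρ`: on the ball of radius `ρ` around `w` the fundamental matrix solves
the Poisson equation, is bounded by `C` together with its image under the kernel, and the latter
is `C`-Lipschitz. -/
def IsPoissonBound (A : Matrix (Fin N) (Fin N) ℝ) (α : ℝ) (w : Fin N → ℝ) (C ρ : ℝ) : Prop :=
  ∀ u ∈ Metric.ball w ρ,
    (∀ x i, (if x = i then 1 else 0) - piFun A α u i =
      fund A α u x i - (kern A α u * fund A α u) x i) ∧
    (∀ x i, |fund A α u x i| ≤ C) ∧ (∀ x i, |(kern A α u * fund A α u) x i| ≤ C) ∧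
    ∀ v ∈ Metric.ball w ρ, ∀ x i,
      |(kern A α u * fund A α u) x i - (kern A α v * fund A α v) x i| ≤ C * ‖u - v‖

/-- The Poisson equation turns the Markovian noise `γ_k (1_{X_{k+1} = i} - π_i(V_k))` into a
martingale increment plus a telescoping term, up to an error of order `γ_k²`. -/
theorem noise_decomp {w : Fin N → ℝ} {C ρ : ℝ} (hP : IsPoissonBound A α w C ρ) (hC : 0 < C)
    {u v : Fin N → ℝ} (hu : u ∈ Metric.ball w ρ) (hv : v ∈ Metric.ball w ρ) (k : ℕ)
    (huv : ‖v - u‖ ≤ gam N k) (x z i : Fin N) :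
    |gam N k * ((if z = i then 1 else 0) - piFun A α u i) -
      gam N k * (fund A α u z i - (kern A α u * fund A α u) x i) -
      gam N k * (kern A α u * fund A α u) x i +
      gam N (k + 1) * (kern A α v * fund A α v) z i| ≤ 2 * C * gam N k ^ 2 := by
  rw [(hP u hu).1 z i]
  have h1 := (hP v hv).2.2.2 u hu z i
  have h2 := (hP v hv).2.2.1 z i
  have g0 := gam_pos N k
  have g1 := gam_sub_succ N k
  have g2 := gam_antitone_succ N k
  set q := (kern A α u * fund A α u) z i
  set q' := (kern A α v * fund A α v) z i
  have e : gam N k * (fund A α u z i - q) -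
      gam N k * (fund A α u z i - (kern A α u * fund A α u) x i) -
      gam N k * (kern A α u * fund A α u) x i + gam N (k + 1) * q' =
      gam N k * (q' - q) - (gam N k - gam N (k + 1)) * q' := by ring
  rw [e]
  have a1 : |gam N k * (q' - q)| ≤ gam N k * (C * gam N k) := by
    rw [abs_mul, abs_of_pos g0]
    gcongr
    exact h1.trans (by gcongr)
  have a2 : |(gam N k - gam N (k + 1)) * q'| ≤ gam N k ^ 2 * C := by
    rw [abs_mul, abs_of_nonneg (by linarith)]
    gcongr
  have a3 := abs_sub (gam N k * (q' - q)) ((gam N k - gam N (k + 1)) * q')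
  nlinarith

/-- Pathwise convergence: if the recursion starts close to `w` and the martingale part of the
noise stays small and converges, then the occupation vector converges to `w`. -/
theorem path_converges {w : Fin N → ℝ} {C ρ : ℝ} (hP : IsPoissonBound A α w C ρ) (hC : 0 < C)
    {p : Seminorm ℝ (Fin N → ℝ)} {Cp ε r : ℝ}
    (hatt : Attracting p Cp ε r ρ fun x => Ffield A α (w + x))
    {X : ℕ → Fin N} {V : ℕ → Fin N → ℝ}
    (hV : ∀ n i, V (n + 1) i = V n i + gam N n * ((if X (n + 1) = i then 1 else 0) - V n i))
    (hjump : ∀ n, ‖V (n + 1) - V n‖ ≤ gam N n) {m : ℕ} {η : ℝ} (hη0 : 0 < η)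
    (hη : (2 / (1 - r) + 1) * η ≤ ρ / 4) (hmε : gam N m ≤ ε) (hmρ : gam N m < ρ / 2)
    (hmη : Cp * (6 * C * gam N m) ≤ η / 2) (hstart : Cp * ‖V m - w‖ ≤ ρ / 4)
    {d : Fin N → ℕ → ℝ} (hd0 : ∀ i, ∀ k < m, d i k = 0)
    (hd : ∀ k ≥ m, (∀ j ∈ Finset.Icc m k, V j ∈ Metric.ball w ρ) → ∀ i,
      d i k = gam N k * (fund A α (V k) (X (k + 1)) i -
        (kern A α (V k) * fund A α (V k)) (X k) i))
    (hdb : ∀ i n, |∑ k ∈ Finset.range n, d i k| ≤ η / (2 * Cp))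
    (hdc : ∀ i, ∃ l, Tendsto (fun n => ∑ k ∈ Finset.range n, d i k) atTop (nhds l)) :
    Tendsto V atTop (nhds w) := by
  have hCp := hatt.C_pos
  have hmono : ∀ k ≥ m, gam N k ≤ gam N m := fun k hk =>
    antitone_nat_of_succ_le (gam_antitone_succ N) hk
  have hball : ∀ k, ‖V k - w‖ < ρ ↔ V k ∈ Metric.ball w ρ := fun k => by
    rw [mem_ball_iff_norm]
  set ζ : Fin N → ℕ → ℝ := fun i k =>
    gam N k * ((if X (k + 1) = i then 1 else 0) - piFun A α (V k) i) with hζ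
  set a : Fin N → ℕ → ℝ := fun i k =>
    gam N k * (kern A α (V k) * fund A α (V k)) (X k) i with ha
  set T : ℕ → Fin N → ℝ := fun k i => ∑ j ∈ Finset.Ico m k, ζ i j with hT
  have hrec : ∀ k ≥ m, V (k + 1) - w = (V k - w) + gam N k • Ffield A α (w + (V k - w)) +
      (T (k + 1) - T k) := by
    intro k hk
    ext i
    rw [add_sub_cancel]
    simp only [hT, Pi.add_apply, Pi.sub_apply, Pi.smul_apply, smul_eq_mul, Ffield,
      Finset.sum_Ico_succ_top hk, add_sub_cancel_left, hζ, hV k i]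
    ring
  have he : ∀ i k, (∀ j ∈ Finset.Icc m k, V j ∈ Metric.ball w ρ) → m ≤ k →
      V (k + 1) ∈ Metric.ball w ρ →
      |ζ i k - d i k - a i k + a i (k + 1)| ≤ 2 * C * gam N k ^ 2 := by
    intro i k hk hmk hk1
    rw [hd k hmk hk i]
    exact noise_decomp hP hC (hk k (by simp [hmk])) hk1 k (hjump k) (X k) (X (k + 1)) i
  have ha' : ∀ i k, V k ∈ Metric.ball w ρ → |a i k| ≤ C * gam N k := by
    intro i k hk
    rw [ha]
    simp only
    rw [abs_mul, abs_of_pos (gam_pos N k), mul_comm]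
    exact mul_le_mul_of_nonneg_right ((hP _ hk).2.2.1 _ _) (gam_pos N k).le
  have hIco : ∀ i k, m ≤ k → ∑ j ∈ Finset.Ico m k, d i j = ∑ j ∈ Finset.range k, d i j := by
    intro i k hk
    rw [Finset.sum_Ico_eq_sub _ hk, Finset.sum_eq_zero (s := Finset.range m), sub_zero]
    exact fun j hj => hd0 i j (Finset.mem_range.1 hj)
  have hin : ∀ k ≥ m, ‖V k - w‖ < ρ := by
    refine hatt.stays (x := fun k => V k - w) (T := T) (m := m)
      (fun k hk => (hmono k hk).trans hmε) hrec ?_ hη hη0 ?_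
      ((hatt.le_norm _).trans hstart) ?_
    · intro k hk
      simp only [sub_sub_sub_cancel_right]
      exact ((hjump k).trans (hmono k hk)).trans_lt hmρ
    · ext i; simp [hT]
    · intro k hk hb
      have hb' : ∀ j ∈ Finset.Icc m k, V j ∈ Metric.ball w ρ := fun j hj =>
        (hball j).1 (hb j hj)
      have hTk : ‖T k‖ ≤ η / (2 * Cp) + 6 * C * gam N m := by
        have g0 := gam_pos N m
        rw [pi_norm_le_iff_of_nonneg (by positivity)]
        intro i
        have h1 := abs_noise_le (ζ := ζ i) (d := d i) (a := a i) hC.le hk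
          (fun j hj => ?_) (fun j hj => ha' i j (hb' j hj))
        · rw [hIco i k hk] at h1
          exact h1.trans (by linarith [hdb i k])
        · rw [Finset.mem_Ico] at hj
          refine he i j (fun l hl => hb' l ?_) hj.1 (hb' _ ?_)
          · rw [Finset.mem_Icc] at *; omega
          · rw [Finset.mem_Icc]; omega
      refine (hatt.le_norm _).trans ((mul_le_mul_of_nonneg_left hTk hCp.le).trans ?_)
      rw [mul_add]
      have : Cp * (η / (2 * Cp)) = η / 2 := by field_simp
      linarith
  have hinb : ∀ k ≥ m, V k ∈ Metric.ball w ρ := fun k hk => (hball k).1 (hin k hk)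
  have hTlim : ∀ i, ∃ l, Tendsto (fun k => ∑ j ∈ Finset.Ico m k, ζ i j) atTop (nhds l) :=
    fun i => noise_tendsto (d := d i) (a := a i) (N := N) (C := C)
      (fun j hj => he i j (fun l hl => hinb l (Finset.mem_Icc.1 hl).1) hj (hinb _ (by omega)))
      (fun j hj => ha' i j (hinb j hj)) (hdc i)
  choose L hL using hTlim
  have hlim := hatt.tendsto_zero (x := fun k => V k - w) (T := T) (m := m)
    (fun k hk => (hmono k hk).trans hmε) hrec hin (tendsto_pi_nhds.2 hL)
  simpa using hlim.add_const w

end Pathwise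

/-! ### Stopped martingale increments and conclusion -/

section Equilibrium

variable {N : ℕ} {A : Matrix (Fin N) (Fin N) ℝ} {α : ℝ} {w : Fin N → ℝ}

theorem Hfun_ne_zero (hw : w ∈ simplexD A) (heq : Ffield A α w = 0) : Hfun A α w ≠ 0 := by
  intro h
  have h0 : ∀ i, w i = 0 := fun i => by
    have := congrFun heq i
    simp only [Ffield, piFun, h, div_zero, Pi.zero_apply] at this
    linarith
  have := hw.2.1
  simp [h0] at this

/-- Points of the domain have no vanishing row normalisation: this uses the bound `3/4` on the
coordinates without self-interaction. -/
theorem den_pos (hnonneg : ∀ i j, 0 ≤ A i j) (hoffdiag : ∀ i j, i ≠ j → 0 < A i j)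
    (hw : w ∈ simplexD A) (i : Fin N) : 0 < den A α w i := by
  have hterm : ∀ k ∈ Finset.univ, 0 ≤ A i k * w k ^ α := fun k _ =>
    mul_nonneg (hnonneg i k) (Real.rpow_nonneg (hw.1 k) α)
  suffices H : ∃ k, 0 < A i k ∧ 0 < w k by
    obtain ⟨k, h1, h2⟩ := H
    exact (mul_pos h1 (Real.rpow_pos_of_pos h2 α)).trans_le
      (Finset.single_le_sum hterm (Finset.mem_univ k))
  by_contra! hcon
  have hoff : ∀ k, k ≠ i → w k = 0 := fun k hk =>
    le_antisymm (hcon k (hoffdiag i k hk.symm)) (hw.1 k)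
  have hwi : w i = 1 := by
    rw [← hw.2.1]
    exact (Finset.sum_eq_single i (fun k _ hk => hoff k hk) (by simp)).symm
  rcases (hnonneg i i).eq_or_lt with h | h
  · have := hw.2.2 i h.symm
    rw [hwi] at this
    norm_num at this
  · have := hcon i h
    rw [hwi] at this
    norm_num at this

/-- In the transversal direction the Jacobian has eigenvalue `-1`, so stability on the tangent
space of the simplex is stability on the whole space. -/
theorem stable_full (hα : 1 < α) (hH : Hfun A α w ≠ 0) (hst : IsLinStable A α w) (lam : ℂ)
    (x : Fin N → ℂ) (hx : x ≠ 0)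
    (hlam : ((DFmat A α w).map (fun r : ℝ => (r : ℂ))) *ᵥ x = lam • x) : lam.re < 0 := by
  by_cases hs : ∑ i, x i = 0
  · exact hst lam x hx hs hlam
  · have h1 : ∑ i, (((DFmat A α w).map (fun r : ℝ => (r : ℂ))) *ᵥ x) i = - ∑ i, x i := by
      simp only [Matrix.mulVec, dotProduct, Matrix.map_apply]
      rw [Finset.sum_comm, ← Finset.sum_neg_distrib]
      refine Finset.sum_congr rfl fun j _ => ?_
      rw [← Finset.sum_mul, ← Complex.ofReal_sum, sum_DFmat hα hH]
      simp
    rw [hlam] at h1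
    simp only [Pi.smul_apply, smul_eq_mul, ← Finset.mul_sum] at h1
    have h2 : lam = -1 := by
      apply mul_right_cancel₀ hs
      rw [h1]; ring
    simp [h2]

end Equilibrium

section Increments

variable {N : ℕ} {Ω : Type*} {A : Matrix (Fin N) (Fin N) ℝ} {α : ℝ}
  {X : ℕ → Ω → Fin N} {Z : ℕ → Fin N → Ω → ℕ}

/-- The event that the process follows `y` up to time `m` and that its occupation vector stays in
the ball of radius `ρ` around `w` between the times `m` and `k`; empty for `k < m`. -/
def good (X : ℕ → Ω → Fin N) (Z : ℕ → Fin N → Ω → ℕ) (y : ℕ → Fin N) (w : Fin N → ℝ) (ρ : ℝ)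
    (m k : ℕ) : Set Ω :=
  {ω | (∀ l ≤ m, X l ω = y l) ∧ m ≤ k ∧ ∀ j ∈ Finset.Icc m k, occ Z j ω ∈ Metric.ball w ρ}

/-- The martingale increment in the Poisson decomposition of the noise, in coordinate `i`, stopped
when the process leaves the good event. -/
noncomputable def incr (A : Matrix (Fin N) (Fin N) ℝ) (α : ℝ) (X : ℕ → Ω → Fin N)
    (Z : ℕ → Fin N → Ω → ℕ) (y : ℕ → Fin N) (w : Fin N → ℝ) (ρ : ℝ) (m : ℕ) (i : Fin N) (k : ℕ)
    (ω : Ω) : ℝ :=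
  ∑ j, (good X Z y w ρ m k).indicator (fun ω => gam N k * fund A α (occ Z k ω) j i) ω *
    ((if X (k + 1) ω = j then 1 else 0) - kern A α (occ Z k ω) (X k ω) j)

variable {y : ℕ → Fin N} {w : Fin N → ℝ} {ρ : ℝ} {m : ℕ}

theorem incr_of_mem {i : Fin N} {k : ℕ} {ω : Ω} (h : ω ∈ good X Z y w ρ m k) :
    incr A α X Z y w ρ m i k ω = gam N k * (fund A α (occ Z k ω) (X (k + 1) ω) i -
      (kern A α (occ Z k ω) * fund A α (occ Z k ω)) (X k ω) i) := by
  unfold incr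
  simp only [Set.indicator_of_mem h]
  rw [Matrix.mul_apply, mul_sub, Finset.mul_sum]
  simp_rw [mul_sub, Finset.sum_sub_distrib]
  congr 1
  · simp
  · exact Finset.sum_congr rfl fun j _ => by ring

theorem incr_of_notMem {i : Fin N} {k : ℕ} {ω : Ω} (h : ω ∉ good X Z y w ρ m k) :
    incr A α X Z y w ρ m i k ω = 0 := by
  unfold incr
  simp [Set.indicator_of_notMem h]

theorem abs_incr_le {C : ℝ} (hP : IsPoissonBound A α w C ρ) (hC : 0 < C) (i : Fin N) (k : ℕ) (ω : Ω) :
    |incr A α X Z y w ρ m i k ω| ≤ (if m ≤ k then 2 * C * gam N k else 0) *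
      {ω | ∀ l ≤ m, X l ω = y l}.indicator 1 ω := by
  by_cases h : ω ∈ good X Z y w ρ m k
  · have hG : ω ∈ {ω | ∀ l ≤ m, X l ω = y l} := h.1
    have hb := h.2.2 k (by simp [h.2.1])
    rw [incr_of_mem h, if_pos h.2.1, Set.indicator_of_mem hG, abs_mul, abs_of_pos (gam_pos N k)]
    have h1 := abs_sub (fund A α (occ Z k ω) (X (k + 1) ω) i)
      ((kern A α (occ Z k ω) * fund A α (occ Z k ω)) (X k ω) i)
    have h2 := (hP _ hb).2.1 (X (k + 1) ω) i
    have h3 := (hP _ hb).2.2.1 (X k ω) i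
    have g0 := gam_pos N k
    rw [Pi.one_apply]
    nlinarith
  · rw [incr_of_notMem h, abs_zero]
    by_cases hk : m ≤ k
    · by_cases hG : ω ∈ {ω | ∀ l ≤ m, X l ω = y l}
      · rw [if_pos hk, Set.indicator_of_mem hG, Pi.one_apply, mul_one]
        have := gam_pos N k
        positivity
      · simp [Set.indicator_of_notMem hG]
    · simp [hk]

variable [mΩ : MeasurableSpace Ω] (hX : ∀ n, Measurable (X n))

theorem measurable_occ (hZ : ∀ n j ω, Z n j ω =
    ((Finset.range (n + 1)).filter fun l => X l ω = j).card) (k : ℕ) : Measurable[hist X hX k] (occ Z k) :=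
  @measurable_pi_lambda _ _ _ (hist X hX k) _ _ fun i =>
    measurable_state hX hZ k fun q => (1 + (q.2 i : ℝ)) / ((k : ℝ) + 1 + N)

theorem measurableSet_good (hZ : ∀ n j ω, Z n j ω =
    ((Finset.range (n + 1)).filter fun l => X l ω = j).card) (k : ℕ) : MeasurableSet[hist X hX k] (good X Z y w ρ m k) := by
  by_cases hk : m ≤ k
  · have : good X Z y w ρ m k = (⋂ l ∈ Finset.range (m + 1), X l ⁻¹' {y l}) ∩
        ⋂ j ∈ Finset.Icc m k, occ Z j ⁻¹' Metric.ball w ρ := by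
      ext ω
      simp [good, hk]
    rw [this]
    refine MeasurableSet.inter (Finset.measurableSet_biInter _ fun l hl => ?_)
      (Finset.measurableSet_biInter _ fun j hj => ?_)
    · exact measurable_hist hX (by simp at hl; omega) (measurableSet_singleton _)
    · exact (hist X hX).mono (Finset.mem_Icc.1 hj).2 _
        (measurable_occ hX hZ j measurableSet_ball)
  · have : good X Z y w ρ m k = ∅ := by
      ext ω
      simp [good, hk]
    rw [this]
    exact @MeasurableSet.empty _ (hist X hX k)

theorem stronglyMeasurable_kern (hZ : ∀ n j ω, Z n j ω =
    ((Finset.range (n + 1)).filter fun l => X l ω = j).card) (k : ℕ) (j : Fin N) :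
    StronglyMeasurable[hist X hX k] fun ω => kern A α (occ Z k ω) (X k ω) j :=
  (measurable_state hX hZ k fun q => kern A α (fun i => (1 + (q.2 i : ℝ)) / ((k : ℝ) + 1 + N))
    q.1 j).stronglyMeasurable

theorem stronglyMeasurable_coeff (hZ : ∀ n j ω, Z n j ω =
    ((Finset.range (n + 1)).filter fun l => X l ω = j).card) (k : ℕ) (j i : Fin N) : StronglyMeasurable[hist X hX k]
    ((good X Z y w ρ m k).indicator (fun ω => gam N k * fund A α (occ Z k ω) j i)) :=
  (measurable_state hX hZ k fun q => gam N k *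
    fund A α (fun i => (1 + (q.2 i : ℝ)) / ((k : ℝ) + 1 + N)) j i).stronglyMeasurable.indicator
      (measurableSet_good hX hZ k)

theorem stronglyMeasurable_incr (hZ : ∀ n j ω, Z n j ω =
    ((Finset.range (n + 1)).filter fun l => X l ω = j).card) (k : ℕ) (i : Fin N) :
    StronglyMeasurable[hist X hX (k + 1)] (incr A α X Z y w ρ m i k) := by
  have hle : hist X hX k ≤ hist X hX (k + 1) := (hist X hX).mono (Nat.le_succ k)
  unfold incr
  refine Finset.stronglyMeasurable_fun_sum _ fun j _ => ?_
  refine ((stronglyMeasurable_coeff hX hZ k j i).mono hle).mul (StronglyMeasurable.sub ?_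
    ((stronglyMeasurable_kern hX hZ k j).mono hle))
  exact ((measurable_of_finite fun x => if x = j then (1 : ℝ) else 0).comp
    (measurable_hist hX le_rfl)).stronglyMeasurable

end Increments


section Main

variable {N : ℕ} {Ω : Type*} {A : Matrix (Fin N) (Fin N) ℝ} {α : ℝ}
  {X : ℕ → Ω → Fin N} {Z : ℕ → Fin N → Ω → ℕ}

/-- The additional initial visits counted in `occ` do not change the limit. -/
theorem tendsto_of_occ {ω : Ω} {w : Fin N → ℝ}
    (h : Tendsto (fun n => occ Z n ω) atTop (nhds w)) :
    Tendsto (fun n : ℕ => fun i => (Z n i ω : ℝ) / ((n : ℝ) + 1)) atTop (nhds w) := by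
  rw [tendsto_pi_nhds] at *
  intro i
  have h1 : Tendsto (fun n : ℕ => 1 / ((n : ℝ) + 1)) atTop (nhds 0) :=
    tendsto_one_div_add_atTop_nhds_zero_nat
  have h2 := ((h i).mul ((h1.const_mul (N : ℝ)).const_add 1)).sub h1
  simp only [mul_zero, add_zero, mul_one, sub_zero] at h2
  refine h2.congr fun n => ?_
  unfold occ
  have e1 : (n : ℝ) + 1 ≠ 0 := by positivity
  have e2 : (n : ℝ) + 1 + N ≠ 0 := by positivity
  field_simp
  ring

variable [mΩ : MeasurableSpace Ω]

/-- The martingale parts of the noise converge, and they exceed a level `η` with a probability that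
is a small multiple, of order `√γ_m / η`, of the probability of the initial cylinder. -/
theorem incr_control (μ : Measure Ω) [IsProbabilityMeasure μ] (hX : ∀ n, Measurable (X n))
    (hZ : ∀ n j ω, Z n j ω = ((Finset.range (n + 1)).filter fun l => X l ω = j).card)
    (hp : ∀ n j, μ[(fun ω => if X (n + 1) ω = j then (1 : ℝ) else 0) | hist X hX n] =ᵐ[μ]
      fun ω => kern A α (occ Z n ω) (X n ω) j)
    {y : ℕ → Fin N} {w : Fin N → ℝ} {C ρ : ℝ} (hP : IsPoissonBound A α w C ρ) (hC : 0 < C)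
    (m : ℕ) (i : Fin N) :
    (∀ᵐ ω ∂μ, ∃ l, Tendsto (fun n => ∑ k ∈ Finset.range n, incr A α X Z y w ρ m i k ω)
      atTop (nhds l)) ∧
    ∀ η : ℝ, 0 < η →
      μ {ω | ∃ n, η ≤ |∑ k ∈ Finset.range n, incr A α X Z y w ρ m i k ω|} ≤
        ENNReal.ofReal (√(8 * C ^ 2 * gam N m) / η) * μ {ω | ∀ l ≤ m, X l ω = y l} := by
  have g0 := gam_pos N m
  have hG : MeasurableSet {ω | ∀ l ≤ m, X l ω = y l} := by
    have : {ω | ∀ l ≤ m, X l ω = y l} = ⋂ l ∈ Finset.range (m + 1), X l ⁻¹' {y l} := by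
      ext ω; simp
    rw [this]
    exact Finset.measurableSet_biInter _ fun l hl => hX l (measurableSet_singleton _)
  refine martingale_control (𝒢 := hist X hX) (c := fun k => if m ≤ k then 2 * C * gam N k else 0)
    hG (fun k => ?_) (fun k => stronglyMeasurable_incr hX hZ k i)
    (fun k ω => abs_incr_le hP hC i k ω) (fun k => ?_) (by positivity) (fun n => ?_)
  · have := gam_pos N k
    split_ifs <;> positivity
  · refine condExp_increment hX μ hp (fun n j => stronglyMeasurable_kern hX hZ n j) k
      (fun j => stronglyMeasurable_coeff hX hZ k j i) (C := gam N k * C) fun j ω => ?_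
    have gk := gam_pos N k
    by_cases h : ω ∈ good X Z y w ρ m k
    · rw [Set.indicator_of_mem h, abs_mul, abs_of_pos gk]
      exact mul_le_mul_of_nonneg_left
        ((hP _ (h.2.2 k (by simp [h.2.1]))).2.1 j i) gk.le
    · rw [Set.indicator_of_notMem h, abs_zero]
      positivity
  · rw [Real.sq_sqrt (by positivity)]
    have h1 : ∑ k ∈ Finset.range n, (if m ≤ k then 2 * C * gam N k else 0) ^ 2 =
        ∑ k ∈ Finset.Ico m n, 4 * C ^ 2 * gam N k ^ 2 := by
      have h2 : Finset.Ico m n = (Finset.range n).filter (m ≤ ·) := by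
        ext k; simp [and_comm]
      rw [h2, Finset.sum_filter]
      refine Finset.sum_congr rfl fun k _ => ?_
      split_ifs <;> ring
    rw [h1, ← Finset.mul_sum]
    have := mul_le_mul_of_nonneg_left (sum_gam_sq_le N m n) (show 0 ≤ 4 * C ^ 2 by positivity)
    linarith

theorem exists_initial_state (μ : Measure Ω) [IsProbabilityMeasure μ] (X0 : Ω → Fin N) :
    ∃ x, 0 < μ {ω | X0 ω = x} := by
  by_contra! h
  have h1 : (Set.univ : Set Ω) = ⋃ x, {ω | X0 ω = x} := by
    ext ω; simp
  have h2 : μ Set.univ = 0 := by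
    rw [h1, measure_iUnion_null_iff]
    exact fun x => le_antisymm (h x) zero_le
  simp at h2

end Main

end VRRW

open VRRW

/-- If `v*` is a linearly stable equilibrium, then the probability that
the empirical occupation measure `v_n` converges to `v*` is positive. -/
theorem positive_probability_convergence_to_stable_equilibrium
    {N : ℕ} (hN : 2 ≤ N) {α : ℝ} (hα : 1 < α)
    (A : Matrix (Fin N) (Fin N) ℝ)
    (hsymm : ∀ i j, A i j = A j i)
    (hnonneg : ∀ i j, 0 ≤ A i j)
    (hoffdiag : ∀ i j, i ≠ j → 0 < A i j)
    (hrow : ∀ i i', ∑ j, A i j = ∑ j, A i' j)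
    {Ω : Type*} [MeasurableSpace Ω] (μ : Measure Ω) [IsProbabilityMeasure μ]
    (X : ℕ → Ω → Fin N) (hX : ∀ n, Measurable (X n))
    (Z : ℕ → Fin N → Ω → ℕ)
    (hZ : ∀ n j ω, Z n j ω = ((Finset.range (n + 1)).filter fun ℓ => X ℓ ω = j).card)
    (hcond : ∀ (n : ℕ) (j : Fin N),
      μ[(fun ω => if X (n + 1) ω = j then (1 : ℝ) else 0) |
          ⨆ k ∈ Finset.range (n + 1), MeasurableSpace.comap (X k) ⊤] =ᵐ[μ]
        fun ω => A (X n ω) j * (1 + (Z n j ω : ℝ)) ^ α /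
          ∑ k : Fin N, A (X n ω) k * (1 + (Z n k ω : ℝ)) ^ α)
    (vstar : Fin N → ℝ) (hvstar : vstar ∈ simplexD A)
    (heq : Ffield A α vstar = 0) (hst : IsLinStable A α vstar) :
    0 < μ {ω | Tendsto (fun n : ℕ => fun i => (Z n i ω : ℝ) / ((n : ℝ) + 1)) atTop
        (nhds vstar)} := by
  have : NeZero N := ⟨by omega⟩
  have hH := Hfun_ne_zero hvstar heq
  have hden := den_pos (α := α) hnonneg hoffdiag hvstar
  have hden' : ∀ i, den A α vstar i ≠ 0 := fun i => (hden i).ne'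
  obtain ⟨s, hs⟩ : ∃ s, 0 < vstar s := by
    by_contra! h
    have := Finset.sum_nonpos fun i (_ : i ∈ Finset.univ) => h i
    rw [hvstar.2.1] at this
    norm_num at this
  have hdet := det_ne_zero (α := α) hsymm hnonneg hoffdiag hvstar.1 s hs hden hH
  obtain ⟨p, Cp, ε, r, hatt⟩ := exists_attracting (stable_full hα hH hst) heq
    (hasFDerivAt_Ffield hα hH)
  obtain ⟨C, hC, hpoi⟩ := exists_poisson hα hsymm hden' hH hdet
  obtain ⟨ρ, ⟨hatt, hP⟩, hρ⟩ :=
    ((hatt.and hpoi).and (eventually_mem_nhdsWithin (a := (0 : ℝ)) (s := Ioi 0))).exists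
  replace hP : IsPoissonBound A α vstar C ρ := hP
  rw [Set.mem_Ioi] at hρ
  have hCp := hatt.C_pos
  have hr : 0 < 1 - r := by linarith [hatt.r_lt]
  have hpi : ∀ i, piFun A α vstar i = vstar i := fun i => by
    have := congrFun heq i
    simp only [Ffield, Pi.zero_apply] at this
    linarith
  have hkern : ∀ x j, 0 ≤ kern A α vstar x j := fun x j =>
    div_nonneg (mul_nonneg (hnonneg x j) (Real.rpow_nonneg (hvstar.1 j) α)) (hden x).le
  obtain ⟨x0, hx0⟩ := exists_initial_state μ (X 0)
  -- A path realising the equilibrium frequencies, followed up to a large time `m`.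
  obtain ⟨y, hy0, hyK, hylim⟩ := exists_path hkern (fun x => sum_kern (hden' x))
    (g := fund A α vstar) (h := kern A α vstar * fund A α vstar) (fun x i => rfl)
    (w := vstar) (fun x i => by
      rw [← hpi i]
      exact (hP vstar (Metric.mem_ball_self hρ)).1 x i) x0
  set η : ℝ := ρ / 4 / (2 / (1 - r) + 1) with hη
  have hη0 : 0 < η := by positivity
  have hη1 : (2 / (1 - r) + 1) * η ≤ ρ / 4 := by
    rw [hη, mul_div_cancel₀]
    positivity
  have hγ := gam_tendsto N
  have l1 : ∀ᶠ m in atTop, gam N m ≤ ε := hγ.eventually_le_const hatt.eps_pos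
  have l2 : ∀ᶠ m in atTop, gam N m < ρ / 2 := hγ.eventually_lt_const (by linarith)
  have l3 : ∀ᶠ m in atTop, Cp * (6 * C * gam N m) ≤ η / 2 := by
    have := (hγ.const_mul (6 * C)).const_mul Cp
    rw [mul_zero, mul_zero] at this
    exact this.eventually_le_const (by positivity)
  have l4 : ∀ᶠ m in atTop, N * (√(8 * C ^ 2 * gam N m) / (η / (2 * Cp))) ≤ 1 / 2 := by
    have := (((hγ.const_mul (8 * C ^ 2)).sqrt).div_const (η / (2 * Cp))).const_mul (N : ℝ)
    rw [mul_zero, Real.sqrt_zero, zero_div, mul_zero] at this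
    exact this.eventually_le_const (by norm_num)
  have l5 : ∀ᶠ m : ℕ in atTop, Cp * ‖(fun i => (1 + (((Finset.range (m + 1)).filter
      fun l => y l = i).card : ℝ)) / ((m : ℝ) + 1 + N)) - vstar‖ ≤ ρ / 4 := by
    have := (tendsto_iff_norm_sub_tendsto_zero.1 hylim).const_mul Cp
    rw [mul_zero] at this
    exact this.eventually_le_const (by positivity)
  obtain ⟨m, hm1, hm2, hm3, hm4, hm5⟩ := (l1.and (l2.and (l3.and (l4.and l5)))).exists
  have hp : ∀ n j, μ[(fun ω => if X (n + 1) ω = j then (1 : ℝ) else 0) | hist X hX n] =ᵐ[μ]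
      fun ω => kern A α (occ Z n ω) (X n ω) j := fun n j => by
    simp_rw [← trans_eq_kern]
    exact hcond n j
  set G := {ω | ∀ l ≤ m, X l ω = y l} with hG
  have hGpos : 0 < μ G := by
    refine cylinder_pos hX μ hp (hy0 ▸ hx0) (fun n ω hn => ?_) m
    have hApos : 0 < A (y n) (y (n + 1)) := by
      refine lt_of_le_of_ne (hnonneg _ _) fun h0 => (hyK n).ne' ?_
      simp [kern, ← h0]
    rw [hn]
    have hocc : ∀ k, 0 < occ Z n ω k ^ α := fun k =>
      Real.rpow_pos_of_pos (by unfold occ; positivity) α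
    have hnum := mul_pos hApos (hocc (y (n + 1)))
    refine div_pos hnum (hnum.trans_le ?_)
    exact Finset.single_le_sum (f := fun k => A (y n) k * occ Z n ω k ^ α)
      (fun k _ => mul_nonneg (hnonneg _ _) (hocc k).le) (Finset.mem_univ _)
  set bad : Fin N → Set Ω := fun i => {ω | ∃ n, η / (2 * Cp) ≤
    |∑ k ∈ Finset.range n, incr A α X Z y vstar ρ m i k ω|} with hbad
  have hctl := fun i => incr_control μ hX hZ hp (y := y) hP hC m i
  have hbadμ : μ (⋃ i, bad i) ≤ μ G / 2 := by
    calc μ (⋃ i, bad i) ≤ ∑ i, μ (bad i) := measure_iUnion_fintype_le μ bad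
      _ ≤ ∑ _i : Fin N, ENNReal.ofReal (√(8 * C ^ 2 * gam N m) / (η / (2 * Cp))) * μ G :=
        Finset.sum_le_sum fun i _ => (hctl i).2 _ (by positivity)
      _ = ENNReal.ofReal (N * (√(8 * C ^ 2 * gam N m) / (η / (2 * Cp)))) * μ G := by
        rw [Finset.sum_const, Finset.card_univ, Fintype.card_fin, nsmul_eq_mul, ← mul_assoc,
          ENNReal.ofReal_mul (by positivity), ENNReal.ofReal_natCast]
      _ ≤ ENNReal.ofReal (1 / 2) * μ G := by gcongr
      _ = μ G / 2 := by
        rw [ENNReal.ofReal_div_of_pos (by norm_num), mul_comm, ENNReal.div_eq_inv_mul]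
        simp [ENNReal.div_eq_inv_mul, mul_comm]
  have hdiff : 0 < μ (G \ ⋃ i, bad i) := by
    refine lt_of_lt_of_le ?_ (le_measure_sdiff (μ := μ))
    rw [tsub_pos_iff_lt]
    exact hbadμ.trans_lt (ENNReal.half_lt_self hGpos.ne' (measure_ne_top μ G))
  refine hdiff.trans_le (measure_mono_ae ?_)
  filter_upwards [ae_all_iff.2 fun i => (hctl i).1] with ω hconv hω
  obtain ⟨hωG, hωb⟩ := hω
  refine tendsto_of_occ (path_converges hP hC hatt (X := fun n => X n ω) (V := fun n => occ Z n ω)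
    (d := fun i k => incr A α X Z y vstar ρ m i k ω) (fun n i => occ_succ hZ n ω i)
    (fun n => norm_occ_sub_le hZ n ω) hη0 hη1 hm1 hm2 hm3 ?_ ?_ ?_ ?_ hconv)
  · convert hm5 using 4
    ext i
    unfold occ
    rw [hZ]
    congr 4
    refine Finset.filter_congr fun l hl => ?_
    rw [hωG l (by simp at hl; omega)]
  · intro i k hk
    exact incr_of_notMem fun h => absurd h.2.1 (by omega)
  · intro k hk hb i
    exact incr_of_mem ⟨hωG, hk, hb⟩
  · intro i n
    by_contra! hcon
    exact hωb (Set.mem_iUnion.2 ⟨i, n, hcon.le⟩)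
end

section
/- Let v* ∈ Δ be a linearly stable equilibrium of F. Then almost surely on the event {lim_{n→∞} v_n = v*}, the set E \ supp(v*) of sites outside the support of v* is visited only finitely many times by the walk (X_n). -/
/-!
Because `α > 1`, the reinforcement is too weak to sustain sites of vanishing frequency. Let `i` be
a site outside the support of `v*` and `W n = 1 + Z n i`. On `{v_n → v*}` the normalising sum in the transition
probabilities is eventually at least `c (n + 1) ^ α` for some `c > 0` (`attraction_pos`), so the
conditional probability `p n` of visiting `i` at time `n + 1` is at most `L (W n / (n + 1)) ^ α`.
Moreover, eventually `W n ≤ δ (n + 1)` for any prescribed `δ > 0`.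

As long as both bounds hold, `p n / W n ≤ L δ ^ (α - 1) / (n + 1)`, and since
`(w + 1) ^ α ≤ w ^ α + 2 ^ α w ^ (α - 1)`, the `α`-th moment of `W n`, restricted to the event that
the bounds hold between times `n₀` and `n`, grows by a factor of at most `1 + s / (2 (n + 1))` per
step, where `s = (α - 1) / 2` and `δ` is small. Hence this moment is `O (n ^ s)`, the visits to `i`
at time `n + 1` on this event have probability `O (n ^ (s - α))`, which is summable, and the
Borel–Cantelli lemma applies (`ae_eventually_notMem_of_reinforced`). The event `{v_n → v*}` is
covered by the countably many choices of `n₀`.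
-/

open MeasureTheory Filter Set Matrix

/-- Averaging `h · 1_B` for an `m`-measurable weight `h` only sees the conditional probability `p`
of `B` given `m`, so a pointwise bound `h p ≤ q` passes to the integrals. -/
lemma integral_mul_indicator_le {Ω : Type*} {m m0 : MeasurableSpace Ω} (hm : m ≤ m0)
    (μ : Measure Ω) [IsProbabilityMeasure μ] {B : Set Ω} (hB : MeasurableSet B)
    {p h q : Ω → ℝ} (hp : μ[B.indicator (fun _ => (1 : ℝ)) | m] =ᵐ[μ] p)
    (hh : Measurable[m] h) {C : ℝ} (hC : ∀ ω, |h ω| ≤ C) (hq : Integrable q μ)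
    (hpq : ∀ ω, h ω * p ω ≤ q ω) :
    Integrable (fun ω => h ω * B.indicator (fun _ => (1 : ℝ)) ω) μ ∧
      ∫ ω, h ω * B.indicator (fun _ => (1 : ℝ)) ω ∂μ ≤ ∫ ω, q ω ∂μ := by
  have hB1 : Integrable (B.indicator (fun _ => (1 : ℝ))) μ :=
    (integrable_const (1 : ℝ)).indicator hB
  have hint : Integrable (fun ω => h ω * B.indicator (fun _ => (1 : ℝ)) ω) μ :=
    hB1.bdd_mul (hh.mono hm le_rfl).aestronglyMeasurable (ae_of_all _ hC)
  refine ⟨hint, ?_⟩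
  have hpull := condExp_mul_of_stronglyMeasurable_left (μ := μ) hh.stronglyMeasurable hint hB1
  rw [← integral_condExp hm (f := fun ω => h ω * B.indicator (fun _ => (1 : ℝ)) ω)]
  refine integral_mono_ae integrable_condExp hq ?_
  filter_upwards [hpull, hp] with ω h1 h2
  have h3 : μ[fun ω => h ω * B.indicator (fun _ => (1 : ℝ)) ω | m] ω
      = h ω * μ[B.indicator (fun _ => (1 : ℝ)) | m] ω := h1
  rw [h3, h2]
  exact hpq ω

/-- A chord bound for the convex function `(1 + t) ^ α` on `[0, 1]`, at `t = 1 / w`. -/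
lemma add_one_rpow_le {α w : ℝ} (hα : 1 < α) (hw : 1 ≤ w) :
    (w + 1) ^ α ≤ w ^ α + 2 ^ α * w ^ (α - 1) := by
  have hw0 : 0 < w := by linarith
  have hconv := (convexOn_rpow hα.le).2 (show (1 : ℝ) ∈ Ici 0 by simp)
    (show (2 : ℝ) ∈ Ici 0 by simp) (show (0 : ℝ) ≤ 1 - 1 / w by rw [sub_nonneg, div_le_one hw0]; exact hw)
    (show 0 ≤ 1 / w by positivity) (by ring)
  simp only [smul_eq_mul, Real.one_rpow, mul_one] at hconv
  have h1 : (1 - 1 / w + 1 / w * 2) * w = w + 1 := by field_simp; ring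
  have h2 : (0 : ℝ) ≤ 1 - 1 / w + 1 / w * 2 := by
    have : 0 < 1 / w := by positivity
    linarith
  have h3 : (w + 1) ^ α = (1 - 1 / w + 1 / w * 2) ^ α * w ^ α := by
    rw [← h1, Real.mul_rpow h2 hw0.le]
  have h4 : w ^ (α - 1) = w ^ α / w := by rw [Real.rpow_sub_one hw0.ne']
  have h5 : 0 < w ^ α := by positivity
  rw [h3, h4]
  calc _ ≤ (1 - 1 / w + 1 / w * 2 ^ α) * w ^ α := by gcongr
    _ = w ^ α + 2 ^ α * (w ^ α / w) - w ^ α / w := by ring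
    _ ≤ _ := by
      have : 0 < w ^ α / w := by positivity
      linarith

/-- The discrete Grönwall comparison function: `(n + 1) ^ s` grows at least at rate `s / (2n)`. -/
lemma one_add_div_mul_rpow_le {s : ℝ} (hs : 0 < s) (n : ℕ) :
    (1 + s / 2 / ((n : ℝ) + 1)) * ((n : ℝ) + 1) ^ s ≤ ((n : ℝ) + 1 + 1) ^ s := by
  set y : ℝ := (n : ℝ) + 1 with hy
  have hy1 : 1 ≤ y := by simp [hy]
  have hy0 : 0 < y := by linarith
  have hx : 0 < (y + 1) / y := by positivity
  have hlog := Real.one_sub_inv_le_log_of_pos hx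
  have h1 : 1 / (2 * y) ≤ 1 - ((y + 1) / y)⁻¹ := by
    have : 1 - ((y + 1) / y)⁻¹ = 1 / (y + 1) := by field_simp; ring
    rw [this]
    apply one_div_le_one_div_of_le <;> linarith
  have h2 : 1 + s / 2 / y ≤ ((y + 1) / y) ^ s := by
    rw [Real.rpow_def_of_pos hx]
    have h3 := Real.add_one_le_exp (Real.log ((y + 1) / y) * s)
    have h4 : s / 2 / y = 1 / (2 * y) * s := by field_simp
    have h5 : 1 / (2 * y) * s ≤ Real.log ((y + 1) / y) * s := by
      apply mul_le_mul_of_nonneg_right _ hs.le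
      linarith
    linarith
  calc _ ≤ ((y + 1) / y) ^ s * y ^ s := by gcongr
    _ = _ := by
      rw [← Real.mul_rpow hx.le hy0.le]
      congr 1
      field_simp

/-- A counter `W` that increases by one on `B n` with conditional probability at most
`L (W n / (n+1)) ^ α` stops increasing, almost surely on the event that `W n ≤ δ (n + 1)` holds
(together with the probability bound) from time `n₀` on, provided `δ` is small.
The `α`-th moment of `W n`, restricted to the event up to time `n`, is `O (n ^ ((α - 1) / 2))`,
which makes the probabilities of `B n` summable. -/
lemma ae_eventually_notMem_of_reinforced {Ω : Type*} [m0 : MeasurableSpace Ω] (μ : Measure Ω)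
    [IsProbabilityMeasure μ] (ℱ : ℕ → MeasurableSpace Ω) (hmono : Monotone ℱ)
    (hle : ∀ n, ℱ n ≤ m0) {α L δ : ℝ} (hα : 1 < α) (hL : 0 ≤ L)
    (hsmall : 2 ^ α * (L * δ ^ (α - 1)) ≤ (α - 1) / 4)
    (W : ℕ → Ω → ℝ) (hWm : ∀ n, Measurable[ℱ n] (W n)) (hW1 : ∀ n ω, 1 ≤ W n ω)
    (hWn : ∀ n ω, W n ω ≤ (n : ℝ) + 2) (B : ℕ → Set Ω) (hB : ∀ n, MeasurableSet (B n))
    (hWB : ∀ n ω, W (n + 1) ω = W n ω + (B n).indicator (fun _ => (1 : ℝ)) ω)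
    (p : ℕ → Ω → ℝ)
    (hp : ∀ n, μ[(B n).indicator (fun _ => (1 : ℝ)) | ℱ n] =ᵐ[μ] p n)
    (g : ℕ → Set Ω) (hg : ∀ n, MeasurableSet[ℱ n] (g n))
    (hgW : ∀ n, ∀ ω ∈ g n, W n ω ≤ δ * ((n : ℝ) + 1))
    (hgp : ∀ n, ∀ ω ∈ g n, p n ω ≤ L * (W n ω / ((n : ℝ) + 1)) ^ α) (n₀ : ℕ) :
    ∀ᵐ ω ∂μ, (∀ n, n₀ ≤ n → ω ∈ g n) → ∀ᶠ n in atTop, ω ∉ B n := by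
  classical
  set G : ℕ → Set Ω := fun n => {ω | ∀ k, n₀ ≤ k → k ≤ n → ω ∈ g k} with hGdef
  have hGm : ∀ n, MeasurableSet[ℱ n] (G n) := by
    intro n
    have : G n = ⋂ k, ⋂ (_ : n₀ ≤ k), ⋂ (_ : k ≤ n), g k := by
      ext ω; simp [hGdef]
    rw [this]
    exact @MeasurableSet.iInter _ _ (ℱ n) _ _ fun k => @MeasurableSet.iInter _ _ (ℱ n) _ _
      fun _ => @MeasurableSet.iInter _ _ (ℱ n) _ _ fun hk => hmono hk _ (hg k)
  have hGsub : ∀ n, G (n + 1) ⊆ G n := fun n ω h k h1 h2 => h k h1 (h2.trans n.le_succ)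
  have hGg : ∀ n, n₀ ≤ n → G n ⊆ g n := fun n hn ω h => h n hn le_rfl
  -- `R r n` is the weight `1_{G n} (W n) ^ r`
  set R : ℝ → ℕ → Ω → ℝ := fun r n => (G n).indicator (fun ω => W n ω ^ r) with hR
  have hRm : ∀ r n, Measurable[ℱ n] (R r n) := fun r n =>
    Measurable.indicator (m := ℱ n) (Measurable.pow_const (hWm n) r) (hGm n)
  have hR0 : ∀ r n ω, 0 ≤ R r n ω := fun r n ω =>
    indicator_nonneg (fun ω _ => Real.rpow_nonneg (by linarith [hW1 n ω]) _) ω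
  have hRb : ∀ r, 0 ≤ r → ∀ n ω, |R r n ω| ≤ ((n : ℝ) + 2) ^ r := by
    intro r hr n ω
    rw [abs_of_nonneg (hR0 r n ω)]
    have hw : 0 ≤ W n ω := by linarith [hW1 n ω]
    by_cases hω : ω ∈ G n
    · simp only [hR, indicator_of_mem hω]
      exact Real.rpow_le_rpow hw (hWn n ω) hr
    · simp only [hR, indicator_of_notMem hω]
      positivity
  have hRi : ∀ r, 0 ≤ r → ∀ n, Integrable (R r n) μ := by
    intro r hr n
    exact Integrable.of_bound ((hRm r n).mono (hle n) le_rfl).aestronglyMeasurable _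
      (ae_of_all _ (hRb r hr n))
  set s : ℝ := (α - 1) / 2 with hs
  have hs0 : 0 < s := by rw [hs]; linarith
  have hα0 : 0 ≤ α := by linarith
  -- one-step growth of the restricted moment
  have hstep : ∀ n, n₀ ≤ n →
      ∫ ω, R α (n + 1) ω ∂μ ≤ (1 + s / 2 / ((n : ℝ) + 1)) * ∫ ω, R α n ω ∂μ := by
    intro n hn
    have hn1 : (0 : ℝ) < (n : ℝ) + 1 := by positivity
    obtain ⟨hi, hI⟩ := integral_mul_indicator_le (hle n) μ (hB n) (hp n)
      (h := fun ω => 2 ^ α * R (α - 1) n ω) ((hRm (α - 1) n).const_mul _)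
      (C := 2 ^ α * ((n : ℝ) + 2) ^ (α - 1))
      (by
        intro ω
        rw [abs_mul, abs_of_pos (by positivity : (0 : ℝ) < 2 ^ α)]
        gcongr
        exact hRb _ (by linarith) n ω)
      (q := fun ω => s / 2 / ((n : ℝ) + 1) * R α n ω) ((hRi α hα0 n).const_mul _)
      (by
        intro ω
        by_cases hω : ω ∈ G n
        · simp only [hR, indicator_of_mem hω]
          have hgω := hGg n hn hω
          have hw : 0 < W n ω := by linarith [hW1 n ω]
          have h1 := hgp n ω hgω
          have h2 : W n ω / ((n : ℝ) + 1) ≤ δ := by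
            rw [div_le_iff₀ hn1]; exact hgW n ω hgω
          have h3 : (W n ω / ((n : ℝ) + 1)) ^ α
              ≤ δ ^ (α - 1) * (W n ω / ((n : ℝ) + 1)) := by
            have : (W n ω / ((n : ℝ) + 1)) ^ α
                = (W n ω / ((n : ℝ) + 1)) ^ (α - 1) * (W n ω / ((n : ℝ) + 1)) := by
              rw [← Real.rpow_add_one (by positivity)]; congr 1; ring
            rw [this]
            gcongr
          have h4 : W n ω ^ α = W n ω ^ (α - 1) * W n ω := by
            rw [← Real.rpow_add_one (by positivity)]; congr 1; ring
          calc 2 ^ α * W n ω ^ (α - 1) * p n ω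
              ≤ 2 ^ α * W n ω ^ (α - 1) * (L * (δ ^ (α - 1) * (W n ω / ((n : ℝ) + 1)))) := by
                gcongr
                exact h1.trans (by gcongr)
            _ = 2 ^ α * (L * δ ^ (α - 1)) * (W n ω ^ (α - 1) * W n ω / ((n : ℝ) + 1)) := by
                ring
            _ ≤ (α - 1) / 4 * (W n ω ^ (α - 1) * W n ω / ((n : ℝ) + 1)) := by
                gcongr
            _ = s / 2 / ((n : ℝ) + 1) * W n ω ^ α := by rw [h4, hs]; ring
        · simp [hR, indicator_of_notMem hω])
    have hpt : ∀ ω, R α (n + 1) ω ≤ R α n ω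
        + 2 ^ α * R (α - 1) n ω * (B n).indicator (fun _ => (1 : ℝ)) ω := by
      intro ω
      by_cases hω : ω ∈ G (n + 1)
      · have hω' := hGsub n hω
        simp only [hR, indicator_of_mem hω, indicator_of_mem hω', hWB]
        by_cases hb : ω ∈ B n
        · simp only [indicator_of_mem hb, mul_one]
          exact add_one_rpow_le hα (hW1 n ω)
        · simp [indicator_of_notMem hb]
      · have h0 : R α (n + 1) ω = 0 := by simp [hR, indicator_of_notMem hω]
        rw [h0]
        have := hR0 α n ω
        have := hR0 (α - 1) n ω
        have : 0 ≤ (B n).indicator (fun _ => (1 : ℝ)) ω :=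
          indicator_nonneg (fun _ _ => zero_le_one) ω
        positivity
    calc _ ≤ ∫ ω, (R α n ω
          + 2 ^ α * R (α - 1) n ω * (B n).indicator (fun _ => (1 : ℝ)) ω) ∂μ :=
          integral_mono (hRi α hα0 _) ((hRi α hα0 n).add hi) hpt
      _ = ∫ ω, R α n ω ∂μ
          + ∫ ω, 2 ^ α * R (α - 1) n ω * (B n).indicator (fun _ => (1 : ℝ)) ω ∂μ :=
          integral_add (hRi α hα0 n) hi
      _ ≤ ∫ ω, R α n ω ∂μ + ∫ ω, s / 2 / ((n : ℝ) + 1) * R α n ω ∂μ := by gcongr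
      _ = _ := by rw [integral_const_mul]; ring
  set K : ℝ := ∫ ω, R α n₀ ω ∂μ with hK
  have hK0 : 0 ≤ K := integral_nonneg (hR0 α n₀)
  have hmom : ∀ n, n₀ ≤ n → ∫ ω, R α n ω ∂μ ≤ K * ((n : ℝ) + 1) ^ s := by
    intro n hn
    induction n, hn using Nat.le_induction with
    | base =>
      have : (1 : ℝ) ≤ ((n₀ : ℝ) + 1) ^ s := Real.one_le_rpow (by simp) hs0.le
      nlinarith
    | succ n hn ih =>
      calc _ ≤ _ := hstep n hn
        _ ≤ (1 + s / 2 / ((n : ℝ) + 1)) * (K * ((n : ℝ) + 1) ^ s) := by gcongr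
        _ = K * ((1 + s / 2 / ((n : ℝ) + 1)) * ((n : ℝ) + 1) ^ s) := by ring
        _ ≤ K * ((n : ℝ) + 1 + 1) ^ s := by
          gcongr
          exact one_add_div_mul_rpow_le hs0 n
        _ = _ := by push_cast; rfl
  have hprob : ∀ n, n₀ ≤ n →
      μ.real (G n ∩ B n) ≤ L * K * ((n : ℝ) + 1) ^ (s - α) := by
    intro n hn
    have hn1 : (0 : ℝ) < (n : ℝ) + 1 := by positivity
    obtain ⟨hi, hI⟩ := integral_mul_indicator_le (hle n) μ (hB n) (hp n)
      (h := R 0 n) (hRm 0 n) (C := ((n : ℝ) + 2) ^ (0 : ℝ)) (hRb 0 le_rfl n)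
      (q := fun ω => L * ((n : ℝ) + 1) ^ (-α) * R α n ω) ((hRi α hα0 n).const_mul _)
      (by
        intro ω
        by_cases hω : ω ∈ G n
        · simp only [hR, indicator_of_mem hω, Real.rpow_zero, one_mul]
          have hw : 0 < W n ω := by linarith [hW1 n ω]
          refine (hgp n ω (hGg n hn hω)).trans_eq ?_
          rw [Real.div_rpow hw.le hn1.le, Real.rpow_neg hn1.le]
          ring
        · simp [hR, indicator_of_notMem hω])
    have hfun : (fun ω => R 0 n ω * (B n).indicator (fun _ => (1 : ℝ)) ω)
        = (G n ∩ B n).indicator 1 := by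
      ext ω
      by_cases h1 : ω ∈ G n <;> by_cases h2 : ω ∈ B n <;> simp [hR, h1, h2]
    rw [hfun, integral_indicator_one ((hle n _ (hGm n)).inter (hB n)), integral_const_mul] at hI
    calc _ ≤ _ := hI
      _ ≤ L * ((n : ℝ) + 1) ^ (-α) * (K * ((n : ℝ) + 1) ^ s) := by
        gcongr
        exact hmom n hn
      _ = _ := by
        rw [sub_eq_add_neg, Real.rpow_add hn1]; ring
  have hsum : Summable fun n : ℕ => μ.real (G (n + n₀) ∩ B (n + n₀)) := by
    have h1 : Summable fun n : ℕ => (n : ℝ) ^ (s - α) :=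
      Real.summable_nat_rpow.2 (by rw [hs]; linarith)
    have h2 : Summable fun n : ℕ => L * K * ((n + (n₀ + 1) : ℕ) : ℝ) ^ (s - α) :=
      ((summable_nat_add_iff (n₀ + 1)).2 h1).mul_left _
    refine Summable.of_nonneg_of_le (fun _ => measureReal_nonneg) (fun n => ?_) h2
    refine (hprob (n + n₀) (Nat.le_add_left _ _)).trans_eq ?_
    push_cast
    rw [add_assoc]
  have hBC := ae_eventually_notMem (μ := μ) (s := fun n => G (n + n₀) ∩ B (n + n₀)) (by
    have := hsum.tsum_ofReal_ne_top
    simpa [measureReal_def] using this)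
  filter_upwards [hBC] with ω hω hgood
  have h1 : ∀ᶠ n in atTop, ω ∉ B (n + n₀) := by
    filter_upwards [hω] with n hn hb
    exact hn ⟨fun k hk _ => hgood k hk, hb⟩
  rw [← map_add_atTop_eq_nat n₀]
  exact h1

/-- From every site `x`, the attraction of the support of `vstar` is positive. When the support is
a single site `x`, the constraint `v x ≤ 3 / 4` for loopless sites forces a loop at `x`. -/
lemma attraction_pos {N : ℕ} {α : ℝ} {A : Matrix (Fin N) (Fin N) ℝ}
    (hnonneg : ∀ i j, 0 ≤ A i j) (hoffdiag : ∀ i j, i ≠ j → 0 < A i j)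
    {v : Fin N → ℝ} (hv : v ∈ simplexD A) (x : Fin N) :
    0 < ∑ k, A x k * v k ^ α := by
  obtain ⟨hv0, hv1, hv34⟩ := hv
  suffices h : ∃ k, 0 < A x k ∧ 0 < v k by
    obtain ⟨k, hk1, hk2⟩ := h
    refine Finset.sum_pos' (fun j _ => mul_nonneg (hnonneg x j) (Real.rpow_nonneg (hv0 j) _))
      ⟨k, Finset.mem_univ k, by positivity⟩
  by_contra! hcon
  have hother : ∀ k, k ≠ x → v k = 0 := fun k hk =>
    le_antisymm (hcon k (hoffdiag x k hk.symm)) (hv0 k)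
  have hx : v x = 1 := by
    rw [← hv1]
    exact (Finset.sum_eq_single x (fun k _ hk => hother k hk) (by simp)).symm
  have hAx : A x x = 0 := by
    by_contra hne
    have := hcon x (lt_of_le_of_ne (hnonneg x x) (Ne.symm hne))
    linarith
  have := hv34 x hAx
  linarith

/-- If `v*` is a linearly stable equilibrium, then almost surely on the
event `{v_n → v*}`, the sites outside the support of `v*` are visited only finitely many
times. -/
theorem finitely_many_visits_outside_support
    {N : ℕ} (hN : 2 ≤ N) {α : ℝ} (hα : 1 < α)
    (A : Matrix (Fin N) (Fin N) ℝ)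
    (hsymm : ∀ i j, A i j = A j i)
    (hnonneg : ∀ i j, 0 ≤ A i j)
    (hoffdiag : ∀ i j, i ≠ j → 0 < A i j)
    (hrow : ∀ i i', ∑ j, A i j = ∑ j, A i' j)
    {Ω : Type*} [MeasurableSpace Ω] (μ : Measure Ω) [IsProbabilityMeasure μ]
    (X : ℕ → Ω → Fin N) (hX : ∀ n, Measurable (X n))
    (Z : ℕ → Fin N → Ω → ℕ)
    (hZ : ∀ n j ω, Z n j ω = ((Finset.range (n + 1)).filter fun ℓ => X ℓ ω = j).card)
    (hcond : ∀ (n : ℕ) (j : Fin N),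
      μ[(fun ω => if X (n + 1) ω = j then (1 : ℝ) else 0) |
          ⨆ k ∈ Finset.range (n + 1), MeasurableSpace.comap (X k) ⊤] =ᵐ[μ]
        fun ω => A (X n ω) j * (1 + (Z n j ω : ℝ)) ^ α /
          ∑ k : Fin N, A (X n ω) k * (1 + (Z n k ω : ℝ)) ^ α)
    (vstar : Fin N → ℝ) (hvstar : vstar ∈ simplexD A)
    (heq : Ffield A α vstar = 0) (hst : IsLinStable A α vstar) :
    ∀ᵐ ω ∂μ,
      Tendsto (fun n : ℕ => fun i => (Z n i ω : ℝ) / ((n : ℝ) + 1)) atTop (nhds vstar) →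
        ∀ i : Fin N, vstar i = 0 → {n : ℕ | X n ω = i}.Finite := by
  classical
  suffices hmain : ∀ i : Fin N, vstar i = 0 → ∀ᵐ ω ∂μ,
      Tendsto (fun n : ℕ => fun i => (Z n i ω : ℝ) / ((n : ℝ) + 1)) atTop (nhds vstar) →
        {n : ℕ | X n ω = i}.Finite by
    have h1 : ∀ᵐ ω ∂μ, ∀ i : Fin N, vstar i = 0 →
        Tendsto (fun n : ℕ => fun i => (Z n i ω : ℝ) / ((n : ℝ) + 1)) atTop (nhds vstar) →
          {n : ℕ | X n ω = i}.Finite := by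
      rw [ae_all_iff]
      intro i
      by_cases hi : vstar i = 0
      · filter_upwards [hmain i hi] with ω hω _ using hω
      · exact ae_of_all _ fun ω h => absurd h hi
    filter_upwards [h1] with ω hω ht i hi using hω i hi ht
  intro i hi
  have hα0 : 0 < α := by linarith
  have hne : Nonempty (Fin N) := ⟨i⟩
  set ℱ : ℕ → MeasurableSpace Ω := fun n =>
    ⨆ k ∈ Finset.range (n + 1), MeasurableSpace.comap (X k) ⊤ with hℱ
  have hmono : Monotone ℱ := by
    intro a b hab
    refine biSup_mono fun k hk => ?_
    simp only [Finset.mem_range] at hk ⊢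
    omega
  have hle : ∀ n, ℱ n ≤ ‹MeasurableSpace Ω› := by
    intro n
    refine iSup₂_le fun k _ => ?_
    rw [← measurable_iff_comap_le]
    exact fun s _ => hX k (MeasurableSet.of_discrete)
  have hXm : ∀ n ℓ, ℓ < n + 1 → ∀ j, MeasurableSet[ℱ n] {ω | X ℓ ω = j} := by
    intro n ℓ hℓ j
    have h1 : MeasurableSpace.comap (X ℓ) ⊤ ≤ ℱ n :=
      le_iSup₂_of_le (f := fun k (_ : k ∈ Finset.range (n + 1)) =>
        MeasurableSpace.comap (X k) ⊤) ℓ (Finset.mem_range.2 hℓ) le_rfl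
    exact h1 _ ⟨{j}, trivial, rfl⟩
  have hZm : ∀ n j, Measurable[ℱ n] fun ω => (Z n j ω : ℝ) := by
    intro n j
    have h1 : (fun ω => (Z n j ω : ℝ))
        = fun ω => ∑ ℓ ∈ Finset.range (n + 1), if X ℓ ω = j then (1 : ℝ) else 0 := by
      ext ω
      rw [hZ, Finset.card_filter]
      push_cast
      rfl
    rw [h1]
    refine @Finset.measurable_sum _ _ _ _ _ _ (ℱ n) _ _ fun ℓ hℓ => ?_
    exact Measurable.ite (m := ℱ n) (hXm n ℓ (Finset.mem_range.1 hℓ) j)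
      measurable_const measurable_const
  -- the attraction of the limit is bounded below by `c > 0`, uniformly in the current site
  obtain ⟨c, hc0, hc⟩ : ∃ c : ℝ, 0 < c ∧ ∀ x, c < ∑ k, A x k * vstar k ^ α := by
    have hpos := fun x => attraction_pos (α := α) hnonneg hoffdiag hvstar x
    obtain ⟨x₀, hx₀⟩ := Finite.exists_min fun x => ∑ k, A x k * vstar k ^ α
    refine ⟨(∑ k, A x₀ k * vstar k ^ α) / 2, by linarith [hpos x₀], fun x => ?_⟩
    linarith [hpos x₀, hx₀ x]
  obtain ⟨M, hM⟩ : ∃ M : ℝ, ∀ x, A x i ≤ M := by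
    obtain ⟨x₀, hx₀⟩ := Finite.exists_max fun x => A x i
    exact ⟨_, hx₀⟩
  have hM0 : 0 ≤ M := (hnonneg i i).trans (hM i)
  have hL0 : 0 ≤ M / c := by positivity
  obtain ⟨δ, hδ0, hδ⟩ : ∃ δ : ℝ, 0 < δ ∧ 2 ^ α * (M / c * δ ^ (α - 1)) ≤ (α - 1) / 4 := by
    have h1 : Tendsto (fun δ : ℝ => 2 ^ α * (M / c * δ ^ (α - 1))) (nhdsWithin 0 (Ioi 0))
        (nhds (2 ^ α * (M / c * 0 ^ (α - 1)))) := by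
      have h2 : ContinuousAt (fun δ : ℝ => δ ^ (α - 1)) 0 :=
        Real.continuousAt_rpow_const 0 (α - 1) (Or.inr (by linarith))
      exact ((h2.tendsto.const_mul _).const_mul _).mono_left nhdsWithin_le_nhds
    rw [Real.zero_rpow (by linarith), mul_zero, mul_zero] at h1
    have h3 := h1.eventually (ge_mem_nhds (show (0 : ℝ) < (α - 1) / 4 by linarith))
    obtain ⟨δ, h4, h5⟩ := (h3.and self_mem_nhdsWithin).exists
    exact ⟨δ, h5, h4⟩
  set g : ℕ → Set Ω := fun n => {ω | 1 + (Z n i ω : ℝ) ≤ δ * ((n : ℝ) + 1)} ∩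
    {ω | ∀ x, c * ((n : ℝ) + 1) ^ α ≤ ∑ k, A x k * (1 + (Z n k ω : ℝ)) ^ α} with hg
  have hgm : ∀ n, MeasurableSet[ℱ n] (g n) := by
    intro n
    let _ : MeasurableSpace Ω := ℱ n
    have h1 : ∀ j, Measurable fun ω => 1 + (Z n j ω : ℝ) := fun j => (hZm n j).const_add 1
    refine (measurableSet_le (h1 i) measurable_const).inter ?_
    rw [ofPred_forall]
    refine MeasurableSet.iInter fun x => measurableSet_le measurable_const ?_
    exact Finset.measurable_sum _ fun k _ => ((h1 k).pow_const α).const_mul _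
  have hev := fun n₀ => ae_eventually_notMem_of_reinforced μ ℱ hmono hle hα hL0 hδ
    (fun n ω => 1 + (Z n i ω : ℝ)) (fun n => Measurable.const_add (hZm n i) 1)
    (fun n ω => by simp)
    (fun n ω => by
      have h1 : Z n i ω ≤ n + 1 := by
        rw [hZ]
        exact (Finset.card_filter_le _ _).trans (by simp)
      have h2 : (Z n i ω : ℝ) ≤ n + 1 := by exact_mod_cast h1
      linarith)
    (fun n => {ω | X (n + 1) ω = i}) (fun n => hX (n + 1) (measurableSet_singleton i))
    (fun n ω => by
      have h1 : Z (n + 1) i ω = Z n i ω + if X (n + 1) ω = i then 1 else 0 := by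
        rw [hZ, hZ, Finset.card_filter, Finset.card_filter, Finset.sum_range_succ]
      simp only [h1, indicator_apply, mem_ofPred_eq]
      split_ifs <;> push_cast <;> ring)
    (fun n ω => A (X n ω) i * (1 + (Z n i ω : ℝ)) ^ α /
      ∑ k : Fin N, A (X n ω) k * (1 + (Z n k ω : ℝ)) ^ α)
    (fun n => by
      have h1 : ({ω | X (n + 1) ω = i}.indicator fun _ => (1 : ℝ))
          = fun ω => if X (n + 1) ω = i then (1 : ℝ) else 0 := by
        ext ω
        simp [indicator_apply]
      rw [h1]
      exact hcond n i)
    g hgm (fun n ω h => h.1)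
    (fun n ω h => by
      have hn1 : (0 : ℝ) < (n : ℝ) + 1 := by positivity
      calc A (X n ω) i * (1 + (Z n i ω : ℝ)) ^ α /
            ∑ k : Fin N, A (X n ω) k * (1 + (Z n k ω : ℝ)) ^ α
          ≤ M * (1 + (Z n i ω : ℝ)) ^ α / (c * ((n : ℝ) + 1) ^ α) := by
            gcongr
            · exact hM _
            · exact h.2 _
        _ = _ := by
            rw [Real.div_rpow (by positivity) hn1.le]
            field_simp)
    n₀
  filter_upwards [ae_all_iff.2 hev] with ω hω ht
  -- the shifted frequencies `(1 + Z n j) / (n + 1)` have the same limit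
  have ht' : ∀ j, Tendsto (fun n : ℕ => (1 + (Z n j ω : ℝ)) / ((n : ℝ) + 1)) atTop
      (nhds (vstar j)) := by
    intro j
    have h1 := (tendsto_one_div_add_atTop_nhds_zero_nat (𝕜 := ℝ)).add (tendsto_pi_nhds.1 ht j)
    rw [zero_add] at h1
    refine h1.congr fun n => ?_
    ring
  have hgood1 : ∀ᶠ n : ℕ in atTop, 1 + (Z n i ω : ℝ) ≤ δ * ((n : ℝ) + 1) := by
    have h1 := ht' i
    rw [hi] at h1
    filter_upwards [h1.eventually (ge_mem_nhds hδ0)] with n hn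
    rwa [div_le_iff₀ (by positivity)] at hn
  have hgood2 : ∀ᶠ n : ℕ in atTop,
      ∀ x, c * ((n : ℝ) + 1) ^ α ≤ ∑ k, A x k * (1 + (Z n k ω : ℝ)) ^ α := by
    rw [eventually_all]
    intro x
    have h1 : Tendsto (fun n : ℕ => ∑ k, A x k * ((1 + (Z n k ω : ℝ)) / ((n : ℝ) + 1)) ^ α)
        atTop (nhds (∑ k, A x k * vstar k ^ α)) :=
      tendsto_finsetSum _ fun k _ =>
        ((ht' k).rpow_const (Or.inr hα0.le)).const_mul _
    filter_upwards [h1.eventually (lt_mem_nhds (hc x))] with n hn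
    have hn1 : (0 : ℝ) < (n : ℝ) + 1 := by positivity
    have h2 : ∑ k, A x k * ((1 + (Z n k ω : ℝ)) / ((n : ℝ) + 1)) ^ α
        = (∑ k, A x k * (1 + (Z n k ω : ℝ)) ^ α) / ((n : ℝ) + 1) ^ α := by
      rw [Finset.sum_div]
      refine Finset.sum_congr rfl fun k _ => ?_
      rw [Real.div_rpow (by positivity) hn1.le, mul_div_assoc]
    rw [h2, lt_div_iff₀ (by positivity)] at hn
    exact hn.le
  obtain ⟨n₀, hn₀⟩ := eventually_atTop.1 (hgood1.and hgood2)
  have hfin := hω n₀ fun n hn => ⟨(hn₀ n hn).1, (hn₀ n hn).2⟩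
  obtain ⟨n₁, hn₁⟩ := eventually_atTop.1 hfin
  refine (finite_le_nat n₁).subset fun n hn => ?_
  simp only [mem_ofPred_eq] at hn ⊢
  by_contra hlt
  have h1 := hn₁ (n - 1) (by omega)
  rw [Nat.sub_add_cancel (by omega)] at h1
  exact h1 hn
end

section
/- Let I ⊆ E and ν ∈ (0,1). Then almost surely on the event E_ν(I) := {lim_{n→∞} v_n(i) · n^ν = 0 for every i ∈ I}, the set I is visited only finitely many times by the walk (X_n). -/
/-!
Fix `i ∈ I`. Every state `x` with `A x x = 0` is almost surely never occupied twice in a row, so it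
carries at most about half of the past; hence from any position some admissible target has been
visited a positive fraction of the time, and the normalising sum in the transition probability is at
least `c n ^ α` (`exists_often_visited_neighbour`, `ae_no_hold`). Therefore
`P(X (n + 1) = i | F n) ≤ K ((1 + Z n i) / (n + 1)) ^ α` (`exists_transition_le`).

This bound improves itself. If `Z n i = O(n ^ s)` and `s' + α (1 - s) > 1`, the series of conditional
probabilities weighted by `n ^ (-s')` converges; by the conditional Borel–Cantelli lemma for weighted
sums (`ae_summable_of_summable_condExp`) so does the series of visits with the same weights, whence
`Z n i = O(n ^ s')` (`ae_visits_improve`). On the event under consideration one starts from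
`s = 1 - ν`; with `β = (1 + α) / 2`, the exponents `s_m = max 0 (1 - ν β ^ m)` are admissible at every
step and vanish for large `m`. Then `Z n i` is bounded, which means finitely many visits to `i`.
-/

open MeasureTheory Filter Set Matrix

/-! ### A weighted conditional Borel–Cantelli lemma -/

/-- Weighted form of the conditional Borel–Cantelli lemma: for an adapted sequence with values in
`[0, 1]` and deterministic weights in `[0, 1]`, the weighted series converges almost surely wherever
the weighted series of conditional expectations converges. -/
lemma ae_summable_of_summable_condExp {Ω : Type*} {m0 : MeasurableSpace Ω} {μ : Measure Ω}
    [IsFiniteMeasure μ] (ℱ : Filtration ℕ m0) (g : ℕ → Ω → ℝ) (c : ℕ → ℝ)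
    (hg : ∀ k, StronglyMeasurable[ℱ (k + 1)] (g k))
    (hg0 : ∀ k ω, 0 ≤ g k ω) (hg1 : ∀ k ω, g k ω ≤ 1)
    (hc0 : ∀ k, 0 ≤ c k) (hc1 : ∀ k, c k ≤ 1) :
    ∀ᵐ ω ∂μ, Summable (fun k => c k * (μ[g k | ℱ k]) ω) → Summable (fun k => c k * g k ω) := by
  set f : ℕ → Ω → ℝ := fun n => ∑ k ∈ Finset.range n, c k • g k with hf
  have hdiff : ∀ n, f (n + 1) - f n = c n • g n := fun n => by
    simp [hf, Finset.sum_range_succ]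
  have hdiff' : ∀ n ω, f (n + 1) ω - f n ω = c n * g n ω := fun n ω => by
    simpa using congrFun (hdiff n) ω
  have hint : ∀ k, Integrable (g k) μ := fun k => by
    refine Integrable.of_bound ((hg k).mono (ℱ.le _)).aestronglyMeasurable 1 ?_
    exact Eventually.of_forall fun ω => by
      rw [Real.norm_of_nonneg (hg0 k ω)]; exact hg1 k ω
  have key := tendsto_sum_indicator_atTop_iff (μ := μ) (ℱ := ℱ) (f := f) (R := 1)
    (Eventually.of_forall fun ω n => by
      have h1 := hdiff' n ω
      have h2 := mul_nonneg (hc0 n) (hg0 n ω)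
      linarith)
    (fun n => Finset.stronglyMeasurable_sum _ fun k hk =>
      ((hg k).mono (ℱ.mono (Finset.mem_range.1 hk))).const_smul (c k))
    (fun n => integrable_finsetSum' _ fun k _ => (hint k).smul (c k))
    (Eventually.of_forall fun ω n => by
      rw [hdiff', abs_of_nonneg (mul_nonneg (hc0 n) (hg0 n ω))]
      exact mul_le_one₀ (hc1 n) (hg0 n ω) (hg1 n ω))
  have hsm : ∀ᵐ ω ∂μ, ∀ k, (μ[f (k + 1) - f k | ℱ k]) ω = c k * (μ[g k | ℱ k]) ω := by
    refine ae_all_iff.2 fun k => ?_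
    rw [hdiff]
    filter_upwards [condExp_smul (μ := μ) (c k) (g k) (ℱ k)] with ω hω
    simpa using hω
  filter_upwards [key, hsm] with ω hω hω2 hs
  rw [summable_iff_not_tendsto_nat_atTop_of_nonneg
    fun k => mul_nonneg (hc0 k) (hg0 k ω)]
  intro ht
  have h1 : Tendsto (fun n => f n ω) atTop atTop := by simpa [hf] using ht
  have h2 := hω.1 h1
  simp only [predictablePart, Finset.sum_apply, hω2] at h2
  exact not_tendsto_nhds_of_tendsto_atTop h2 _ hs.hasSum.tendsto_sum_nat

/-! ### Upper bound for the transition probabilities -/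

lemma two_mul_visits_le {β : Type*} [DecidableEq β] (x : ℕ → β) (j : β)
    (h : ∀ n, x n = j → x (n + 1) ≠ x n) (n : ℕ) :
    2 * ((Finset.range (n + 1)).filter fun ℓ => x ℓ = j).card ≤
      n + 1 + if x n = j then 1 else 0 := by
  induction n with
  | zero => by_cases h0 : x 0 = j <;> simp [Finset.filter_singleton, h0]
  | succ n ih =>
    rw [Finset.range_add_one, Finset.filter_insert]
    have := h n
    by_cases h1 : x (n + 1) = j
    · have h2 : x n ≠ j := fun h2 => this h2 (h1.trans h2.symm)
      rw [if_pos h1, Finset.card_insert_of_notMem (by simp), if_pos h1]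
      simp only [h2, if_false] at ih
      omega
    · rw [if_neg h1, if_neg h1]
      split_ifs at ih <;> omega

/-- Some state that can be reached in one step from the current position carries a positive
proportion of the past: if the current state cannot hold, then it was occupied at most about half of
the time. -/
lemma exists_often_visited_neighbour {N : ℕ} (hN : 2 ≤ N) (A : Matrix (Fin N) (Fin N) ℝ)
    (hnonneg : ∀ i j, 0 ≤ A i j) (hoffdiag : ∀ i j, i ≠ j → 0 < A i j)
    (x : ℕ → Fin N) (hx : ∀ n, A (x n) (x n) = 0 → x (n + 1) ≠ x n) (n : ℕ) :
    ∃ k, 0 < A (x n) k ∧ ((n : ℝ) + 1) / (2 * N) ≤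
      1 + (((Finset.range (n + 1)).filter fun ℓ => x ℓ = k).card : ℝ) := by
  set z : Fin N → ℕ := fun k => ((Finset.range (n + 1)).filter fun ℓ => x ℓ = k).card with hz
  have hsum : ∑ k, z k = n + 1 := by
    have := Finset.card_eq_sum_card_fiberwise (f := x) (s := Finset.range (n + 1))
      (t := Finset.univ) (by intro a _; simp)
    simpa [hz] using this.symm
  have hsumR : ∑ k, (z k : ℝ) = n + 1 := by exact_mod_cast hsum
  have hNR : (2 : ℝ) ≤ N := by exact_mod_cast hN
  by_contra! hcon
  have hlt : ∀ k, 0 < A (x n) k → (z k : ℝ) < ((n : ℝ) + 1) / (2 * N) - 1 := fun k hk => by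
    have := hcon k hk; linarith
  have hN0 : 0 < N := by omega
  have : Nonempty (Fin N) := ⟨⟨0, hN0⟩⟩
  have hzn : 2 * (z (x n) : ℝ) ≤ n + 2 ∨ 0 < A (x n) (x n) := by
    rcases (hnonneg (x n) (x n)).eq_or_lt with h0 | h0
    · left
      have := two_mul_visits_le x (x n) (fun m hm => hx m (by rw [hm]; exact h0.symm)) n
      simp only [if_true] at this
      exact_mod_cast this
    · exact Or.inr h0
  have hd : ((n : ℝ) + 1) / (2 * N) * N = (n + 1) / 2 := by field_simp
  rcases hzn with h | h
  · have hoff : ∑ k ∈ Finset.univ.erase (x n), (z k : ℝ) ≤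
        ∑ k ∈ Finset.univ.erase (x n), (((n : ℝ) + 1) / (2 * N) - 1) :=
      Finset.sum_le_sum fun k hk =>
        (hlt k (hoffdiag _ _ (Finset.ne_of_mem_erase hk).symm)).le
    have hsplit := Finset.add_sum_erase Finset.univ (fun k => (z k : ℝ)) (Finset.mem_univ (x n))
    rw [Finset.sum_const, Finset.card_erase_of_mem (Finset.mem_univ _), Finset.card_univ,
      Fintype.card_fin, nsmul_eq_mul, Nat.cast_sub (by omega)] at hoff
    simp only [Nat.cast_one] at hoff
    have hpos : 0 ≤ ((n : ℝ) + 1) / (2 * N) := by positivity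
    nlinarith
  · have hall : ∀ k, (z k : ℝ) < ((n : ℝ) + 1) / (2 * N) - 1 := fun k => by
      by_cases hk : k = x n
      · exact hlt k (by rw [hk]; exact h)
      · exact hlt k (hoffdiag _ _ (Ne.symm hk))
    have := Finset.sum_le_sum fun k (_ : k ∈ Finset.univ) => (hall k).le
    rw [hsumR, Finset.sum_const, Finset.card_univ, Fintype.card_fin, nsmul_eq_mul] at this
    have : (0 : ℝ) ≤ n := Nat.cast_nonneg n
    nlinarith

/-- Along any path that respects the forbidden self-loops, the probability of jumping to `j` is at
most a constant times the `α`-th power of the (shifted) empirical frequency of `j`. -/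
lemma exists_transition_le {N : ℕ} (hN : 2 ≤ N) {α : ℝ} (hα : 1 < α)
    (A : Matrix (Fin N) (Fin N) ℝ)
    (hnonneg : ∀ i j, 0 ≤ A i j) (hoffdiag : ∀ i j, i ≠ j → 0 < A i j) :
    ∃ K : ℝ, 0 ≤ K ∧ ∀ (x : ℕ → Fin N), (∀ n, A (x n) (x n) = 0 → x (n + 1) ≠ x n) →
      ∀ (z : ℕ → Fin N → ℕ),
      (∀ n j, z n j = ((Finset.range (n + 1)).filter fun ℓ => x ℓ = j).card) → ∀ n j,
      A (x n) j * (1 + (z n j : ℝ)) ^ α / ∑ k : Fin N, A (x n) k * (1 + (z n k : ℝ)) ^ α ≤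
        K * ((1 + (z n j : ℝ)) / (n + 1)) ^ α := by
  obtain ⟨a, ha0, ha⟩ : ∃ a : ℝ, 0 < a ∧ ∀ i j, 0 < A i j → a ≤ A i j := by
    have h : ∀ p : Fin N × Fin N, ∃ b : ℝ, 0 < b ∧ (0 < A p.1 p.2 → b ≤ A p.1 p.2) := fun p => by
      by_cases hp : 0 < A p.1 p.2
      · exact ⟨_, hp, fun _ => le_rfl⟩
      · exact ⟨1, one_pos, fun h => absurd h hp⟩
    choose b hb hb' using h
    have : Nonempty (Fin N) := ⟨⟨0, by omega⟩⟩
    obtain ⟨p, hp⟩ := Finite.exists_min b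
    exact ⟨b p, hb p, fun i j hij => (hp (i, j)).trans (hb' (i, j) hij)⟩
  obtain ⟨M, hM⟩ : ∃ M : ℝ, ∀ i j, A i j ≤ M := by
    have : Nonempty (Fin N) := ⟨⟨0, by omega⟩⟩
    obtain ⟨p, hp⟩ := Finite.exists_max fun p : Fin N × Fin N => A p.1 p.2
    exact ⟨A p.1 p.2, fun i j => hp (i, j)⟩
  have hM0 : 0 ≤ M := (hnonneg _ _).trans (hM ⟨0, by omega⟩ ⟨0, by omega⟩)
  have hNR : (0 : ℝ) < N := by exact_mod_cast (by omega : 0 < N)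
  refine ⟨M / a * (2 * N) ^ α, by positivity, fun x hx z hz n j => ?_⟩
  obtain ⟨k, hk, hkz⟩ := exists_often_visited_neighbour hN A hnonneg hoffdiag x hx n
  rw [← hz] at hkz
  have hden : a * (((n : ℝ) + 1) / (2 * N)) ^ α ≤
      ∑ k : Fin N, A (x n) k * (1 + (z n k : ℝ)) ^ α :=
    calc _ ≤ A (x n) k * (1 + (z n k : ℝ)) ^ α :=
          mul_le_mul (ha _ _ hk) (Real.rpow_le_rpow (by positivity) hkz (by linarith))
            (by positivity) hk.le
      _ ≤ _ := Finset.single_le_sum (f := fun k => A (x n) k * (1 + (z n k : ℝ)) ^ α)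
          (fun i _ => mul_nonneg (hnonneg _ _) (by positivity)) (Finset.mem_univ k)
  calc _ ≤ M * (1 + (z n j : ℝ)) ^ α / (a * (((n : ℝ) + 1) / (2 * N)) ^ α) := by
        have := hM (x n) j
        gcongr
    _ = _ := by
        rw [Real.div_rpow (by positivity) (by positivity),
          Real.div_rpow (by positivity) (by positivity)]
        field_simp

/-! ### Growth exponents of the number of visits -/

/-- A Kronecker-type lemma: convergence of the series of visits weighted by
`(k + 1) ^ (-s)` makes the number of visits `O(n ^ s)`. -/
lemma exists_visits_le_of_summable {β : Type*} [DecidableEq β] (x : ℕ → β) (j : β) {s : ℝ}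
    (hs : 0 ≤ s)
    (h : Summable fun k : ℕ => ((k : ℝ) + 1) ^ (-s) * if x (k + 1) = j then (1 : ℝ) else 0) :
    ∃ C : ℝ, ∀ n : ℕ, (((Finset.range (n + 1)).filter fun ℓ => x ℓ = j).card : ℝ) ≤
      C * ((n : ℝ) + 1) ^ s := by
  set T := ∑' k : ℕ, ((k : ℝ) + 1) ^ (-s) * if x (k + 1) = j then (1 : ℝ) else 0
  refine ⟨1 + T, fun n => ?_⟩
  have h1 : (1 : ℝ) ≤ ((n : ℝ) + 1) ^ s := Real.one_le_rpow (by simp) hs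
  have hT : ∑ k ∈ Finset.range n, ((k : ℝ) + 1) ^ (-s) * (if x (k + 1) = j then (1 : ℝ) else 0) ≤ T :=
    h.sum_le_tsum _ fun k _ => by positivity
  have h2 : ∑ k ∈ Finset.range n, (if x (k + 1) = j then (1 : ℝ) else 0) ≤
      ((n : ℝ) + 1) ^ s * T := by
    refine le_trans ?_ (mul_le_mul_of_nonneg_left hT (by positivity))
    rw [Finset.mul_sum]
    refine Finset.sum_le_sum fun k hk => ?_
    rw [← mul_assoc]
    refine le_mul_of_one_le_left (by positivity) ?_
    rw [Real.rpow_neg (by positivity), ← div_eq_mul_inv, one_le_div (by positivity)]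
    have : (k : ℝ) ≤ n := by exact_mod_cast (Finset.mem_range.1 hk).le
    gcongr
  rw [Finset.card_filter, Finset.sum_range_succ']
  push_cast
  have h3 : (if x 0 = j then (1 : ℝ) else 0) ≤ 1 := by split_ifs <;> simp
  have h4 : (((n : ℝ) + 1) ^ s) * (1 + T) = ((n : ℝ) + 1) ^ s + ((n : ℝ) + 1) ^ s * T := by ring
  linarith [mul_comm (1 + T) (((n : ℝ) + 1) ^ s)]

/-- Convergence of the compensator of the weighted visit count: if `z n = O(n ^ s)`, its terms are
`O(n ^ (-s' - α (1 - s)))`, which is summable. -/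
lemma summable_weighted_rpow {α s s' K : ℝ} (hα : 1 < α) (hs : 0 ≤ s) (hK : 0 ≤ K)
    (hss' : 1 < s' + α * (1 - s)) (p : ℕ → ℝ) (z : ℕ → ℕ) (hp0 : ∀ n, 0 ≤ p n)
    (hp : ∀ n, p n ≤ K * ((1 + (z n : ℝ)) / (n + 1)) ^ α)
    (hz : ∃ C : ℝ, ∀ᶠ n : ℕ in atTop, (z n : ℝ) ≤ C * ((n : ℝ) + 1) ^ s) :
    Summable fun k : ℕ => ((k : ℝ) + 1) ^ (-s') * p k := by
  obtain ⟨C, hC⟩ := hz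
  have hsum : Summable fun k : ℕ => K * (1 + |C|) ^ α * ((k : ℝ) + 1) ^ (-(s' + α * (1 - s))) := by
    refine Summable.mul_left _ ?_
    have := (summable_nat_add_iff 1).2
      (Real.summable_nat_rpow (p := -(s' + α * (1 - s))) |>.2 (by linarith))
    simpa using this
  refine hsum.of_norm_bounded_eventually_nat ?_
  filter_upwards [hC] with n hn
  rw [Real.norm_of_nonneg (mul_nonneg (by positivity) (hp0 n))]
  have hn1 : (0 : ℝ) < (n : ℝ) + 1 := by positivity
  have h1 : (1 : ℝ) ≤ ((n : ℝ) + 1) ^ s := Real.one_le_rpow (by simp) hs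
  have h2 : (1 + (z n : ℝ)) / (n + 1) ≤ (1 + |C|) * ((n : ℝ) + 1) ^ (-(1 - s)) := by
    rw [neg_sub, Real.rpow_sub_one hn1.ne', ← mul_div_assoc]
    gcongr
    have := mul_le_mul_of_nonneg_right (le_abs_self C) (by positivity : 0 ≤ ((n : ℝ) + 1) ^ s)
    linarith
  calc ((n : ℝ) + 1) ^ (-s') * p n
      ≤ ((n : ℝ) + 1) ^ (-s') * (K * ((1 + |C|) * ((n : ℝ) + 1) ^ (-(1 - s))) ^ α) := by
        gcongr
        exact (hp n).trans (by gcongr)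
    _ = _ := by
        rw [Real.mul_rpow (by positivity) (by positivity), ← Real.rpow_mul hn1.le,
          show -(s' + α * (1 - s)) = -s' + -(1 - s) * α by ring, Real.rpow_add hn1]
        ring

lemma eventually_visits_le_of_tendsto {ν : ℝ} (hν0 : 0 < ν) (hν1 : ν < 1) (z : ℕ → ℕ)
    (h : Tendsto (fun n : ℕ => (z n : ℝ) / ((n : ℝ) + 1) * (n : ℝ) ^ ν) atTop (nhds 0)) :
    ∃ C : ℝ, ∀ᶠ n : ℕ in atTop, (z n : ℝ) ≤ C * ((n : ℝ) + 1) ^ (1 - ν) := by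
  refine ⟨2, ?_⟩
  filter_upwards [h.eventually (gt_mem_nhds one_pos), eventually_ge_atTop 1] with n hn hn1
  have hp : (0 : ℝ) < (n : ℝ) + 1 := by positivity
  have hnR : (1 : ℝ) ≤ n := by exact_mod_cast hn1
  have h1 : ((n : ℝ) + 1) ^ ν ≤ 2 * (n : ℝ) ^ ν :=
    calc ((n : ℝ) + 1) ^ ν ≤ (2 * n) ^ ν := by gcongr; linarith
      _ = 2 ^ ν * (n : ℝ) ^ ν := Real.mul_rpow (by norm_num) (by positivity)
      _ ≤ 2 * (n : ℝ) ^ ν := by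
        gcongr
        simpa using Real.rpow_le_rpow_of_exponent_le (one_le_two : (1 : ℝ) ≤ 2) hν1.le
  have h2 : (z n : ℝ) / ((n : ℝ) + 1) * ((n : ℝ) + 1) ^ ν ≤ 2 := by
    have := mul_le_mul_of_nonneg_left h1 (by positivity : 0 ≤ (z n : ℝ) / ((n : ℝ) + 1))
    linarith
  rw [Real.rpow_sub hp, Real.rpow_one, ← mul_div_assoc, le_div_iff₀ (by positivity)]
  rw [div_mul_eq_mul_div, div_le_iff₀ hp] at h2
  exact h2

lemma finite_visits_of_bounded {β : Type*} [DecidableEq β] (x : ℕ → β) (j : β)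
    (h : ∃ C : ℝ, ∀ᶠ n : ℕ in atTop,
      (((Finset.range (n + 1)).filter fun ℓ => x ℓ = j).card : ℝ) ≤ C) :
    {n | x n = j}.Finite := by
  obtain ⟨C, hC⟩ := h
  obtain ⟨m, hm⟩ := exists_nat_gt C
  by_contra hinf
  obtain ⟨t, ht, htc⟩ := Set.Infinite.exists_subset_card_eq hinf m
  obtain ⟨n, hn, hn'⟩ := (hC.and (eventually_ge_atTop (t.sup id))).exists
  have hsub : t ⊆ (Finset.range (n + 1)).filter fun ℓ => x ℓ = j := fun a ha => by
    have h1 : a ≤ t.sup id := Finset.le_sup (f := id) ha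
    have h2 : x a = j := ht ha
    simp only [Finset.mem_filter, Finset.mem_range]
    exact ⟨by omega, h2⟩
  have := Finset.card_le_card hsub
  rw [htc] at this
  have : (m : ℝ) ≤ _ := Nat.cast_le.2 this
  linarith

/-! ### The walk -/

/-- The natural filtration of `X`, with `F n` generated by `X 0, …, X n` through the same supremum of
pulled-back σ-algebras as in the hypothesis on conditional probabilities. -/
def pathFiltration {Ω : Type*} {m0 : MeasurableSpace Ω} {N : ℕ} (X : ℕ → Ω → Fin N)
    (hX : ∀ n, Measurable (X n)) : Filtration ℕ m0 where
  seq n := ⨆ k ∈ Finset.range (n + 1), MeasurableSpace.comap (X k) ⊤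
  mono' n m hnm := biSup_mono fun k hk => by
    simp only [Finset.mem_range] at hk ⊢; omega
  le' n := iSup₂_le fun k _ => (hX k).comap_le

lemma measurable_pathFiltration {Ω : Type*} {m0 : MeasurableSpace Ω} {N : ℕ} (X : ℕ → Ω → Fin N)
    (hX : ∀ n, Measurable (X n)) (n : ℕ) : Measurable[pathFiltration X hX n] (X n) :=
  Measurable.of_comap_le
    (le_iSup₂_of_le (f := fun k (_ : k ∈ Finset.range (n + 1)) => MeasurableSpace.comap (X k) ⊤)
      n (by simp) le_rfl)

/-- A state `x` with `A x x = 0` is almost surely never occupied at two consecutive times. -/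
lemma ae_no_hold {N : ℕ} {α : ℝ} (A : Matrix (Fin N) (Fin N) ℝ)
    {Ω : Type*} [MeasurableSpace Ω] (μ : Measure Ω) [IsProbabilityMeasure μ]
    (X : ℕ → Ω → Fin N) (hX : ∀ n, Measurable (X n)) (Z : ℕ → Fin N → Ω → ℕ)
    (hcond : ∀ (n : ℕ) (j : Fin N),
      μ[(fun ω => if X (n + 1) ω = j then (1 : ℝ) else 0) | pathFiltration X hX n] =ᵐ[μ]
        fun ω => A (X n ω) j * (1 + (Z n j ω : ℝ)) ^ α /
          ∑ k : Fin N, A (X n ω) k * (1 + (Z n k ω : ℝ)) ^ α) :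
    ∀ᵐ ω ∂μ, ∀ n, A (X n ω) (X n ω) = 0 → X (n + 1) ω ≠ X n ω := by
  have key : ∀ n j, A j j = 0 → ∀ᵐ ω ∂μ, X n ω = j → X (n + 1) ω ≠ j := by
    intro n j hj
    have hs : MeasurableSet[pathFiltration X hX n] {ω | X n ω = j} :=
      measurable_pathFiltration X hX n (measurableSet_singleton j)
    have hs' : MeasurableSet {ω | X n ω = j} := (pathFiltration X hX).le n _ hs
    have hint : Integrable (fun ω => if X (n + 1) ω = j then (1 : ℝ) else 0) μ := by
      refine Integrable.of_bound (Measurable.aestronglyMeasurable ?_) 1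
        (Eventually.of_forall fun ω => by split_ifs <;> simp)
      exact Measurable.ite (hX (n + 1) (measurableSet_singleton j)) measurable_const
        measurable_const
    have h1 := setIntegral_condExp ((pathFiltration X hX).le n) hint hs
    have h2 : ∫ ω in {ω | X n ω = j},
        (μ[(fun ω => if X (n + 1) ω = j then (1 : ℝ) else 0) | pathFiltration X hX n]) ω ∂μ = 0 := by
      rw [setIntegral_congr_ae (g := fun _ => (0 : ℝ)) hs']
      · simp
      · filter_upwards [hcond n j] with ω hω hωj
        have hωj' : X n ω = j := hωj
        rw [hω, hωj', hj]
        simp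
    rw [h2] at h1
    have h3 := (setIntegral_eq_zero_iff_of_nonneg_ae
      (Eventually.of_forall fun ω => by simp only [Pi.zero_apply]; split_ifs <;> simp)
      hint.integrableOn).1 h1.symm
    filter_upwards [(ae_restrict_iff' hs').1 h3] with ω hω hωj hωj'
    have := hω hωj
    simp [hωj'] at this
  have key' : ∀ᵐ ω ∂μ, ∀ n j, A j j = 0 → X n ω = j → X (n + 1) ω ≠ j := by
    refine ae_all_iff.2 fun n => ae_all_iff.2 fun j => ?_
    by_cases hj : A j j = 0
    · filter_upwards [key n j hj] with ω hω _ using hω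
    · exact Eventually.of_forall fun ω h => absurd h hj
  filter_upwards [key'] with ω hω n h0
  exact hω n _ h0 rfl

/-- The bootstrap step: a bound `Z n i = O(n ^ s)` improves to `Z n i = O(n ^ s')` as soon as
`s' + α (1 - s) > 1`. -/
lemma ae_visits_improve {N : ℕ} (hN : 2 ≤ N) {α : ℝ} (hα : 1 < α)
    (A : Matrix (Fin N) (Fin N) ℝ)
    (hnonneg : ∀ i j, 0 ≤ A i j) (hoffdiag : ∀ i j, i ≠ j → 0 < A i j)
    {Ω : Type*} [MeasurableSpace Ω] (μ : Measure Ω) [IsProbabilityMeasure μ]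
    (X : ℕ → Ω → Fin N) (hX : ∀ n, Measurable (X n)) (Z : ℕ → Fin N → Ω → ℕ)
    (hZ : ∀ n j ω, Z n j ω = ((Finset.range (n + 1)).filter fun ℓ => X ℓ ω = j).card)
    (hcond : ∀ (n : ℕ) (j : Fin N),
      μ[(fun ω => if X (n + 1) ω = j then (1 : ℝ) else 0) | pathFiltration X hX n] =ᵐ[μ]
        fun ω => A (X n ω) j * (1 + (Z n j ω : ℝ)) ^ α /
          ∑ k : Fin N, A (X n ω) k * (1 + (Z n k ω : ℝ)) ^ α)
    (i : Fin N) {s s' : ℝ} (hs : 0 ≤ s) (hs' : 0 ≤ s') (hss' : 1 < s' + α * (1 - s)) :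
    ∀ᵐ ω ∂μ, (∃ C : ℝ, ∀ᶠ n : ℕ in atTop, (Z n i ω : ℝ) ≤ C * ((n : ℝ) + 1) ^ s) →
      ∃ C : ℝ, ∀ᶠ n : ℕ in atTop, (Z n i ω : ℝ) ≤ C * ((n : ℝ) + 1) ^ s' := by
  obtain ⟨K, hK, hbound⟩ := exists_transition_le hN hα A hnonneg hoffdiag
  have hBC := ae_summable_of_summable_condExp (μ := μ) (pathFiltration X hX)
    (fun k ω => if X (k + 1) ω = i then (1 : ℝ) else 0) (fun k => ((k : ℝ) + 1) ^ (-s'))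
    (fun k => (Measurable.ite (measurable_pathFiltration X hX (k + 1)
      (measurableSet_singleton i)) measurable_const measurable_const).stronglyMeasurable)
    (fun k ω => by split_ifs <;> simp) (fun k ω => by split_ifs <;> simp)
    (fun k => by positivity)
    (fun k => Real.rpow_le_one_of_one_le_of_nonpos (by simp) (by linarith))
  filter_upwards [hBC, ae_all_iff.2 fun n => hcond n i, ae_no_hold A μ X hX Z hcond]
    with ω hω hcω hno hz
  simp only [hcω] at hω
  have hsum := summable_weighted_rpow hα hs hK hss'
    (fun n => A (X n ω) i * (1 + (Z n i ω : ℝ)) ^ α /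
          ∑ k : Fin N, A (X n ω) k * (1 + (Z n k ω : ℝ)) ^ α) (fun n => Z n i ω)
    (fun n => div_nonneg (mul_nonneg (hnonneg _ _) (by positivity))
      (Finset.sum_nonneg fun k _ => mul_nonneg (hnonneg _ _) (by positivity)))
    (fun n => hbound (fun n => X n ω) hno (fun n j => Z n j ω) (fun n j => hZ n j ω) n i) hz
  obtain ⟨C, hC⟩ := exists_visits_le_of_summable (fun n => X n ω) i hs' (hω hsum)
  exact ⟨C, Eventually.of_forall fun n => by rw [hZ]; exact hC n⟩

/-- For `I ⊆ E` and `ν ∈ (0,1)`, almost surely on the event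
`E_ν(I) = {lim_n v_n(i) n^ν = 0 for all i ∈ I}`, the set `I` is visited only finitely
many times. -/
theorem finitely_many_visits_on_fast_decay_event
    {N : ℕ} (hN : 2 ≤ N) {α : ℝ} (hα : 1 < α)
    (A : Matrix (Fin N) (Fin N) ℝ)
    (hsymm : ∀ i j, A i j = A j i)
    (hnonneg : ∀ i j, 0 ≤ A i j)
    (hoffdiag : ∀ i j, i ≠ j → 0 < A i j)
    (hrow : ∀ i i', ∑ j, A i j = ∑ j, A i' j)
    {Ω : Type*} [MeasurableSpace Ω] (μ : Measure Ω) [IsProbabilityMeasure μ]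
    (X : ℕ → Ω → Fin N) (hX : ∀ n, Measurable (X n))
    (Z : ℕ → Fin N → Ω → ℕ)
    (hZ : ∀ n j ω, Z n j ω = ((Finset.range (n + 1)).filter fun ℓ => X ℓ ω = j).card)
    (hcond : ∀ (n : ℕ) (j : Fin N),
      μ[(fun ω => if X (n + 1) ω = j then (1 : ℝ) else 0) |
          ⨆ k ∈ Finset.range (n + 1), MeasurableSpace.comap (X k) ⊤] =ᵐ[μ]
        fun ω => A (X n ω) j * (1 + (Z n j ω : ℝ)) ^ α /
          ∑ k : Fin N, A (X n ω) k * (1 + (Z n k ω : ℝ)) ^ α)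
    (I : Set (Fin N)) (ν : ℝ) (hν0 : 0 < ν) (hν1 : ν < 1) :
    ∀ᵐ ω ∂μ,
      (∀ i ∈ I, Tendsto
        (fun n : ℕ => (Z n i ω : ℝ) / ((n : ℝ) + 1) * (n : ℝ) ^ ν) atTop (nhds 0)) →
        {n : ℕ | X n ω ∈ I}.Finite := by
  have main : ∀ i : Fin N, ∀ᵐ ω ∂μ, Tendsto
      (fun n : ℕ => (Z n i ω : ℝ) / ((n : ℝ) + 1) * (n : ℝ) ^ ν) atTop (nhds 0) →
      {n : ℕ | X n ω = i}.Finite := by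
    intro i
    -- Any ratio strictly between `1` and `α` makes the hypothesis of the bootstrap step strict.
    set β : ℝ := (1 + α) / 2 with hβ
    have hβ1 : 1 < β := by rw [hβ]; linarith
    have hβα : β < α := by rw [hβ]; linarith
    have iter : ∀ m : ℕ, ∀ᵐ ω ∂μ, Tendsto
        (fun n : ℕ => (Z n i ω : ℝ) / ((n : ℝ) + 1) * (n : ℝ) ^ ν) atTop (nhds 0) →
        ∃ C : ℝ, ∀ᶠ n : ℕ in atTop,
          (Z n i ω : ℝ) ≤ C * ((n : ℝ) + 1) ^ (max 0 (1 - ν * β ^ m)) := by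
      intro m
      induction m with
      | zero =>
        refine Eventually.of_forall fun ω hω => ?_
        rw [pow_zero, mul_one, max_eq_right (by linarith)]
        exact eventually_visits_le_of_tendsto hν0 hν1 (fun n => Z n i ω) hω
      | succ m ih =>
        have hpos : 0 < ν * β ^ m := by positivity
        have hss : 1 < max 0 (1 - ν * β ^ (m + 1)) + α * (1 - max 0 (1 - ν * β ^ m)) := by
          rcases le_total (1 - ν * β ^ m) 0 with h | h
          · rw [max_eq_left h]
            have := le_max_left 0 (1 - ν * β ^ (m + 1))
            linarith
          · rw [max_eq_right h]
            have h1 := le_max_right 0 (1 - ν * β ^ (m + 1))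
            have h2 : ν * β ^ (m + 1) = β * (ν * β ^ m) := by ring
            have h3 := mul_lt_mul_of_pos_right hβα hpos
            linarith
        filter_upwards [ih, ae_visits_improve hN hα A hnonneg hoffdiag μ X hX Z hZ hcond i
          (le_max_left _ _) (le_max_left _ _) hss] with ω h1 h2 h3
        exact h2 (h1 h3)
    obtain ⟨m, hm⟩ := pow_unbounded_of_one_lt (1 / ν) hβ1
    rw [div_lt_iff₀ hν0] at hm
    filter_upwards [iter m] with ω hω h
    obtain ⟨C, hC⟩ := hω h
    refine finite_visits_of_bounded (fun n => X n ω) i ⟨C, ?_⟩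
    filter_upwards [hC] with n hn
    rw [max_eq_left (by linarith), Real.rpow_zero, mul_one, hZ] at hn
    exact hn
  filter_upwards [ae_all_iff.2 main] with ω hω hI
  have hunion : {n : ℕ | X n ω ∈ I} = ⋃ i ∈ I, {n : ℕ | X n ω = i} := by
    ext n; simp
  rw [hunion]
  exact I.toFinite.biUnion fun i hi => hω i (hI i hi)
end

section
/- Assume N ≥ 3 and A_{i,j} = 1 − δ_{i,j} (the complete graph). Let v = (1/N,…,1/N) be the center of Δ. Then for all i ≠ j, the directional derivative of F at v in the direction e_i − e_j equals (−1 + α(N−2)/(N−1)) (e_i − e_j). Consequently v is a linearly stable equilibrium if α < (N−1)/(N−2) and a linearly unstable equilibrium if α > (N−1)/(N−2). -/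
/-!
Along a line `t ↦ c + t d` through the center `c = (1/N, …, 1/N)`, every `v_k ^ α` has the same
value and the same logarithmic derivative `α N` per unit of `d_k`. The quotient rule therefore
gives, with `S = ∑ d_k` and `κ = α (N - 2) / (N - 1)`,
`D_d F_i(c) = κ (d_i - S / N) - d_i` (`hasDerivAt_Ffield_center`).
On `S = 0`, the tangent space of the simplex, the differential is thus the scalar `κ - 1`, whose
sign is that of `α - (N - 1) / (N - 2)`. The Jacobian matrix, obtained from `d = e_j`, acts by this
scalar on complex vectors of zero sum (`DFmat_center_mulVec`), which settles both stability claims.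
-/

open Filter Set Matrix

theorem sum_adj_mul {N : ℕ} (A : Matrix (Fin N) (Fin N) ℝ)
    (hA : ∀ i j, A i j = if i = j then 0 else 1) (w : Fin N → ℝ) (i : Fin N) :
    ∑ j, A i j * w j = ∑ j, w j - w i := by
  have h : ∀ j, A i j * w j = w j - if i = j then w j else 0 := by
    intro j
    rw [hA]
    split_ifs <;> simp
  simp [h, Finset.sum_sub_distrib]

theorem Ffield_complete {N : ℕ} (α : ℝ) (A : Matrix (Fin N) (Fin N) ℝ)
    (hA : ∀ i j, A i j = if i = j then 0 else 1) (v : Fin N → ℝ) (i : Fin N) :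
    Ffield A α v i = v i ^ α * (∑ j, v j ^ α - v i ^ α) /
      (∑ k, v k ^ α * (∑ j, v j ^ α - v k ^ α)) - v i := by
  have hH : Hfun A α v = ∑ k, v k ^ α * (∑ j, v j ^ α - v k ^ α) := by
    unfold Hfun
    refine Finset.sum_congr rfl fun k _ => ?_
    rw [← sum_adj_mul A hA (fun j => v j ^ α) k, Finset.mul_sum]
    exact Finset.sum_congr rfl fun j _ => by ring
  unfold Ffield piFun
  rw [hH, sum_adj_mul A hA (fun j => v j ^ α) i]

/-- The derivative of `F_i` at the center in an arbitrary direction `d`, not necessarily tangent to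
the simplex. -/
theorem hasDerivAt_Ffield_center {N : ℕ} (hN : 3 ≤ N) (α : ℝ)
    (A : Matrix (Fin N) (Fin N) ℝ) (hA : ∀ i j, A i j = if i = j then 0 else 1)
    (d : Fin N → ℝ) (i : Fin N) :
    HasDerivAt (fun t : ℝ => Ffield A α ((fun _ => (N : ℝ)⁻¹) + t • d) i)
      (α * (((N : ℝ) - 2) / ((N : ℝ) - 1)) * (d i - (∑ j, d j) / N) - d i) 0 := by
  have hN3 : (3 : ℝ) ≤ N := by exact_mod_cast hN
  have hN0 : (0 : ℝ) < N := by linarith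
  have hN1 : (N : ℝ) - 1 ≠ 0 := by linarith
  have hc : (0 : ℝ) < (N : ℝ)⁻¹ := inv_pos.mpr hN0
  obtain ⟨b, hb⟩ : ∃ b, b = ((N : ℝ)⁻¹) ^ α := ⟨_, rfl⟩
  have hb0 : b ≠ 0 := by
    rw [hb]
    exact (Real.rpow_pos_of_pos hc α).ne'
  have hlin : ∀ k, HasDerivAt (fun t : ℝ => (N : ℝ)⁻¹ + t * d k) (d k) 0 := fun k => by
    simpa using ((hasDerivAt_id (0 : ℝ)).mul_const (d k)).const_add ((N : ℝ)⁻¹)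
  have hw : ∀ k, HasDerivAt (fun t : ℝ => ((N : ℝ)⁻¹ + t * d k) ^ α) (α * N * b * d k) 0 := by
    intro k
    have h := (hlin k).rpow_const (p := α) (Or.inl (by simpa using hN0.ne'))
    convert h using 1
    rw [zero_mul, add_zero, Real.rpow_sub_one hc.ne', ← hb]
    field_simp
  have hS : HasDerivAt (fun t : ℝ => ∑ k, ((N : ℝ)⁻¹ + t * d k) ^ α)
      (∑ k, α * N * b * d k) 0 := HasDerivAt.fun_sum fun k _ => hw k
  have hnum := fun k => (hw k).mul (hS.sub (hw k))
  have hden := HasDerivAt.fun_sum (u := Finset.univ) fun k _ => hnum k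
  have hD0 : (N : ℝ) * (b * (N * b - b)) ≠ 0 := by
    have : (N : ℝ) * b - b = (N - 1) * b := by ring
    rw [this]
    positivity
  have hq := ((hnum i).div hden (by simpa [← hb] using hD0)).sub (hlin i)
  simp only [Ffield_complete α A hA, Pi.add_apply, Pi.smul_apply, smul_eq_mul]
  refine HasDerivAt.congr_deriv hq ?_
  simp only [Pi.sub_apply, Pi.mul_apply, zero_mul, add_zero, ← hb, Finset.sum_const,
    Finset.card_univ, Fintype.card_fin, nsmul_eq_mul, Finset.sum_add_distrib,
    ← Finset.mul_sum, ← Finset.sum_mul, Finset.sum_sub_distrib]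
  generalize ∑ k, d k = S
  have h1 : (N : ℝ) * b - b = (N - 1) * b := by ring
  rw [h1]
  field_simp
  ring

theorem DFmat_center {N : ℕ} (hN : 3 ≤ N) (α : ℝ)
    (A : Matrix (Fin N) (Fin N) ℝ) (hA : ∀ i j, A i j = if i = j then 0 else 1) (i j : Fin N) :
    DFmat A α (fun _ => (N : ℝ)⁻¹) i j =
      (-1 + α * (((N : ℝ) - 2) / ((N : ℝ) - 1))) * (if i = j then 1 else 0)
        - α * (((N : ℝ) - 2) / ((N : ℝ) - 1)) / N := by
  have h := (hasDerivAt_Ffield_center hN α A hA (Pi.single j 1) i).deriv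
  unfold DFmat lineDeriv
  rw [h, Finset.sum_pi_single', if_pos (Finset.mem_univ j), Pi.single_apply]
  ring

/-- On complex vectors of zero sum the Jacobian at the center acts as a scalar. -/
theorem DFmat_center_mulVec {N : ℕ} (hN : 3 ≤ N) (α : ℝ)
    (A : Matrix (Fin N) (Fin N) ℝ) (hA : ∀ i j, A i j = if i = j then 0 else 1)
    (x : Fin N → ℂ) (hx : ∑ i, x i = 0) :
    ((DFmat A α (fun _ => (N : ℝ)⁻¹)).map (fun r => (r : ℂ))) *ᵥ x =
      ((-1 + α * (((N : ℝ) - 2) / ((N : ℝ) - 1)) : ℝ) : ℂ) • x := by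
  funext i
  simp only [Matrix.mulVec, dotProduct, Matrix.map_apply, DFmat_center hN α A hA,
    Complex.ofReal_sub, sub_mul, Finset.sum_sub_distrib, ← Finset.mul_sum, hx, mul_zero, sub_zero,
    Pi.smul_apply, smul_eq_mul]
  rw [Finset.sum_eq_single i]
  · simp
  · intro j _ hj
    simp [hj.symm]
  · simp

/-- For the complete graph (`A_{ij} = 1 - δ_{ij}`, `N ≥ 3`), at the
center `v = (1/N, …, 1/N)` of `Δ` one has, for `i ≠ j`,
`D_{e_i - e_j}F(v) = (-1 + α (N-2)/(N-1)) (e_i - e_j)`; consequently `v` is a linearly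
stable equilibrium when `α < (N-1)/(N-2)` and a linearly unstable one when
`α > (N-1)/(N-2)`. -/
theorem center_stability_complete_graph
    {N : ℕ} (hN : 3 ≤ N) {α : ℝ} (hα : 1 < α)
    (A : Matrix (Fin N) (Fin N) ℝ)
    (hA : ∀ i j, A i j = if i = j then 0 else 1) :
    (∀ i j : Fin N, i ≠ j →
      lineDeriv ℝ (Ffield A α) (fun _ => (N : ℝ)⁻¹) (Pi.single i 1 - Pi.single j 1) =
        (-1 + α * (((N : ℝ) - 2) / ((N : ℝ) - 1))) • (Pi.single i 1 - Pi.single j 1)) ∧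
    Ffield A α (fun _ => (N : ℝ)⁻¹) = 0 ∧
    (α < ((N : ℝ) - 1) / ((N : ℝ) - 2) → IsLinStable A α (fun _ => (N : ℝ)⁻¹)) ∧
    (((N : ℝ) - 1) / ((N : ℝ) - 2) < α → IsLinUnstable A α (fun _ => (N : ℝ)⁻¹)) := by
  have hN3 : (3 : ℝ) ≤ N := by exact_mod_cast hN
  have hN1 : (0 : ℝ) < (N : ℝ) - 1 := by linarith
  have hN2 : (0 : ℝ) < (N : ℝ) - 2 := by linarith
  refine ⟨fun i j hij => ?_, ?_, fun hlt => ?_, fun hgt => ?_⟩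
  · refine HasDerivAt.deriv (hasDerivAt_pi.mpr fun k => ?_)
    refine (hasDerivAt_Ffield_center hN α A hA (Pi.single i 1 - Pi.single j 1) k).congr_deriv ?_
    have hsum : ∑ k, (Pi.single i 1 - Pi.single j 1 : Fin N → ℝ) k = 0 := by
      simp [Finset.sum_sub_distrib]
    rw [hsum, Pi.smul_apply, smul_eq_mul]
    ring
  · funext i
    have hb0 : ((N : ℝ)⁻¹) ^ α ≠ 0 := (Real.rpow_pos_of_pos (by positivity) α).ne'
    rw [Ffield_complete α A hA]
    simp only [Finset.sum_const, Finset.card_univ, Fintype.card_fin, nsmul_eq_mul, Pi.zero_apply]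
    generalize ((N : ℝ)⁻¹) ^ α = b at hb0 ⊢
    have h1 : (N : ℝ) * b - b = (N - 1) * b := by ring
    rw [h1]
    field_simp
    simp
  · intro lam x hx0 hx hev
    rw [DFmat_center_mulVec hN α A hA x hx] at hev
    rw [← smul_left_injective ℂ hx0 hev, Complex.ofReal_re]
    rw [lt_div_iff₀ hN2] at hlt
    have : α * (((N : ℝ) - 2) / ((N : ℝ) - 1)) < 1 := by
      rwa [← mul_div_assoc, div_lt_one hN1]
    linarith
  · let i₀ : Fin N := ⟨0, by omega⟩
    let i₁ : Fin N := ⟨1, by omega⟩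
    have hne : i₀ ≠ i₁ := by simp [i₀, i₁]
    have hx : ∑ k, (Pi.single i₀ 1 - Pi.single i₁ 1 : Fin N → ℂ) k = 0 := by
      simp [Finset.sum_sub_distrib]
    refine ⟨_, Pi.single i₀ 1 - Pi.single i₁ 1, fun h => ?_, hx,
      DFmat_center_mulVec hN α A hA _ hx, ?_⟩
    · simpa [hne] using congrFun h i₀
    · rw [Complex.ofReal_re]
      rw [div_lt_iff₀ hN2] at hgt
      have : 1 < α * (((N : ℝ) - 2) / ((N : ℝ) - 1)) := by
        rwa [← mul_div_assoc, one_lt_div hN1]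
      linarith
end
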